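/- Theorem 3.2 (upper blow-up rate): Let (u,v) be a classical solution of problem (1.1) that blows up at time T < ∞. Then there exists a constant C > 0 such that for all t ∈ (0,T): u(R,t) ≤ log C − log(T−t) and v(R,t) ≤ log C − log(T−t); equivalently e^{u(R,t)} ≤ C/(T−t) and e^{v(R,t)} ≤ C/(T−t). -/

import Mathlib

/-!
The boundary values of `u` and `v` are controlled at *peak* times (`Peak`): times `t0` at which the
running maximum of `e^u` and `e^v` over the closed ball, called `K`, is attained. Since solutions
are radial and radially nondecreasing (`radial`, `radial_mono`), this maximum sits on the sphere.
The theorem follows from `K (T - t0) ≤ 1` at every peak with `K` large (`Peak.rate`): given `t`,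
apply this to the last record `t0 ≤ t` of the boundary values. In fact the argument gives the
stronger bound `T - t0 ≤ (log (8 log K) + 1)/K²`. The reason is
that a high peak forces the solution to cease to exist soon after.

*Closeness of the components.* At a boundary point where `u > v`, the flux of `u - v` is
`e^v - e^u < 0`, which damps the difference. Values of `e^u`, `e^v` grow no faster than at the
self-similar rate (`growth_ctrl`), so before a peak they are at least of order
`(t0 - t + K⁻²)^{-1/2}` (`Peak.lower`), and comparison with a self-similar barrier (`w_barrier`)
gives `|u - v| ≤ D K^{-γ}` at a peak (`Peak.abs_diff_le`).

*Life time.* Along a radius, the mean `a = (u + v)/2` is, as a function of the boundary distance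
`y`, a one-dimensional profile with `a_t ≥ a_yy` and flux `-a_y ≥ e^a` at `y = 0` (`prof_mean`).
Its exponential average `E(t) = ∫ K (e^{-Ky} - e^{-Kδ}) a(y,t) dy` over `[0,δ]` satisfies
`E' ≥ K² (e^{a(0,t) - log K} - a(0,t) + E)` up to exponentially small terms, and `E ≤ a(0,t)`. Hence
`X = E - log K + 1` grows exponentially while it is in `(0,1]`, and faster than `e^X` beyond, so
that it blows up within time `(log (1/X(t0)) + 1)/K²` (`ode_growth`, `Prof.life_bound`).

*Gain.* It remains to see that `X(t0) ≥ 1/(8 log K)` at a peak. There `a(0,t0)` is almost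
`L = log K`, and before it all values are at most `L`. By a chord estimate for the exponential
(`exp_le_chord`) the flux is at most `K (1 - ηL) + ηK a` with `η = 1/(2L)`. The function
`a - (1 + η) B`, where `B(y,t) = e^{Ky} ∫_y^δ K (e^{-Kz} - e^{-Kδ}) a dz`, then satisfies a Robin
condition at `y = 0` that forces it down to `1 - ηL` on the time scale `K⁻²`; a caloric barrier
(`heatBar`) makes this quantitative (`Prof.gain`). With the time span `θ = K^{-3/2}` all errors are
`o(1/L)` (`errors_small`), so that `(1 + η) E ≥ L - 1/2 - o(1/L)`, and
`(L - 1/2)/(1 + 1/(2L)) = L - 1 + 1/(2L + 1)` leaves the required gain.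
-/

open Set Real Metric MeasureTheory Filter Topology

/-- The Euclidean Laplacian of `f : ℝⁿ → ℝ` at `x`, computed as the sum of second
directional derivatives along the coordinate directions. -/
noncomputable def lap {n : ℕ} (f : EuclideanSpace ℝ (Fin n) → ℝ)
    (x : EuclideanSpace ℝ (Fin n)) : ℝ :=
  ∑ i : Fin n, iteratedDeriv 2 (fun s : ℝ => f (x + s • EuclideanSpace.single i (1 : ℝ))) 0

/-- The outward normal derivative `∇f · (x/R)` on the sphere of radius `R`. -/
noncomputable def normalDeriv {n : ℕ} (R : ℝ) (f : EuclideanSpace ℝ (Fin n) → ℝ)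
    (x : EuclideanSpace ℝ (Fin n)) : ℝ :=
  deriv (fun s : ℝ => f (x + s • (R⁻¹ • x))) 0

/-- Admissible initial data for problem (1.1): nonnegative, smooth, radial with
nondecreasing radial profiles, and satisfying the compatibility conditions. -/
structure AdmissibleData (n : ℕ) (R : ℝ)
    (u₀ v₀ : EuclideanSpace ℝ (Fin n) → ℝ) : Prop where
  u0_nonneg : ∀ x ∈ closedBall (0 : EuclideanSpace ℝ (Fin n)) R, 0 ≤ u₀ x
  v0_nonneg : ∀ x ∈ closedBall (0 : EuclideanSpace ℝ (Fin n)) R, 0 ≤ v₀ x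
  u0_smooth : ContDiffOn ℝ (⊤ : ℕ∞) u₀ (closedBall (0 : EuclideanSpace ℝ (Fin n)) R)
  v0_smooth : ContDiffOn ℝ (⊤ : ℕ∞) v₀ (closedBall (0 : EuclideanSpace ℝ (Fin n)) R)
  u0_radial_mono : ∀ x ∈ closedBall (0 : EuclideanSpace ℝ (Fin n)) R,
    ∀ y ∈ closedBall (0 : EuclideanSpace ℝ (Fin n)) R, ‖x‖ ≤ ‖y‖ → u₀ x ≤ u₀ y
  v0_radial_mono : ∀ x ∈ closedBall (0 : EuclideanSpace ℝ (Fin n)) R,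
    ∀ y ∈ closedBall (0 : EuclideanSpace ℝ (Fin n)) R, ‖x‖ ≤ ‖y‖ → v₀ x ≤ v₀ y
  compat_u : ∀ x : EuclideanSpace ℝ (Fin n), ‖x‖ = R → normalDeriv R u₀ x = Real.exp (v₀ x)
  compat_v : ∀ x : EuclideanSpace ℝ (Fin n), ‖x‖ = R → normalDeriv R v₀ x = Real.exp (u₀ x)
  compat_u' : ∀ x ∈ closedBall (0 : EuclideanSpace ℝ (Fin n)) R, 0 ≤ lap u₀ x + Real.exp (v₀ x)
  compat_v' : ∀ x ∈ closedBall (0 : EuclideanSpace ℝ (Fin n)) R, 0 ≤ lap v₀ x + Real.exp (u₀ x)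

/-- A classical solution of problem (1.1) on `[0,T)` on the ball of radius `R`:
continuous on `cl(B_R) × [0,T)`, of class C²,¹ on `cl(B_R) × (0,T)`, satisfying the
equations `u_t = Δu + λ₁ e^v`, `v_t = Δv + λ₂ e^u` in `B_R × (0,T)`, the boundary
conditions `∂u/∂η = e^v`, `∂v/∂η = e^u` on `∂B_R × (0,T)`, and the initial conditions. -/
structure IsClassicalSolution (n : ℕ) (R T lam1 lam2 : ℝ)
    (u v : EuclideanSpace ℝ (Fin n) → ℝ → ℝ)
    (u₀ v₀ : EuclideanSpace ℝ (Fin n) → ℝ) : Prop where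
  cont_u : ContinuousOn (fun p : EuclideanSpace ℝ (Fin n) × ℝ => u p.1 p.2)
    ((closedBall (0 : EuclideanSpace ℝ (Fin n)) R) ×ˢ Ico (0 : ℝ) T)
  cont_v : ContinuousOn (fun p : EuclideanSpace ℝ (Fin n) × ℝ => v p.1 p.2)
    ((closedBall (0 : EuclideanSpace ℝ (Fin n)) R) ×ˢ Ico (0 : ℝ) T)
  reg_space_u : ∀ t ∈ Ioo (0 : ℝ) T,
    ContDiffOn ℝ 2 (fun x => u x t) (closedBall (0 : EuclideanSpace ℝ (Fin n)) R)
  reg_space_v : ∀ t ∈ Ioo (0 : ℝ) T,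
    ContDiffOn ℝ 2 (fun x => v x t) (closedBall (0 : EuclideanSpace ℝ (Fin n)) R)
  reg_time_u : ∀ x ∈ closedBall (0 : EuclideanSpace ℝ (Fin n)) R, ∀ t ∈ Ioo (0 : ℝ) T,
    DifferentiableAt ℝ (u x) t
  reg_time_v : ∀ x ∈ closedBall (0 : EuclideanSpace ℝ (Fin n)) R, ∀ t ∈ Ioo (0 : ℝ) T,
    DifferentiableAt ℝ (v x) t
  pde_u : ∀ x ∈ ball (0 : EuclideanSpace ℝ (Fin n)) R, ∀ t ∈ Ioo (0 : ℝ) T,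
    deriv (u x) t = lap (fun y => u y t) x + lam1 * Real.exp (v x t)
  pde_v : ∀ x ∈ ball (0 : EuclideanSpace ℝ (Fin n)) R, ∀ t ∈ Ioo (0 : ℝ) T,
    deriv (v x) t = lap (fun y => v y t) x + lam2 * Real.exp (u x t)
  bc_u : ∀ x : EuclideanSpace ℝ (Fin n), ‖x‖ = R → ∀ t ∈ Ioo (0 : ℝ) T,
    normalDeriv R (fun y => u y t) x = Real.exp (v x t)
  bc_v : ∀ x : EuclideanSpace ℝ (Fin n), ‖x‖ = R → ∀ t ∈ Ioo (0 : ℝ) T,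
    normalDeriv R (fun y => v y t) x = Real.exp (u x t)
  init_u : ∀ x ∈ closedBall (0 : EuclideanSpace ℝ (Fin n)) R, u x 0 = u₀ x
  init_v : ∀ x ∈ closedBall (0 : EuclideanSpace ℝ (Fin n)) R, v x 0 = v₀ x

/-- `(u,v)` blows up at time `T`: `limsup_{t→T⁻} sup_{cl(B_R)} (u(·,t) + v(·,t)) = ∞`. -/
def BlowsUpAt (n : ℕ) (R T : ℝ) (u v : EuclideanSpace ℝ (Fin n) → ℝ → ℝ) : Prop :=
  ∀ M : ℝ, ∃ᶠ t in 𝓝[<] T, ∃ x ∈ closedBall (0 : EuclideanSpace ℝ (Fin n)) R, M < u x t + v x t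

/-! ### First touching and second-derivative tests -/

/-- First-touching principle: finitely many functions, negative at time `t1`, stay negative if none
of them can reach `0` for the first time. -/
lemma touch {X ι : Type*} [TopologicalSpace X] [Finite ι] {S : Set X} (hS : IsCompact S)
    {t1 t2 : ℝ} (f : ι → X → ℝ → ℝ)
    (hc : ∀ i, ContinuousOn (fun p : X × ℝ => f i p.1 p.2) (S ×ˢ Icc t1 t2))
    (h0 : ∀ i, ∀ x ∈ S, f i x t1 < 0)
    (hno : ∀ i, ∀ x ∈ S, ∀ t ∈ Ioc t1 t2, f i x t = 0 →
      (∀ j, ∀ y ∈ S, ∀ s ∈ Icc t1 t, f j y s ≤ 0) → False) :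
    ∀ i, ∀ x ∈ S, ∀ t ∈ Icc t1 t2, f i x t < 0 := by
  by_contra! hcon
  obtain ⟨i0, x0, hx0, s0, hs0, hf0⟩ := hcon
  set B : Set (X × ℝ) := ⋃ i, (S ×ˢ Icc t1 t2) ∩ {p | 0 ≤ f i p.1 p.2} with hB
  have hBi : ∀ i, IsCompact ((S ×ˢ Icc t1 t2) ∩ {p : X × ℝ | 0 ≤ f i p.1 p.2}) := by
    intro i
    have hK : IsCompact (S ×ˢ Icc t1 t2) := hS.prod isCompact_Icc
    obtain ⟨C, hC, hCe⟩ := (continuousOn_iff_isClosed.1 (hc i)) (Ici 0) isClosed_Ici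
    have : (S ×ˢ Icc t1 t2) ∩ {p : X × ℝ | 0 ≤ f i p.1 p.2} = (S ×ˢ Icc t1 t2) ∩ C := by
      have h2 : {p : X × ℝ | 0 ≤ f i p.1 p.2} = (fun p : X × ℝ => f i p.1 p.2) ⁻¹' Ici 0 := rfl
      rw [h2, inter_comm, hCe, inter_comm]
    rw [this]
    exact hK.inter_right hC
  have hBc : IsCompact B := isCompact_iUnion hBi
  have hBn : B.Nonempty := ⟨(x0, s0), mem_iUnion.2 ⟨i0, ⟨hx0, hs0⟩, hf0⟩⟩
  obtain ⟨⟨x, t⟩, hp, hmin⟩ := hBc.exists_isMinOn hBn continuous_snd.continuousOn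
  obtain ⟨i, ⟨hx, ht⟩, hfi⟩ := mem_iUnion.1 hp
  simp only [mem_ofPred_eq] at hfi hx ht
  have hlt : ∀ j, ∀ y ∈ S, ∀ s ∈ Ico t1 t, f j y s < 0 := by
    intro j y hy s hs
    by_contra! hneg
    have h1 : (y, s) ∈ B := mem_iUnion.2 ⟨j, ⟨hy, hs.1, hs.2.le.trans ht.2⟩, hneg⟩
    have h2 := hmin h1
    simp only [mem_ofPred_eq] at h2
    exact absurd hs.2 (not_lt.2 h2)
  have ht1 : t1 < t := by
    rcases ht.1.lt_or_eq with h | h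
    · exact h
    · subst h
      exact absurd (h0 i x hx) (not_lt.2 hfi)
  have hle : ∀ j, ∀ y ∈ S, ∀ s ∈ Icc t1 t, f j y s ≤ 0 := by
    intro j y hy s hs
    rcases hs.2.lt_or_eq with h | h
    · exact (hlt j y hy s ⟨hs.1, h⟩).le
    · subst h
      have hcy : ContinuousOn (fun s => f j y s) (Icc t1 t2) :=
        (hc j).comp (by fun_prop : ContinuousOn (fun s : ℝ => (y, s)) (Icc t1 t2))
          (fun r hr => ⟨hy, hr⟩)
      have hw : ContinuousWithinAt (fun s => f j y s) (Ico t1 s) s :=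
        (hcy s ht).mono (fun r hr => ⟨hr.1, hr.2.le.trans ht.2⟩)
      have hmem : s ∈ closure (Ico t1 s) := by
        rw [closure_Ico ht1.ne]; exact ⟨ht1.le, le_rfl⟩
      have : (𝓝[Ico t1 s] s).NeBot := mem_closure_iff_nhdsWithin_neBot.1 hmem
      exact le_of_tendsto hw (eventually_nhdsWithin_of_forall fun r hr => (hlt j y hy r hr).le)
  exact hno i x hx t ⟨ht1, ht.2⟩ (le_antisymm (hle i x hx t ⟨ht1.le, le_rfl⟩) hfi) hle

lemma snd_deriv_nonpos {g : ℝ → ℝ} (hg : ContDiffAt ℝ 2 g 0) (hmax : IsLocalMax g 0) :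
    iteratedDeriv 2 g 0 ≤ 0 := by
  by_contra! hpos
  have h2 : iteratedDeriv 2 g 0 = deriv (deriv g) 0 := by
    rw [iteratedDeriv_succ, iteratedDeriv_one]
  rw [h2] at hpos
  have hd0 : deriv g 0 = 0 := hmax.deriv_eq_zero
  have hmin := isLocalMin_of_deriv_deriv_pos hpos hd0 hg.continuousAt
  have hconst : g =ᶠ[𝓝 0] fun _ => g 0 := by
    filter_upwards [hmax, hmin] with s h1 h2 using le_antisymm h1 h2
  have h3 : deriv g =ᶠ[𝓝 0] deriv fun _ => g 0 := hconst.deriv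
  rw [h3.deriv_eq] at hpos
  simp at hpos

abbrev Eu (n : ℕ) := EuclideanSpace ℝ (Fin n)

lemma slice_contDiffAt {n : ℕ} {f : Eu n → ℝ} {x : Eu n} (hf : ContDiffAt ℝ 2 f x) (e : Eu n) :
    ContDiffAt ℝ 2 (fun s : ℝ => f (x + s • e)) 0 := by
  have h1 : ContDiffAt ℝ 2 (fun s : ℝ => x + s • e) 0 := by fun_prop
  have h2 : ContDiffAt ℝ 2 f (x + (0:ℝ) • e) := by simpa using hf
  exact h2.comp (0:ℝ) h1

lemma lap_sub {n : ℕ} {f g : Eu n → ℝ} {x : Eu n} (hf : ContDiffAt ℝ 2 f x)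
    (hg : ContDiffAt ℝ 2 g x) : lap (fun y => f y - g y) x = lap f x - lap g x := by
  unfold lap
  rw [← Finset.sum_sub_distrib]
  exact Finset.sum_congr rfl fun i _ =>
    iteratedDeriv_fun_sub (slice_contDiffAt hf _) (slice_contDiffAt hg _)

lemma lap_neg {n : ℕ} {f : Eu n → ℝ} {x : Eu n} :
    lap (fun y => - f y) x = - lap f x := by
  unfold lap
  rw [← Finset.sum_neg_distrib]
  exact Finset.sum_congr rfl fun i _ => iteratedDeriv_fun_neg _ _ _

lemma lap_const {n : ℕ} (c : ℝ) (x : Eu n) : lap (fun _ => c) x = 0 := by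
  unfold lap
  simp [iteratedDeriv_const]

lemma lap_nonpos_of_max {n : ℕ} {f : Eu n → ℝ} {x : Eu n} (hf : ContDiffAt ℝ 2 f x)
    (hmax : IsLocalMax f x) : lap f x ≤ 0 := by
  unfold lap
  refine Finset.sum_nonpos fun i _ => snd_deriv_nonpos (slice_contDiffAt hf _) ?_
  have h1 : Tendsto (fun s : ℝ => x + s • EuclideanSpace.single i (1 : ℝ)) (𝓝 0) (𝓝 x) := by
    have : Continuous (fun s : ℝ => x + s • EuclideanSpace.single i (1 : ℝ)) := by fun_prop
    simpa using this.tendsto 0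
  have := h1.eventually hmax
  simpa [IsLocalMax, IsMaxFilter] using this

/-- A function of `|x|²` has Laplacian `4|x|²Φ'' + 2nΦ'`. -/
lemma lap_normsq {n : ℕ} {Φ Φ1 Φ2 : ℝ → ℝ} (h1 : ∀ q, HasDerivAt Φ (Φ1 q) q)
    (h2 : ∀ q, HasDerivAt Φ1 (Φ2 q) q) (x : Eu n) :
    lap (fun y => Φ (‖y‖ ^ 2)) x = 4 * ‖x‖ ^ 2 * Φ2 (‖x‖ ^ 2) + 2 * n * Φ1 (‖x‖ ^ 2) := by
  unfold lap
  have key : ∀ i : Fin n, iteratedDeriv 2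
      (fun s : ℝ => Φ (‖x + s • EuclideanSpace.single i (1 : ℝ)‖ ^ 2)) 0
      = 4 * (x i) ^ 2 * Φ2 (‖x‖ ^ 2) + 2 * Φ1 (‖x‖ ^ 2) := by
    intro i
    have hn : ∀ s : ℝ, ‖x + s • EuclideanSpace.single i (1 : ℝ)‖ ^ 2
        = ‖x‖ ^ 2 + 2 * s * x i + s ^ 2 := by
      intro s
      rw [norm_add_sq_real, inner_smul_right, norm_smul]
      simp [EuclideanSpace.inner_single_right]
      ring
    simp_rw [hn]
    rw [iteratedDeriv_succ, iteratedDeriv_one]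
    have hp : ∀ s : ℝ, HasDerivAt (fun s : ℝ => ‖x‖ ^ 2 + 2 * s * x i + s ^ 2)
        (2 * x i + 2 * s) s := by
      intro s
      have := (((hasDerivAt_id s).const_mul 2).mul_const (x i)).const_add (‖x‖ ^ 2)
      have := this.add (hasDerivAt_pow 2 s)
      refine this.congr_deriv ?_
      simp
    have hd : deriv (fun s : ℝ => Φ (‖x‖ ^ 2 + 2 * s * x i + s ^ 2))
        = fun s => Φ1 (‖x‖ ^ 2 + 2 * s * x i + s ^ 2) * (2 * x i + 2 * s) := by
      funext s
      exact ((h1 _).comp s (hp s)).deriv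
    rw [hd]
    have hq : HasDerivAt (fun s : ℝ => 2 * x i + 2 * s) 2 0 := by
      simpa using ((hasDerivAt_id (0:ℝ)).const_mul 2).const_add (2 * x i)
    have := ((h2 _).comp (0:ℝ) (hp 0)).mul hq
    refine this.deriv.trans ?_
    simp
    ring
  rw [Finset.sum_congr rfl fun i _ => key i, Finset.sum_add_distrib, ← Finset.sum_mul,
    ← Finset.mul_sum, EuclideanSpace.real_norm_sq_eq]
  simp
  ring

lemma contDiff_normsq {n : ℕ} {Φ : ℝ → ℝ} (h : ContDiff ℝ 2 Φ) :
    ContDiff ℝ 2 (fun y : Eu n => Φ (‖y‖ ^ 2)) :=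
  h.comp (contDiff_norm_sq ℝ)

lemma normal_normsq {n : ℕ} {R : ℝ} (hR : 0 < R) {Φ Φ1 : ℝ → ℝ}
    (h1 : ∀ q, HasDerivAt Φ (Φ1 q) q) {x : Eu n} (hx : ‖x‖ = R) :
    HasDerivAt (fun s : ℝ => Φ (‖x + s • (R⁻¹ • x)‖ ^ 2)) (2 * R * Φ1 (R ^ 2)) 0 := by
  have hn : ∀ s : ℝ, ‖x + s • (R⁻¹ • x)‖ ^ 2 = (R + s) ^ 2 := by
    intro s
    have : x + s • (R⁻¹ • x) = (1 + s * R⁻¹) • x := by rw [add_smul, one_smul, smul_smul]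
    rw [this, norm_smul, hx, mul_pow, Real.norm_eq_abs, sq_abs]
    field_simp
  simp_rw [hn]
  have hp : HasDerivAt (fun s : ℝ => (R + s) ^ 2) (2 * R) 0 := by
    have := ((hasDerivAt_id (0:ℝ)).const_add R).fun_pow 2
    simpa using this
  have := (h1 ((R + 0) ^ 2)).comp (0:ℝ) hp
  refine this.congr_deriv ?_
  simp; ring

/-- A differentiable function that vanishes at `t` and is nonpositive just before `t`
has nonnegative derivative at `t`. -/
lemma left_deriv_nonneg {h : ℝ → ℝ} {d t t1 : ℝ} (ht : t1 < t) (hd : HasDerivAt h d t)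
    (h0 : h t = 0) (hle : ∀ s ∈ Ico t1 t, h s ≤ 0) : 0 ≤ d := by
  by_contra! hneg
  have h1 : ∀ᶠ s in 𝓝[<] t, 0 < h s := by
    have := hd.hasDerivWithinAt (s := Iio t)
    rw [hasDerivWithinAt_iff_tendsto_slope' (by simp)] at this
    filter_upwards [this.eventually (gt_mem_nhds hneg), self_mem_nhdsWithin] with s hs hst
    rw [slope_def_field, h0] at hs
    have hst' : s - t < 0 := sub_neg.2 hst
    rw [div_neg_iff] at hs
    rcases hs with h | h
    · linarith [h.1]
    · linarith [h.2]
  have h2 : ∀ᶠ s in 𝓝[<] t, s ∈ Ioo t1 t := Ioo_mem_nhdsLT ht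
  obtain ⟨s, hs1, hs2⟩ := (h1.and h2).exists
  exact absurd (hle s ⟨hs2.1.le, hs2.2⟩) (not_le.2 hs1)

/-- First-order conditions at an interior point where a nonpositive function vanishes. -/
lemma interior_touch {n : ℕ} {R t1 t : ℝ} {w : Eu n → ℝ → ℝ} {x : Eu n} {wt : ℝ}
    (hx : x ∈ ball (0 : Eu n) R) (ht : t1 < t)
    (hC : ContDiffAt ℝ 2 (fun y => w y t) x) (hd : HasDerivAt (w x) wt t)
    (h0 : w x t = 0) (hle : ∀ y ∈ closedBall (0 : Eu n) R, ∀ s ∈ Icc t1 t, w y s ≤ 0) :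
    lap (fun y => w y t) x ≤ 0 ∧ 0 ≤ wt := by
  constructor
  · refine lap_nonpos_of_max hC ?_
    filter_upwards [isOpen_ball.mem_nhds hx] with y hy
    rw [h0]
    exact hle y (ball_subset_closedBall hy) t ⟨ht.le, le_rfl⟩
  · exact left_deriv_nonneg ht hd h0
      fun s hs => hle x (ball_subset_closedBall hx) s ⟨hs.1, hs.2.le⟩

lemma ray_eq {n : ℕ} {R : ℝ} {x : Eu n} (s : ℝ) :
    x + s • (R⁻¹ • x) = (1 + s * R⁻¹) • x := by rw [add_smul, one_smul, smul_smul]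

lemma norm_ray {n : ℕ} {R : ℝ} (hR : 0 < R) {x : Eu n} (hx : ‖x‖ = R) {s : ℝ} (hs : -R ≤ s) :
    ‖x + s • (R⁻¹ • x)‖ = R + s := by
  have h3 : 0 ≤ 1 + s * R⁻¹ := by
    have : 1 + s * R⁻¹ = (R + s) / R := by field_simp
    rw [this]; exact div_nonneg (by linarith) hR.le
  rw [ray_eq, norm_smul, hx, Real.norm_eq_abs, abs_of_nonneg h3]
  field_simp

lemma boundary_touch {n : ℕ} {R : ℝ} (hR : 0 < R) {w : Eu n → ℝ} {x : Eu n} {d : ℝ}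
    (hx : ‖x‖ = R) (h0 : w x = 0) (hle : ∀ y ∈ closedBall (0 : Eu n) R, w y ≤ 0)
    (hd : HasDerivAt (fun s : ℝ => w (x + s • (R⁻¹ • x))) d 0) : 0 ≤ d := by
  refine left_deriv_nonneg (t1 := -R) (by linarith) hd (by simpa using h0) fun s hs => hle _ ?_
  rw [mem_closedBall_zero_iff, norm_ray hR hx hs.1]
  linarith [hs.2]

/-! ### Rotation invariance of the Laplacian -/

lemma slice_eq_fderiv {n : ℕ} {f : Eu n → ℝ} {x : Eu n} (hf : ContDiffAt ℝ 2 f x) (e : Eu n) :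
    iteratedDeriv 2 (fun s : ℝ => f (x + s • e)) 0 = iteratedFDeriv ℝ 2 f x ![e, e] := by
  rw [iteratedDeriv_succ, iteratedDeriv_one, iteratedFDeriv_two_apply]
  have hline : ∀ s : ℝ, HasDerivAt (fun s : ℝ => x + s • e) e s := by
    intro s
    simpa using ((hasDerivAt_id s).smul_const e).const_add x
  have hx0 : x + (0:ℝ) • e = x := by simp
  have hdiff : ∀ᶠ y in 𝓝 x, DifferentiableAt ℝ f y := by
    filter_upwards [hf.eventually (by simp)] with y hy using hy.differentiableAt (by norm_num)
  have htend : Tendsto (fun s : ℝ => x + s • e) (𝓝 0) (𝓝 x) := by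
    have := (hline 0).continuousAt.tendsto
    rwa [hx0] at this
  have h1 : deriv (fun s : ℝ => f (x + s • e)) =ᶠ[𝓝 0] fun s => fderiv ℝ f (x + s • e) e := by
    filter_upwards [htend.eventually hdiff] with s hs
    exact (hs.hasFDerivAt.comp_hasDerivAt s (hline s)).deriv
  rw [h1.deriv_eq]
  have h2 : DifferentiableAt ℝ (fderiv ℝ f) (x + (0:ℝ) • e) := by
    rw [hx0]
    exact (hf.fderiv_right (m := 1) (by norm_num)).differentiableAt (by norm_num)
  have h3 := h2.hasFDerivAt.comp_hasDerivAt (0:ℝ) (hline 0)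
  have h4 := h3.clm_apply (hasDerivAt_const (0:ℝ) e)
  simp only [hx0] at h4
  refine h4.deriv.trans ?_
  simp

lemma lap_comp_isometry {n : ℕ} {f : Eu n → ℝ} {x : Eu n} (Q : Eu n ≃ₗᵢ[ℝ] Eu n)
    (hf : ContDiffAt ℝ 2 f (Q x)) : lap (fun y => f (Q y)) x = lap f (Q x) := by
  have hsum : ∀ (b : OrthonormalBasis (Fin n) ℝ (Eu n)),
      ∑ i, iteratedDeriv 2 (fun s : ℝ => f (Q x + s • b i)) 0 = Laplacian.laplacian f (Q x) := by
    intro b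
    rw [InnerProductSpace.laplacian_eq_iteratedFDeriv_orthonormalBasis f b]
    exact Finset.sum_congr rfl fun i _ => slice_eq_fderiv hf _
  have h1 := hsum (EuclideanSpace.basisFun (Fin n) ℝ)
  have h2 := hsum ((EuclideanSpace.basisFun (Fin n) ℝ).map Q)
  unfold lap
  simp only [EuclideanSpace.basisFun_apply, OrthonormalBasis.map_apply] at h1 h2
  rw [h1, ← h2]
  simp

/-! ### A comparison principle for linear cooperative systems -/

/-- One half of a cooperative linear parabolic system on the closed ball: `w` solves
`w_t = Δw + c z + f` with `0 ≤ c ≤ B`, `f ≤ F`, and `∂w/∂η = β z` with `0 ≤ β ≤ B`,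
starting below `e0` at time `t1`. -/
structure LinSub {n : ℕ} (R B t1 t2 e0 F : ℝ) (w z : Eu n → ℝ → ℝ) : Prop where
  cont : ContinuousOn (fun p : Eu n × ℝ => w p.1 p.2) (closedBall (0 : Eu n) R ×ˢ Icc t1 t2)
  init : ∀ x ∈ closedBall (0 : Eu n) R, w x t1 ≤ e0
  reg : ∀ t ∈ Ioc t1 t2, ∀ x ∈ ball (0 : Eu n) R, ContDiffAt ℝ 2 (fun y => w y t) x
  pde : ∀ t ∈ Ioc t1 t2, ∀ x ∈ ball (0 : Eu n) R, ∃ c f : ℝ, 0 ≤ c ∧ c ≤ B ∧ f ≤ F ∧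
    HasDerivAt (w x) (lap (fun y => w y t) x + c * z x t + f) t
  bc : ∀ t ∈ Ioc t1 t2, ∀ x : Eu n, ‖x‖ = R → ∃ β : ℝ, 0 ≤ β ∧ β ≤ B ∧
    HasDerivAt (fun s : ℝ => w (x + s • (R⁻¹ • x)) t) (β * z x t) 0

/-- The barrier `(e0 + ε + F (t - t1)) e^{Λ(t - t1)} e^{κ|x|²}` used in `mp_lin`. -/
noncomputable def linBar {n : ℕ} (κ Λ e F t1 : ℝ) (x : Eu n) (t : ℝ) : ℝ :=
  (e + F * (t - t1)) * Real.exp (Λ * (t - t1)) * Real.exp (κ * ‖x‖ ^ 2)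

/-- The amplification constant of `mp_lin` over a time span `τ`. -/
noncomputable def linConst (n : ℕ) (R B τ : ℝ) : ℝ :=
  Real.exp ((4 * ((B + 1) / (2 * R)) ^ 2 * R ^ 2 + 2 * n * ((B + 1) / (2 * R)) + B + 1) * τ) *
    Real.exp ((B + 1) / (2 * R) * R ^ 2)

lemma hasDerivAt_exp_mul (κ q : ℝ) :
    HasDerivAt (fun q => Real.exp (κ * q)) (κ * Real.exp (κ * q)) q := by
  have := ((hasDerivAt_id q).const_mul κ).exp
  refine this.congr_deriv ?_
  simp; ring

lemma LinSub.step {n : ℕ} {R B t1 t2 e0 F : ℝ} (hR : 0 < R) (hB : 0 ≤ B) {w z : Eu n → ℝ → ℝ}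
    (h : LinSub R B t1 t2 e0 F w z) {e κ Λ : ℝ} (he : 0 < e) (hF : 0 ≤ F)
    (hκ : κ = (B + 1) / (2 * R)) (hΛ : Λ = 4 * κ ^ 2 * R ^ 2 + 2 * n * κ + B + 1)
    {x : Eu n} (hx : x ∈ closedBall (0 : Eu n) R) {t : ℝ} (ht : t ∈ Ioc t1 t2)
    (h0 : w x t - linBar κ Λ e F t1 x t = 0)
    (hw : ∀ y ∈ closedBall (0 : Eu n) R, ∀ s ∈ Icc t1 t, w y s - linBar κ Λ e F t1 y s ≤ 0)
    (hz : ∀ y ∈ closedBall (0 : Eu n) R, ∀ s ∈ Icc t1 t, z y s - linBar κ Λ e F t1 y s ≤ 0) :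
    False := by
  have hκ0 : 0 < κ := by rw [hκ]; positivity
  have hs : 0 ≤ t - t1 := by linarith [ht.1]
  have hΛ0 : 0 ≤ Λ := by rw [hΛ]; positivity
  set a : ℝ := (e + F * (t - t1)) * Real.exp (Λ * (t - t1)) with ha
  have ha0 : 0 < a := by positivity
  have hΦ1 : ∀ q, HasDerivAt (fun q => a * Real.exp (κ * q)) (a * (κ * Real.exp (κ * q))) q :=
    fun q => (hasDerivAt_exp_mul κ q).const_mul a
  have hΦ2 : ∀ q, HasDerivAt (fun q => a * (κ * Real.exp (κ * q)))
      (a * (κ * (κ * Real.exp (κ * q)))) q :=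
    fun q => ((hasDerivAt_exp_mul κ q).const_mul κ).const_mul a
  have hpos : 0 < linBar κ Λ e F t1 x t := by unfold linBar; positivity
  have hzx := hz x hx t ⟨ht.1.le, le_rfl⟩
  have hexp1 : 1 ≤ Real.exp (κ * ‖x‖ ^ 2) := Real.one_le_exp (by positivity)
  have hexp2 : 1 ≤ Real.exp (Λ * (t - t1)) := Real.one_le_exp (by positivity)
  have hcz : ∀ c : ℝ, 0 ≤ c → c ≤ B → c * z x t ≤ B * linBar κ Λ e F t1 x t := by
    intro c hc0 hcB
    calc c * z x t ≤ c * linBar κ Λ e F t1 x t := by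
          apply mul_le_mul_of_nonneg_left _ hc0; linarith
      _ ≤ _ := mul_le_mul_of_nonneg_right hcB hpos.le
  rw [mem_closedBall_zero_iff] at hx
  rcases hx.lt_or_eq with hlt | heq
  · have hxb : x ∈ ball (0 : Eu n) R := by simpa using hlt
    obtain ⟨c, f, hc0, hcB, hfF, hd⟩ := h.pde t ht x hxb
    have hC1 : ContDiffAt ℝ 2 (fun y : Eu n => linBar κ Λ e F t1 y t) x :=
      (contDiff_normsq (n := n) (Φ := fun q => a * Real.exp (κ * q)) (by fun_prop)).contDiffAt
    have hbd : HasDerivAt (fun t => linBar κ Λ e F t1 x t)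
        ((F * Real.exp (Λ * (t - t1)) + (e + F * (t - t1)) * (Λ * Real.exp (Λ * (t - t1)))) *
          Real.exp (κ * ‖x‖ ^ 2)) t := by
      unfold linBar
      have h1 : HasDerivAt (fun t => e + F * (t - t1)) F t := by
        simpa using (((hasDerivAt_id t).sub_const t1).const_mul F).const_add e
      have h2 : HasDerivAt (fun t => Real.exp (Λ * (t - t1))) (Λ * Real.exp (Λ * (t - t1))) t := by
        have := (((hasDerivAt_id t).sub_const t1).const_mul Λ).exp
        refine this.congr_deriv ?_
        simp; ring
      exact (h1.mul h2).mul_const _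
    obtain ⟨k1, k2⟩ := interior_touch (w := fun y s => w y s - linBar κ Λ e F t1 y s) hxb ht.1
      ((h.reg t ht x hxb).sub hC1) (hd.sub hbd) h0 hw
    rw [lap_sub (h.reg t ht x hxb) hC1] at k1
    have hl : lap (fun y : Eu n => linBar κ Λ e F t1 y t) x =
        (4 * κ ^ 2 * ‖x‖ ^ 2 + 2 * n * κ) * linBar κ Λ e F t1 x t := by
      refine (lap_normsq hΦ1 hΦ2 x).trans ?_
      simp only [linBar, ← ha]
      ring
    rw [hl] at k1
    have hcz' := hcz c hc0 hcB
    have hlapb : (4 * κ ^ 2 * ‖x‖ ^ 2 + 2 * n * κ) * linBar κ Λ e F t1 x t ≤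
        (4 * κ ^ 2 * R ^ 2 + 2 * n * κ) * linBar κ Λ e F t1 x t := by
      gcongr
    have hFe : F ≤ F * Real.exp (Λ * (t - t1)) * Real.exp (κ * ‖x‖ ^ 2) := by
      have : 1 ≤ Real.exp (Λ * (t - t1)) * Real.exp (κ * ‖x‖ ^ 2) := by nlinarith
      nlinarith
    have hbt : (F * Real.exp (Λ * (t - t1)) + (e + F * (t - t1)) * (Λ * Real.exp (Λ * (t - t1)))) *
          Real.exp (κ * ‖x‖ ^ 2) = F * Real.exp (Λ * (t - t1)) * Real.exp (κ * ‖x‖ ^ 2)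
          + Λ * linBar κ Λ e F t1 x t := by unfold linBar; ring
    rw [hbt, hΛ] at k2
    rw [hΛ] at k1 hcz' hlapb hFe hpos
    nlinarith
  · obtain ⟨β, hβ0, hβB, hd⟩ := h.bc t ht x heq
    have hb := normal_normsq hR hΦ1 heq
    have k := boundary_touch hR (w := fun y => w y t - linBar κ Λ e F t1 y t) heq h0
      (fun y hy => hw y hy t ⟨ht.1.le, le_rfl⟩) (hd.sub hb)
    have hβ' := hcz β hβ0 hβB
    have h5 : 2 * R * (a * (κ * Real.exp (κ * R ^ 2))) = (B + 1) * linBar κ Λ e F t1 x t := by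
      have : 2 * R * κ = B + 1 := by rw [hκ]; field_simp
      rw [← this]
      simp only [linBar, ← ha, heq]
      ring
    rw [h5] at k
    nlinarith

/-- Comparison principle: `w` grows at most by the factor `linConst` over the data `e0 + F (t - t1)`.
Taking `e0 = F = 0` gives uniqueness and symmetry statements. -/
lemma mp_lin {n : ℕ} {R B t1 t2 e0 F : ℝ} (hR : 0 < R) (hB : 0 ≤ B) {w z : Eu n → ℝ → ℝ}
    (h : LinSub R B t1 t2 e0 F w z) (h' : LinSub R B t1 t2 e0 F z w) (he : 0 ≤ e0) (hF : 0 ≤ F)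
    {x : Eu n} (hx : x ∈ closedBall (0 : Eu n) R) {t : ℝ} (ht : t ∈ Icc t1 t2) {τ : ℝ}
    (hτ : t - t1 ≤ τ) :
    w x t ≤ (e0 + F * (t - t1)) * linConst n R B τ := by
  set κ : ℝ := (B + 1) / (2 * R) with hκ
  set Λ : ℝ := 4 * κ ^ 2 * R ^ 2 + 2 * n * κ + B + 1 with hΛ
  have hκ0 : 0 < κ := by rw [hκ]; positivity
  have hs : 0 ≤ t - t1 := by linarith [ht.1]
  have hΛ0 : 0 ≤ Λ := by rw [hΛ]; positivity
  have hCpos : 0 < linConst n R B τ := by unfold linConst; positivity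
  have main : ∀ ε > 0, w x t ≤ (e0 + ε + F * (t - t1)) * linConst n R B τ := by
    intro ε hε
    have he' : 0 < e0 + ε := by linarith
    have hbarc : Continuous (fun p : Eu n × ℝ => linBar κ Λ (e0 + ε) F t1 p.1 p.2) := by
      unfold linBar; fun_prop
    have hbar0 : ∀ y : Eu n, e0 < linBar κ Λ (e0 + ε) F t1 y t1 := by
      intro y
      unfold linBar
      have : 1 ≤ Real.exp (κ * ‖y‖ ^ 2) := Real.one_le_exp (by positivity)
      simp only [sub_self, mul_zero, Real.exp_zero, add_zero, mul_one]
      nlinarith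
    have key := touch (isCompact_closedBall (0 : Eu n) R) (t1 := t1) (t2 := t2)
      (fun (b : Bool) y s => (if b then w y s else z y s) - linBar κ Λ (e0 + ε) F t1 y s)
      (by
        rintro (_ | _)
        · exact h'.cont.sub hbarc.continuousOn
        · exact h.cont.sub hbarc.continuousOn)
      (by
        rintro (_ | _) y hy
        · have := h'.init y hy; have := hbar0 y; simp; linarith
        · have := h.init y hy; have := hbar0 y; simp; linarith)
      (by
        rintro (_ | _) y hy s hs h0 hle
        · exact h'.step hR hB he' hF hκ hΛ hy hs (by simpa using h0)
            (by simpa using hle false) (by simpa using hle true)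
        · exact h.step hR hB he' hF hκ hΛ hy hs (by simpa using h0)
            (by simpa using hle true) (by simpa using hle false))
    have h1 := key true x hx t ht
    simp only [if_true] at h1
    have h2 : linBar κ Λ (e0 + ε) F t1 x t ≤ (e0 + ε + F * (t - t1)) * linConst n R B τ := by
      unfold linBar linConst
      rw [mul_assoc]
      have hxn : ‖x‖ ≤ R := by simpa using hx
      gcongr
    linarith
  have hlim : Tendsto (fun ε : ℝ => (e0 + ε + F * (t - t1)) * linConst n R B τ) (𝓝[>] 0)
      (𝓝 ((e0 + 0 + F * (t - t1)) * linConst n R B τ)) := by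
    have : Continuous (fun ε : ℝ => (e0 + ε + F * (t - t1)) * linConst n R B τ) := by fun_prop
    exact (this.tendsto 0).mono_left nhdsWithin_le_nhds
  have := ge_of_tendsto hlim (eventually_nhdsWithin_of_forall fun ε hε => main ε hε)
  simpa using this

/-- Secant slopes of `exp` below level `M` lie in `[0, e^M]`. -/
lemma exp_secant {a b M : ℝ} (ha : a ≤ M) (hb : b ≤ M) :
    ∃ c, 0 ≤ c ∧ c ≤ Real.exp M ∧ Real.exp a - Real.exp b = c * (a - b) := by
  rcases lt_trichotomy a b with h | h | h
  · obtain ⟨c, hc, hce⟩ := exists_deriv_eq_slope Real.exp h Real.continuous_exp.continuousOn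
      Real.differentiable_exp.differentiableOn
    rw [Real.deriv_exp] at hce
    refine ⟨Real.exp c, (Real.exp_pos _).le, Real.exp_le_exp.2 (by linarith [hc.2]), ?_⟩
    have : b - a ≠ 0 := by linarith
    rw [hce]; field_simp; ring
  · exact ⟨0, le_rfl, (Real.exp_pos _).le, by simp [h]⟩
  · obtain ⟨c, hc, hce⟩ := exists_deriv_eq_slope Real.exp h Real.continuous_exp.continuousOn
      Real.differentiable_exp.differentiableOn
    rw [Real.deriv_exp] at hce
    refine ⟨Real.exp c, (Real.exp_pos _).le, Real.exp_le_exp.2 (by linarith [hc.2]), ?_⟩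
    have : a - b ≠ 0 := by linarith
    rw [hce]; field_simp

/-! ### Qualitative properties of solutions -/

/-- The equation, boundary condition and initial properties of the component `u`, with the
boundary and time derivatives in `HasDerivAt` form.  The system is symmetric: a solution
`(u, v)` is a pair `Half R T lam1 u v`, `Half R T lam2 v u`. -/
structure Half {n : ℕ} (R T l : ℝ) (u v : Eu n → ℝ → ℝ) : Prop where
  cont : ContinuousOn (fun p : Eu n × ℝ => u p.1 p.2) (closedBall (0 : Eu n) R ×ˢ Ico (0 : ℝ) T)
  c2 : ∀ t ∈ Ioo (0 : ℝ) T, ContDiffOn ℝ 2 (fun x => u x t) (closedBall (0 : Eu n) R)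
  dt : ∀ x ∈ closedBall (0 : Eu n) R, ∀ t ∈ Ioo (0 : ℝ) T, DifferentiableAt ℝ (u x) t
  pde : ∀ x ∈ ball (0 : Eu n) R, ∀ t ∈ Ioo (0 : ℝ) T,
    HasDerivAt (u x) (lap (fun y => u y t) x + l * Real.exp (v x t)) t
  bc : ∀ x : Eu n, ‖x‖ = R → ∀ t ∈ Ioo (0 : ℝ) T,
    HasDerivAt (fun s : ℝ => u (x + s • (R⁻¹ • x)) t) (Real.exp (v x t)) 0
  nonneg0 : ∀ x ∈ closedBall (0 : Eu n) R, 0 ≤ u x 0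
  mono0 : ∀ x ∈ closedBall (0 : Eu n) R, ∀ y ∈ closedBall (0 : Eu n) R, ‖x‖ ≤ ‖y‖ → u x 0 ≤ u y 0

section halves

variable {n : ℕ} {R T l1 l2 : ℝ} {u v : Eu n → ℝ → ℝ}

lemma half_of_solution {u₀ v₀ : Eu n → ℝ}
    (hd : AdmissibleData n R u₀ v₀) (hs : IsClassicalSolution n R T l1 l2 u v u₀ v₀) :
    Half R T l1 u v ∧ Half R T l2 v u := by
  have hder : ∀ {f : ℝ → ℝ} {c : ℝ}, deriv f 0 = Real.exp c → HasDerivAt f (Real.exp c) 0 := by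
    intro f c h
    have : DifferentiableAt ℝ f 0 := by
      by_contra hcon
      rw [deriv_zero_of_not_differentiableAt hcon] at h
      exact (Real.exp_pos c).ne h
    rw [← h]
    exact this.hasDerivAt
  refine ⟨⟨hs.cont_u, hs.reg_space_u, hs.reg_time_u, ?_, ?_, ?_, ?_⟩,
    ⟨hs.cont_v, hs.reg_space_v, hs.reg_time_v, ?_, ?_, ?_, ?_⟩⟩
  · intro x hx t ht
    rw [← hs.pde_u x hx t ht]
    exact (hs.reg_time_u x (ball_subset_closedBall hx) t ht).hasDerivAt
  · exact fun x hx t ht => hder (hs.bc_u x hx t ht)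
  · intro x hx; rw [hs.init_u x hx]; exact hd.u0_nonneg x hx
  · intro x hx y hy h
    rw [hs.init_u x hx, hs.init_u y hy]; exact hd.u0_radial_mono x hx y hy h
  · intro x hx t ht
    rw [← hs.pde_v x hx t ht]
    exact (hs.reg_time_v x (ball_subset_closedBall hx) t ht).hasDerivAt
  · exact fun x hx t ht => hder (hs.bc_v x hx t ht)
  · intro x hx; rw [hs.init_v x hx]; exact hd.v0_nonneg x hx
  · intro x hx y hy h
    rw [hs.init_v x hx, hs.init_v y hy]; exact hd.v0_radial_mono x hx y hy h

lemma Half.contDiffAt (h : Half R T l1 u v) {t : ℝ} (ht : t ∈ Ioo (0 : ℝ) T) {x : Eu n}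
    (hx : x ∈ ball (0 : Eu n) R) : ContDiffAt ℝ 2 (fun y => u y t) x :=
  (h.c2 t ht).contDiffAt (Filter.mem_of_superset (isOpen_ball.mem_nhds hx) ball_subset_closedBall)

lemma Half.cont_Icc (h : Half R T l1 u v) {t1 t2 : ℝ} (h1 : 0 ≤ t1) (h2 : t2 < T) :
    ContinuousOn (fun p : Eu n × ℝ => u p.1 p.2) (closedBall (0 : Eu n) R ×ˢ Icc t1 t2) :=
  h.cont.mono (prod_mono le_rfl fun _ hs => ⟨h1.trans hs.1, hs.2.trans_lt h2⟩)

lemma Half.bdd (h : Half R T l1 u v) {t2 : ℝ} (h2 : t2 < T) :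
    ∃ M, ∀ x ∈ closedBall (0 : Eu n) R, ∀ t ∈ Icc (0 : ℝ) t2, |u x t| ≤ M := by
  obtain ⟨M, hM⟩ := ((isCompact_closedBall (0 : Eu n) R).prod isCompact_Icc).exists_bound_of_continuousOn
    (h.cont_Icc le_rfl h2)
  exact ⟨M, fun x hx t ht => hM (x, t) ⟨hx, ht⟩⟩

lemma Half.nonneg (hR : 0 < R) (hl : 0 < l1) (h : Half R T l1 u v) {x : Eu n}
    (hx : x ∈ closedBall (0 : Eu n) R) {t : ℝ} (ht : t ∈ Ico (0 : ℝ) T) : 0 ≤ u x t := by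
  by_contra! hneg
  set ε : ℝ := -u x t / (1 + t) with hε
  have ht1 : 0 < 1 + t := by linarith [ht.1]
  have hε0 : 0 < ε := div_pos (by linarith) ht1
  have key := touch (isCompact_closedBall (0 : Eu n) R) (t1 := 0) (t2 := t)
    (fun (_ : Unit) y s => -u y s - ε * (1 + s))
    (fun _ => (h.cont_Icc le_rfl ht.2).neg.sub (by fun_prop))
    (fun _ y hy => by have := h.nonneg0 y hy; simp only [add_zero]; linarith)
    (by
      intro _ y hy s hs h0 hle
      have hs' : s ∈ Ioo 0 T := ⟨hs.1, hs.2.trans_lt ht.2⟩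
      have hle' := hle ()
      rw [mem_closedBall_zero_iff] at hy
      rcases hy.lt_or_eq with hlt | heq
      · have hyb : y ∈ ball (0 : Eu n) R := by simpa using hlt
        have hCd := h.contDiffAt hs' hyb
        have hb : HasDerivAt (fun s => ε * (1 + s)) ε s := by
          simpa using ((hasDerivAt_id s).const_add 1).const_mul ε
        obtain ⟨k1, k2⟩ := interior_touch (w := fun y s => -u y s - ε * (1 + s)) hyb hs.1
          (hCd.neg.sub contDiffAt_const) ((h.pde y hyb s hs').neg.sub hb) h0 hle'
        rw [lap_sub hCd.neg contDiffAt_const, lap_neg, lap_const] at k1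
        have := mul_pos hl (Real.exp_pos (v y s))
        linarith
      · have k := boundary_touch hR (w := fun y => -u y s - ε * (1 + s)) heq h0
          (fun y hy => hle' y hy s ⟨hs.1.le, le_rfl⟩)
          ((h.bc y heq s hs').neg.sub (hasDerivAt_const (0:ℝ) (ε * (1 + s))))
        have := Real.exp_pos (v y s)
        linarith)
  have := key () x hx t ⟨ht.1, le_rfl⟩
  have h3 : ε * (1 + t) = - u x t := by rw [hε]; field_simp
  simp only [h3] at this
  linarith

end halves

/-! ### Differences of solutions: radial symmetry, monotonicity, Lipschitz dependence on time -/

/-- `U` solves the first equation on `(t1, t2]` with an additional forcing term `f`. -/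
structure Forced {n : ℕ} (R t1 t2 l : ℝ) (U V f : Eu n → ℝ → ℝ) : Prop where
  cont : ContinuousOn (fun p : Eu n × ℝ => U p.1 p.2) (closedBall (0 : Eu n) R ×ˢ Icc t1 t2)
  reg : ∀ t ∈ Ioc t1 t2, ∀ x ∈ ball (0 : Eu n) R, ContDiffAt ℝ 2 (fun y => U y t) x
  pde : ∀ t ∈ Ioc t1 t2, ∀ x ∈ ball (0 : Eu n) R,
    HasDerivAt (U x) (lap (fun y => U y t) x + l * Real.exp (V x t) + f x t) t
  bc : ∀ t ∈ Ioc t1 t2, ∀ x : Eu n, ‖x‖ = R →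
    HasDerivAt (fun s : ℝ => U (x + s • (R⁻¹ • x)) t) (Real.exp (V x t)) 0

section differences

variable {n : ℕ} {R T l1 l2 t1 t2 : ℝ} {u v U U' V V' f f' : Eu n → ℝ → ℝ}

lemma Forced.linSub {M F B e0 : ℝ} (hl : 0 ≤ l1) (h : Forced R t1 t2 l1 U V f)
    (h' : Forced R t1 t2 l1 U' V' f')
    (hV : ∀ x ∈ closedBall (0 : Eu n) R, ∀ t ∈ Ioc t1 t2, V x t ≤ M)
    (hV' : ∀ x ∈ closedBall (0 : Eu n) R, ∀ t ∈ Ioc t1 t2, V' x t ≤ M)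
    (hF : ∀ x ∈ ball (0 : Eu n) R, ∀ t ∈ Ioc t1 t2, f x t - f' x t ≤ F)
    (hB : Real.exp M ≤ B) (hB' : l1 * Real.exp M ≤ B)
    (hi : ∀ x ∈ closedBall (0 : Eu n) R, U x t1 - U' x t1 ≤ e0) :
    LinSub R B t1 t2 e0 F (fun x t => U x t - U' x t) (fun x t => V x t - V' x t) where
  cont := h.cont.sub h'.cont
  init := hi
  reg := fun t ht x hx => (h.reg t ht x hx).sub (h'.reg t ht x hx)
  pde := by
    intro t ht x hx
    have hx' := ball_subset_closedBall hx
    obtain ⟨c, hc0, hc1, hc⟩ := exp_secant (hV x hx' t ht) (hV' x hx' t ht)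
    refine ⟨l1 * c, f x t - f' x t, mul_nonneg hl hc0,
      (mul_le_mul_of_nonneg_left hc1 hl).trans hB', hF x hx t ht, ?_⟩
    refine ((h.pde t ht x hx).sub (h'.pde t ht x hx)).congr_deriv ?_
    rw [lap_sub (h.reg t ht x hx) (h'.reg t ht x hx)]
    linear_combination l1 * hc
  bc := by
    intro t ht x hx
    have hx' : x ∈ closedBall (0 : Eu n) R := by simp [hx]
    obtain ⟨c, hc0, hc1, hc⟩ := exp_secant (hV x hx' t ht) (hV' x hx' t ht)
    exact ⟨c, hc0, hc1.trans hB, ((h.bc t ht x hx).sub (h'.bc t ht x hx)).congr_deriv hc⟩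

lemma Half.forced_shift (h : Half R T l1 u v) {p : ℝ} (h1 : 0 ≤ t1 + p) (h2 : t2 + p < T) :
    Forced R t1 t2 l1 (fun x t => u x (t + p)) (fun x t => v x (t + p)) (fun _ _ => 0) where
  cont := by
    refine h.cont.comp (f := fun q : Eu n × ℝ => (q.1, q.2 + p)) (by fun_prop) ?_
    rintro ⟨y, s⟩ ⟨hy, hs⟩
    exact ⟨hy, by simp only at hs ⊢; exact ⟨by linarith [hs.1], by linarith [hs.2]⟩⟩
  reg := fun t ht x hx => h.contDiffAt ⟨by linarith [ht.1], by linarith [ht.2]⟩ hx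
  pde := by
    intro t ht x hx
    have := (h.pde x hx (t + p) ⟨by linarith [ht.1], by linarith [ht.2]⟩)
    simpa using this.comp_add_const t p
  bc := fun t ht x hx => h.bc x hx (t + p) ⟨by linarith [ht.1], by linarith [ht.2]⟩

lemma Half.forced_rot (h : Half R T l1 u v) (h2 : t2 < T) (Q : Eu n ≃ₗᵢ[ℝ] Eu n) :
    Forced R 0 t2 l1 (fun x t => u (Q x) t) (fun x t => v (Q x) t) (fun _ _ => 0) where
  cont := by
    refine h.cont.comp (f := fun q : Eu n × ℝ => (Q q.1, q.2)) (by fun_prop) ?_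
    rintro ⟨y, s⟩ ⟨hy, hs⟩
    exact ⟨by simpa using hy, by simp only at hs ⊢; exact ⟨hs.1, by linarith [hs.2]⟩⟩
  reg := by
    intro t ht x hx
    have hQ : ContDiffAt ℝ 2 (fun y => u y t) (Q x) :=
      h.contDiffAt ⟨ht.1, ht.2.trans_lt h2⟩ (by simpa using hx)
    exact hQ.comp x Q.contDiff.contDiffAt
  pde := by
    intro t ht x hx
    have hx' : Q x ∈ ball (0 : Eu n) R := by simpa using hx
    have := h.pde (Q x) hx' t ⟨ht.1, ht.2.trans_lt h2⟩
    rw [lap_comp_isometry (f := fun y => u y t) Q (h.contDiffAt ⟨ht.1, ht.2.trans_lt h2⟩ hx')]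
    simpa using this
  bc := by
    intro t ht x hx
    have := h.bc (Q x) (by simpa using hx) t ⟨ht.1, ht.2.trans_lt h2⟩
    simpa using this

/-- A time slice of the solution, extended constantly in time, solves the equation with a forcing
term; comparison with it gives the Lipschitz bound in time. -/
lemma Half.forced_frozen (h : Half R T l1 u v) (h1 : 0 < t1) (h2 : t1 < T) :
    Forced R t1 t2 l1 (fun x _ => u x t1) (fun x _ => v x t1)
      (fun x _ => -(lap (fun y => u y t1) x + l1 * Real.exp (v x t1))) where
  cont := by
    refine h.cont.comp (f := fun q : Eu n × ℝ => (q.1, t1)) (by fun_prop) ?_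
    rintro ⟨y, s⟩ ⟨hy, hs⟩
    exact ⟨hy, h1.le, h2⟩
  reg := fun t ht x hx => h.contDiffAt ⟨h1, h2⟩ hx
  pde := by
    intro t ht x hx
    refine (hasDerivAt_const t (u x t1)).congr_deriv ?_
    ring
  bc := fun t ht x hx => h.bc x hx t1 ⟨h1, h2⟩

lemma exists_bound (hu : Half R T l1 u v) (hv : Half R T l2 v u) (h2 : t2 < T) :
    ∃ M, ∀ x ∈ closedBall (0 : Eu n) R, ∀ t ∈ Icc (0 : ℝ) t2, u x t ≤ M ∧ v x t ≤ M := by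
  obtain ⟨M1, h1⟩ := hu.bdd h2
  obtain ⟨M2, h2⟩ := hv.bdd h2
  exact ⟨max M1 M2, fun x hx t ht => ⟨(le_abs_self _).trans ((h1 x hx t ht).trans (le_max_left _ _)),
    (le_abs_self _).trans ((h2 x hx t ht).trans (le_max_right _ _))⟩⟩

/-- The coefficient bound used for differences of solutions below level `M`. -/
noncomputable def coefB (l1 l2 M : ℝ) : ℝ := (1 + l1 + l2) * Real.exp M

lemma coefB_spec (h1 : 0 < l1) (h2 : 0 < l2) (M : ℝ) : 0 ≤ coefB l1 l2 M ∧
    Real.exp M ≤ coefB l1 l2 M ∧ l1 * Real.exp M ≤ coefB l1 l2 M ∧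
    l2 * Real.exp M ≤ coefB l1 l2 M := by
  unfold coefB
  have := Real.exp_pos M
  have := mul_pos h1 this
  have := mul_pos h2 (Real.exp_pos M)
  refine ⟨?_, ?_, ?_, ?_⟩ <;> nlinarith

lemma rot_invariant (hR : 0 < R) (hl1 : 0 < l1) (hl2 : 0 < l2)
    (hu : Half R T l1 u v) (hv : Half R T l2 v u) (Q : Eu n ≃ₗᵢ[ℝ] Eu n)
    {x : Eu n} (hx : x ∈ closedBall (0 : Eu n) R) {t : ℝ} (ht : t ∈ Ico (0 : ℝ) T) :
    u (Q x) t ≤ u x t := by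
  obtain ⟨M, hM⟩ := exists_bound hu hv ht.2
  obtain ⟨hB0, hB1, hB2, hB3⟩ := coefB_spec hl1 hl2 M
  have hQm : ∀ x ∈ closedBall (0 : Eu n) R, Q x ∈ closedBall (0 : Eu n) R := by simp
  have k1 : LinSub R (coefB l1 l2 M) 0 t 0 0 (fun x t => u (Q x) t - u x (t + 0))
      (fun x t => v (Q x) t - v x (t + 0)) :=
    (hu.forced_rot ht.2 Q).linSub hl1.le (hu.forced_shift (p := 0) (by simp) (by simpa using ht.2))
      (fun x hx s hs => (hM _ (hQm x hx) s ⟨hs.1.le, hs.2⟩).2)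
      (fun x hx s hs => by simpa using (hM x hx s ⟨hs.1.le, hs.2⟩).2)
      (fun _ _ _ _ => by simp) hB1 hB2
      (fun x hx => by simpa using hu.mono0 _ (hQm x hx) x hx (by simp))
  have k2 : LinSub R (coefB l1 l2 M) 0 t 0 0 (fun x t => v (Q x) t - v x (t + 0))
      (fun x t => u (Q x) t - u x (t + 0)) :=
    (hv.forced_rot ht.2 Q).linSub hl2.le (hv.forced_shift (p := 0) (by simp) (by simpa using ht.2))
      (fun x hx s hs => (hM _ (hQm x hx) s ⟨hs.1.le, hs.2⟩).1)
      (fun x hx s hs => by simpa using (hM x hx s ⟨hs.1.le, hs.2⟩).1)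
      (fun _ _ _ _ => by simp) hB1 hB3
      (fun x hx => by simpa using hv.mono0 _ (hQm x hx) x hx (by simp))
  have := mp_lin hR hB0 k1 k2 le_rfl le_rfl hx ⟨ht.1, le_rfl⟩ (le_refl (t - 0))
  simpa using this

lemma radial (hR : 0 < R) (hl1 : 0 < l1) (hl2 : 0 < l2)
    (hu : Half R T l1 u v) (hv : Half R T l2 v u)
    {x y : Eu n} (hx : x ∈ closedBall (0 : Eu n) R) (hxy : ‖x‖ = ‖y‖)
    {t : ℝ} (ht : t ∈ Ico (0 : ℝ) T) : u x t = u y t := by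
  have hy : y ∈ closedBall (0 : Eu n) R := by simpa [hxy] using hx
  refine le_antisymm ?_ ?_
  · have h := rot_invariant hR hl1 hl2 hu hv (Submodule.reflection (ℝ ∙ (y - x))ᗮ) hy ht
    rwa [Submodule.reflection_sub hxy.symm] at h
  · have h := rot_invariant hR hl1 hl2 hu hv (Submodule.reflection (ℝ ∙ (x - y))ᗮ) hx ht
    rwa [Submodule.reflection_sub hxy] at h

/-- The touching step in the proof of radial monotonicity. -/
lemma mono_step (hR : 0 < R) (hl1 : 0 < l1) (hl2 : 0 < l2)
    (hu : Half R T l1 u v) (hv : Half R T l2 v u) {t M ε Λ : ℝ} (ht : t ∈ Ioo (0 : ℝ) T)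
    (hM : ∀ x ∈ closedBall (0 : Eu n) R, v x t ≤ M) (hε : 0 < ε) (hΛ : l1 * Real.exp M < Λ)
    {p : Eu n × Eu n} (hp : ‖p.1‖ ≤ ‖p.2‖ ∧ ‖p.2‖ ≤ R)
    (h0 : u p.1 t - u p.2 t - ε * Real.exp (Λ * t) = 0)
    (hle : ∀ q : Eu n × Eu n, ‖q.1‖ ≤ ‖q.2‖ ∧ ‖q.2‖ ≤ R → ∀ s ∈ Icc 0 t,
      u q.1 s - u q.2 s - ε * Real.exp (Λ * s) ≤ 0)
    (hlev : v p.1 t - v p.2 t - ε * Real.exp (Λ * t) ≤ 0) : False := by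
  obtain ⟨x, y⟩ := p
  simp only at hp h0 hlev
  have hx : x ∈ closedBall (0 : Eu n) R := by simpa using hp.1.trans hp.2
  have hE : 0 < ε * Real.exp (Λ * t) := by positivity
  rcases hp.1.lt_or_eq with hlt | heq
  swap
  · rw [radial hR hl1 hl2 hu hv hx heq ⟨ht.1.le, ht.2⟩] at h0
    linarith
  have hxb : x ∈ ball (0 : Eu n) R := by simpa using hlt.trans_le hp.2
  rcases hp.2.lt_or_eq with hyl | hye
  · have hyb : y ∈ ball (0 : Eu n) R := by simpa using hyl
    have hcx := hu.contDiffAt ht hxb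
    have hcy := hu.contDiffAt ht hyb
    have l1x : lap (fun z => u z t) x ≤ 0 := by
      refine lap_nonpos_of_max hcx ?_
      have : ∀ᶠ z : Eu n in 𝓝 x, ‖z‖ < ‖y‖ := continuous_norm.continuousAt.eventually_lt_const hlt
      filter_upwards [this] with z hz
      have := hle (z, y) ⟨hz.le, hp.2⟩ t ⟨ht.1.le, le_rfl⟩
      simp only at this
      linarith
    have l1y : 0 ≤ lap (fun z => u z t) y := by
      have := lap_nonpos_of_max (x := y) hcy.neg (by
        have h1 : ∀ᶠ z : Eu n in 𝓝 y, ‖x‖ < ‖z‖ := continuous_norm.continuousAt.eventually_const_lt hlt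
        have h2 : ∀ᶠ z : Eu n in 𝓝 y, ‖z‖ < R := continuous_norm.continuousAt.eventually_lt_const hyl
        filter_upwards [h1, h2] with z hz hz2
        have := hle (x, z) ⟨hz.le, hz2.le⟩ t ⟨ht.1.le, le_rfl⟩
        simp only at this ⊢
        linarith)
      have h3 := lap_neg (f := fun z => u z t) (x := y)
      linarith
    have hb : HasDerivAt (fun s => ε * Real.exp (Λ * s)) (ε * (Λ * Real.exp (Λ * t))) t :=
      (hasDerivAt_exp_mul Λ t).const_mul ε
    have k := left_deriv_nonneg ht.1 (((hu.pde x hxb t ht).sub (hu.pde y hyb t ht)).sub hb) h0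
      (fun s hs => hle (x, y) hp s ⟨hs.1, hs.2.le⟩)
    obtain ⟨c, hc0, hc1, hc⟩ := exp_secant (hM x hx) (hM y (ball_subset_closedBall hyb))
    have h5 : l1 * (Real.exp (v x t) - Real.exp (v y t)) ≤ l1 * Real.exp M * (ε * Real.exp (Λ * t)) := by
      rw [hc, mul_assoc]
      apply mul_le_mul_of_nonneg_left _ hl1.le
      calc c * (v x t - v y t) ≤ c * (ε * Real.exp (Λ * t)) := by
            apply mul_le_mul_of_nonneg_left _ hc0; linarith
        _ ≤ _ := mul_le_mul_of_nonneg_right hc1 hE.le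
    nlinarith
  · have hb := (hu.bc y hye t ht)
    have hd : HasDerivAt (fun s : ℝ => u x t - u (y + s • (R⁻¹ • y)) t - ε * Real.exp (Λ * t))
        (-Real.exp (v y t)) 0 := by
      simpa using (hb.const_sub (u x t)).sub_const (ε * Real.exp (Λ * t))
    have k := left_deriv_nonneg (t1 := ‖x‖ - R) (by linarith) hd (by simpa using h0) (by
      intro s hs
      have hn := norm_ray hR hye (s := s) (by linarith [hs.1, norm_nonneg x])
      refine hle (x, y + s • (R⁻¹ • y)) ?_ t ⟨ht.1.le, le_rfl⟩
      simp only [hn]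
      exact ⟨by linarith [hs.1], by linarith [hs.2]⟩)
    linarith [Real.exp_pos (v y t)]

lemma radial_mono (hR : 0 < R) (hl1 : 0 < l1) (hl2 : 0 < l2)
    (hu : Half R T l1 u v) (hv : Half R T l2 v u)
    {x y : Eu n} (hy : y ∈ closedBall (0 : Eu n) R) (hxy : ‖x‖ ≤ ‖y‖)
    {t : ℝ} (ht : t ∈ Ico (0 : ℝ) T) : u x t ≤ u y t := by
  obtain ⟨M, hM⟩ := exists_bound hu hv ht.2
  obtain ⟨hB0, hB1, hB2, hB3⟩ := coefB_spec hl1 hl2 M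
  set Λ := coefB l1 l2 M + 1 with hΛ
  have main : ∀ ε > 0, u x t ≤ u y t + ε * Real.exp (Λ * t) := by
    intro ε hε
    set S : Set (Eu n × Eu n) := {p | ‖p.1‖ ≤ ‖p.2‖ ∧ ‖p.2‖ ≤ R} with hS
    have hScl : IsClosed S := by
      have c1 : IsClosed {p : Eu n × Eu n | ‖p.1‖ ≤ ‖p.2‖} :=
        isClosed_le (by fun_prop) (by fun_prop)
      have c2 : IsClosed {p : Eu n × Eu n | ‖p.2‖ ≤ R} := isClosed_le (by fun_prop) (by fun_prop)
      exact c1.inter c2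
    have hSsub : S ⊆ closedBall (0 : Eu n) R ×ˢ closedBall (0 : Eu n) R := by
      rintro ⟨a, b⟩ ⟨h1, h2⟩
      exact ⟨by simpa using le_trans h1 h2, by simpa using h2⟩
    have hSc : IsCompact S :=
      ((isCompact_closedBall (0 : Eu n) R).prod (isCompact_closedBall (0 : Eu n) R)).of_isClosed_subset
        hScl hSsub
    have hcont : ∀ {f g : Eu n → ℝ → ℝ} {l : ℝ}, Half R T l f g →
        ContinuousOn (fun q : (Eu n × Eu n) × ℝ => f q.1.1 q.2 - f q.1.2 q.2 - ε * Real.exp (Λ * q.2))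
          (S ×ˢ Icc 0 t) := by
      intro f g l hf
      have h1 := hf.cont_Icc (t1 := 0) le_rfl ht.2
      have hc1 : ContinuousOn (fun q : (Eu n × Eu n) × ℝ => f q.1.1 q.2) (S ×ˢ Icc 0 t) :=
        h1.comp (f := fun q : (Eu n × Eu n) × ℝ => (q.1.1, q.2)) (by fun_prop)
          (fun q hq => ⟨(hSsub hq.1).1, hq.2⟩)
      have hc2 : ContinuousOn (fun q : (Eu n × Eu n) × ℝ => f q.1.2 q.2) (S ×ˢ Icc 0 t) :=
        h1.comp (f := fun q : (Eu n × Eu n) × ℝ => (q.1.2, q.2)) (by fun_prop)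
          (fun q hq => ⟨(hSsub hq.1).2, hq.2⟩)
      exact (hc1.sub hc2).sub (by fun_prop)
    have key := touch hSc (t1 := 0) (t2 := t)
      (fun (b : Bool) p s => (if b then u p.1 s - u p.2 s else v p.1 s - v p.2 s)
        - ε * Real.exp (Λ * s))
      (by
        rintro (_ | _)
        · exact hcont hv
        · exact hcont hu)
      (by
        rintro (_ | _) p hp
        · have := hv.mono0 _ (hSsub hp).1 _ (hSsub hp).2 hp.1; simp; linarith
        · have := hu.mono0 _ (hSsub hp).1 _ (hSsub hp).2 hp.1; simp; linarith)
      (by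
        rintro (_ | _) p hp s hs h0 hle
        · exact mono_step (Λ := Λ) hR hl2 hl1 hv hu ⟨hs.1, hs.2.trans_lt ht.2⟩
            (fun x hx => (hM x hx s ⟨hs.1.le, hs.2⟩).1) hε (by linarith) hp (by simpa using h0)
            (by intro q hq r hr; simpa using hle false q hq r hr)
            (by simpa using hle true p hp s ⟨hs.1.le, le_rfl⟩)
        · exact mono_step (Λ := Λ) hR hl1 hl2 hu hv ⟨hs.1, hs.2.trans_lt ht.2⟩
            (fun x hx => (hM x hx s ⟨hs.1.le, hs.2⟩).2) hε (by linarith) hp (by simpa using h0)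
            (by intro q hq r hr; simpa using hle true q hq r hr)
            (by simpa using hle false p hp s ⟨hs.1.le, le_rfl⟩))
    have := key true (x, y) ⟨hxy, by simpa using hy⟩ t ⟨ht.1, le_rfl⟩
    simp only [if_true] at this
    linarith
  have hlim : Tendsto (fun ε : ℝ => u y t + ε * Real.exp (Λ * t)) (𝓝[>] 0)
      (𝓝 (u y t + 0 * Real.exp (Λ * t))) := by
    have : Continuous (fun ε : ℝ => u y t + ε * Real.exp (Λ * t)) := by fun_prop
    exact (this.tendsto 0).mono_left nhdsWithin_le_nhds
  simpa using ge_of_tendsto hlim (eventually_nhdsWithin_of_forall fun ε hε => main ε hε)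

/-- An upper bound for `u - v` valid for all times; at a boundary point where `u > v` the flux
pushes the difference down. -/
lemma diff_bound (hR : 0 < R) (hl2 : 0 < l2)
    (hu : Half R T l1 u v) (hv : Half R T l2 v u) {C0 : ℝ} (hC0 : 0 ≤ C0)
    (hCl : l1 ≤ l2 * Real.exp C0) (hi : ∀ x ∈ closedBall (0 : Eu n) R, u x 0 - v x 0 ≤ C0)
    {x : Eu n} (hx : x ∈ closedBall (0 : Eu n) R) {t : ℝ} (ht : t ∈ Ico (0 : ℝ) T) :
    u x t - v x t ≤ C0 := by
  by_contra! hneg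
  have ht1 : 0 < 1 + t := by linarith [ht.1]
  set ε : ℝ := (u x t - v x t - C0) / (1 + t) with hε
  have hε0 : 0 < ε := div_pos (by linarith) ht1
  have key := touch (isCompact_closedBall (0 : Eu n) R) (t1 := 0) (t2 := t)
    (fun (_ : Unit) y s => u y s - v y s - (C0 + ε * (1 + s)))
    (fun _ => ((hu.cont_Icc le_rfl ht.2).sub (hv.cont_Icc le_rfl ht.2)).sub (by fun_prop))
    (fun _ y hy => by have := hi y hy; simp only [add_zero]; linarith)
    (by
      intro _ y hy s hs h0 hle
      have hs' : s ∈ Ioo 0 T := ⟨hs.1, hs.2.trans_lt ht.2⟩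
      have hle' := hle ()
      have hεs : 0 < ε * (1 + s) := mul_pos hε0 (by linarith [hs.1])
      rw [mem_closedBall_zero_iff] at hy
      rcases hy.lt_or_eq with hlt | heq
      · have hyb : y ∈ ball (0 : Eu n) R := by simpa using hlt
        have hCu := hu.contDiffAt hs' hyb
        have hCv := hv.contDiffAt hs' hyb
        have hb : HasDerivAt (fun s => C0 + ε * (1 + s)) ε s := by
          simpa using (((hasDerivAt_id s).const_add 1).const_mul ε).const_add C0
        obtain ⟨k1, k2⟩ := interior_touch (w := fun y s => u y s - v y s - (C0 + ε * (1 + s))) hyb hs.1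
          ((hCu.sub hCv).sub contDiffAt_const)
          (((hu.pde y hyb s hs').sub (hv.pde y hyb s hs')).sub hb) h0 hle'
        rw [lap_sub (hCu.sub hCv) contDiffAt_const, lap_sub hCu hCv, lap_const] at k1
        have h3 : Real.exp C0 * Real.exp (v y s) ≤ Real.exp (u y s) := by
          rw [← Real.exp_add]; exact Real.exp_le_exp.2 (by linarith)
        have h4 : l1 * Real.exp (v y s) ≤ l2 * Real.exp (u y s) := by
          calc l1 * Real.exp (v y s) ≤ l2 * Real.exp C0 * Real.exp (v y s) :=
                mul_le_mul_of_nonneg_right hCl (Real.exp_pos _).le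
            _ ≤ _ := by rw [mul_assoc]; exact mul_le_mul_of_nonneg_left h3 hl2.le
        linarith
      · have k := boundary_touch hR (w := fun y => u y s - v y s - (C0 + ε * (1 + s))) heq h0
          (fun y hy => hle' y hy s ⟨hs.1.le, le_rfl⟩)
          (((hu.bc y heq s hs').sub (hv.bc y heq s hs')).sub
            (hasDerivAt_const (0:ℝ) (C0 + ε * (1 + s))))
        have : Real.exp (v y s) < Real.exp (u y s) := Real.exp_lt_exp.2 (by linarith)
        linarith)
  have := key () x hx t ⟨ht.1, le_rfl⟩
  have h3 : ε * (1 + t) = u x t - v x t - C0 := by rw [hε]; field_simp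
  simp only [h3] at this
  linarith

lemma lap_bdd (hR : 0 < R) {g : Eu n → ℝ} (hg : ContDiffOn ℝ 2 g (closedBall (0 : Eu n) R)) :
    ∃ F, ∀ x ∈ ball (0 : Eu n) R, |lap g x| ≤ F := by
  have hU : UniqueDiffOn ℝ (closedBall (0 : Eu n) R) :=
    uniqueDiffOn_convex (convex_closedBall _ _) (by
      rw [interior_closedBall _ hR.ne']; exact ⟨0, by simpa using hR⟩)
  obtain ⟨K, hK⟩ := (isCompact_closedBall (0 : Eu n) R).exists_bound_of_continuousOn
    (hg.continuousOn_iteratedFDerivWithin (m := 2) le_rfl hU)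
  refine ⟨∑ i : Fin n, K, fun x hx => ?_⟩
  have hc : ContDiffAt ℝ 2 g x :=
    hg.contDiffAt (Filter.mem_of_superset (isOpen_ball.mem_nhds hx) ball_subset_closedBall)
  unfold lap
  refine (Finset.abs_sum_le_sum_abs _ _).trans (Finset.sum_le_sum fun i _ => ?_)
  rw [slice_eq_fderiv hc]
  have h1 := hK x (ball_subset_closedBall hx)
  rw [iteratedFDerivWithin_eq_iteratedFDeriv hU hc (ball_subset_closedBall hx)] at h1
  refine ((iteratedFDeriv ℝ 2 g x).le_opNorm _).trans ?_
  simpa [Fin.prod_univ_two] using h1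

lemma lip_frozen (hR : 0 < R) (hl1 : 0 < l1) (hl2 : 0 < l2)
    (hu : Half R T l1 u v) (hv : Half R T l2 v u) {a : ℝ} (ha : 0 < a) (h1 : a < T) (h2 : t2 < T) :
    ∃ C, 0 ≤ C ∧ ∀ x ∈ closedBall (0 : Eu n) R, ∀ t ∈ Icc a t2,
      |u x t - u x a| ≤ C * (t - a) ∧ |v x t - v x a| ≤ C * (t - a) := by
  obtain ⟨M, hM⟩ := exists_bound hu hv (max_lt h1 h2)
  obtain ⟨hB0, hB1, hB2, hB3⟩ := coefB_spec hl1 hl2 M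
  obtain ⟨F1, hF1⟩ := lap_bdd hR (hu.c2 a ⟨ha, h1⟩)
  obtain ⟨F2, hF2⟩ := lap_bdd hR (hv.c2 a ⟨ha, h1⟩)
  set F := |F1| + |F2| + coefB l1 l2 M with hF
  have hF0 : 0 ≤ F := by positivity
  have hIa : ∀ x ∈ closedBall (0 : Eu n) R, u x a ≤ M ∧ v x a ≤ M :=
    fun x hx => hM x hx a ⟨ha.le, le_max_left _ _⟩
  have hIt : ∀ x ∈ closedBall (0 : Eu n) R, ∀ t ∈ Ioc a t2, u x (t + 0) ≤ M ∧ v x (t + 0) ≤ M := by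
    intro x hx t ht
    simpa using hM x hx t ⟨(ha.trans ht.1).le, ht.2.trans (le_max_right _ _)⟩
  have hfu : ∀ x ∈ ball (0 : Eu n) R, |lap (fun y => u y a) x + l1 * Real.exp (v x a)| ≤ F := by
    intro x hx
    have h3 := Real.exp_le_exp.2 (hIa x (ball_subset_closedBall hx)).2
    have h4 := mul_le_mul_of_nonneg_left h3 hl1.le
    have h5 := mul_pos hl1 (Real.exp_pos (v x a))
    have := abs_le.1 (hF1 x hx)
    rw [abs_le]
    constructor <;> linarith [le_abs_self F1, abs_nonneg F2, abs_nonneg F1]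
  have hfv : ∀ x ∈ ball (0 : Eu n) R, |lap (fun y => v y a) x + l2 * Real.exp (u x a)| ≤ F := by
    intro x hx
    have h3 := Real.exp_le_exp.2 (hIa x (ball_subset_closedBall hx)).1
    have h4 := mul_le_mul_of_nonneg_left h3 hl2.le
    have h5 := mul_pos hl2 (Real.exp_pos (u x a))
    have := abs_le.1 (hF2 x hx)
    rw [abs_le]
    constructor <;> linarith [le_abs_self F2, abs_nonneg F2, abs_nonneg F1]
  have su := hu.forced_shift (p := 0) (t1 := a) (t2 := t2) (by linarith) (by linarith)
  have sv := hv.forced_shift (p := 0) (t1 := a) (t2 := t2) (by linarith) (by linarith)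
  have fu := hu.forced_frozen (t2 := t2) ha h1
  have fv := hv.forced_frozen (t2 := t2) ha h1
  have A1 := su.linSub (F := F) (e0 := 0) hl1.le fu (fun x hx t ht => (hIt x hx t ht).2)
    (fun x hx t ht => (hIa x hx).2)
    (fun x hx t ht => by have := abs_le.1 (hfu x hx); linarith [this.2]) hB1 hB2 (by simp)
  have A2 := sv.linSub (F := F) (e0 := 0) hl2.le fv (fun x hx t ht => (hIt x hx t ht).1)
    (fun x hx t ht => (hIa x hx).1)
    (fun x hx t ht => by have := abs_le.1 (hfv x hx); linarith [this.2]) hB1 hB3 (by simp)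
  have A3 := fu.linSub (F := F) (e0 := 0) hl1.le su (fun x hx t ht => (hIa x hx).2)
    (fun x hx t ht => (hIt x hx t ht).2)
    (fun x hx t ht => by have := abs_le.1 (hfu x hx); linarith [this.1]) hB1 hB2 (by simp)
  have A4 := fv.linSub (F := F) (e0 := 0) hl2.le sv (fun x hx t ht => (hIa x hx).1)
    (fun x hx t ht => (hIt x hx t ht).1)
    (fun x hx t ht => by have := abs_le.1 (hfv x hx); linarith [this.1]) hB1 hB3 (by simp)
  have hCpos : 0 < linConst n R (coefB l1 l2 M) (t2 - a) := by unfold linConst; positivity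
  refine ⟨F * linConst n R (coefB l1 l2 M) (t2 - a), by positivity, fun x hx t ht => ?_⟩
  have hτ : t - a ≤ t2 - a := by linarith [ht.2]
  have B1 := mp_lin hR hB0 A1 A2 le_rfl hF0 hx ht hτ
  have B2 := mp_lin hR hB0 A2 A1 le_rfl hF0 hx ht hτ
  have B3 := mp_lin hR hB0 A3 A4 le_rfl hF0 hx ht hτ
  have B4 := mp_lin hR hB0 A4 A3 le_rfl hF0 hx ht hτ
  simp only [add_zero, zero_add] at B1 B2 B3 B4
  constructor <;> rw [abs_le] <;> constructor <;> nlinarith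

/-- Solutions are Lipschitz in time, uniformly on the ball, on compact subintervals of `(0, T)`. -/
lemma lip_time (hR : 0 < R) (hl1 : 0 < l1) (hl2 : 0 < l2)
    (hu : Half R T l1 u v) (hv : Half R T l2 v u) {a : ℝ} (ha : 0 < a) (h1 : a < T) (h2 : t2 < T) :
    ∃ C, 0 ≤ C ∧ ∀ x ∈ closedBall (0 : Eu n) R, ∀ s ∈ Icc a t2, ∀ t ∈ Icc a t2, s ≤ t →
      |u x t - u x s| ≤ C * (t - s) ∧ |v x t - v x s| ≤ C * (t - s) := by
  obtain ⟨C, hC0, hC⟩ := lip_frozen hR hl1 hl2 hu hv ha h1 h2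
  obtain ⟨M, hM⟩ := exists_bound hu hv (max_lt h1 h2)
  obtain ⟨hB0, hB1, hB2, hB3⟩ := coefB_spec hl1 hl2 M
  have hCpos : 0 < linConst n R (coefB l1 l2 M) (t2 - a) := by unfold linConst; positivity
  refine ⟨C * linConst n R (coefB l1 l2 M) (t2 - a), by positivity, fun x hx s hs t ht hst => ?_⟩
  set h := t - s with hh
  have hh0 : 0 ≤ h := by linarith
  have hIt : ∀ p, 0 ≤ p → p ≤ h → ∀ x ∈ closedBall (0 : Eu n) R, ∀ r ∈ Ioc a s,
      u x (r + p) ≤ M ∧ v x (r + p) ≤ M := by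
    intro p hp0 hp x hx r hr
    exact hM x hx _ ⟨by linarith [hr.1], (by linarith [hr.2, ht.2] : r + p ≤ t2).trans (le_max_right _ _)⟩
  have su : ∀ p, 0 ≤ p → p ≤ h → Forced R a s l1 (fun x t => u x (t + p)) (fun x t => v x (t + p))
      (fun _ _ => 0) := fun p hp0 hp =>
    hu.forced_shift (by linarith) (by linarith [ht.2])
  have sv : ∀ p, 0 ≤ p → p ≤ h → Forced R a s l2 (fun x t => v x (t + p)) (fun x t => u x (t + p))
      (fun _ _ => 0) := fun p hp0 hp =>
    hv.forced_shift (by linarith) (by linarith [ht.2])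
  have hah : a + h ∈ Icc a t2 := ⟨by linarith, by linarith [hs.1, ht.2]⟩
  have key : ∀ p q, (p = 0 ∧ q = h ∨ p = h ∧ q = 0) →
      u x (s + p) - u x (s + q) ≤ C * h * linConst n R (coefB l1 l2 M) (t2 - a) ∧
      v x (s + p) - v x (s + q) ≤ C * h * linConst n R (coefB l1 l2 M) (t2 - a) := by
    intro p q hpq
    have hp : 0 ≤ p ∧ p ≤ h := by rcases hpq with ⟨rfl, rfl⟩ | ⟨rfl, rfl⟩ <;> simp [hh0]
    have hq : 0 ≤ q ∧ q ≤ h := by rcases hpq with ⟨rfl, rfl⟩ | ⟨rfl, rfl⟩ <;> simp [hh0]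
    have hinit : ∀ x ∈ closedBall (0 : Eu n) R, u x (a + p) - u x (a + q) ≤ C * h ∧
        v x (a + p) - v x (a + q) ≤ C * h := by
      intro x hx
      obtain ⟨k1, k2⟩ := hC x hx (a + h) hah
      have e1 := abs_le.1 k1
      have e2 := abs_le.1 k2
      rw [add_sub_cancel_left] at e1 e2
      rcases hpq with ⟨rfl, rfl⟩ | ⟨rfl, rfl⟩ <;> simp only [add_zero] <;> constructor <;> linarith
    have A1 := (su p hp.1 hp.2).linSub (F := 0) (e0 := C * h) hl1.le (su q hq.1 hq.2)
      (fun x hx r hr => (hIt p hp.1 hp.2 x hx r hr).2) (fun x hx r hr => (hIt q hq.1 hq.2 x hx r hr).2)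
      (by simp) hB1 hB2 (fun x hx => (hinit x hx).1)
    have A2 := (sv p hp.1 hp.2).linSub (F := 0) (e0 := C * h) hl2.le (sv q hq.1 hq.2)
      (fun x hx r hr => (hIt p hp.1 hp.2 x hx r hr).1) (fun x hx r hr => (hIt q hq.1 hq.2 x hx r hr).1)
      (by simp) hB1 hB3 (fun x hx => (hinit x hx).2)
    have hτ : s - a ≤ t2 - a := by linarith [hs.2]
    have hCh : 0 ≤ C * h := by positivity
    have B1 := mp_lin hR hB0 A1 A2 hCh le_rfl hx ⟨hs.1, le_rfl⟩ hτ
    have B2 := mp_lin hR hB0 A2 A1 hCh le_rfl hx ⟨hs.1, le_rfl⟩ hτ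
    simp only [zero_mul, add_zero] at B1 B2
    exact ⟨B1, B2⟩
  obtain ⟨k1, k2⟩ := key h 0 (Or.inr ⟨rfl, rfl⟩)
  obtain ⟨k3, k4⟩ := key 0 h (Or.inl ⟨rfl, rfl⟩)
  have e : s + h = t := by rw [hh]; ring
  simp only [e, add_zero] at k1 k2 k3 k4
  constructor <;> rw [abs_le] <;> constructor <;> linarith

end differences

/-! ### Barriers: growth control and closeness of the two components -/

section barriers

variable {n : ℕ} {R T l1 l2 : ℝ} {u v : Eu n → ℝ → ℝ}

/-- The speed constant in the growth control of `growth_ctrl`. -/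
noncomputable def speedA (n : ℕ) (R l1 l2 : ℝ) : ℝ := 19 + 3 * n / R + 3 * (l1 + l2)

/-- The barrier of `growth_ctrl`. -/
noncomputable def growBar {n : ℕ} (R b k A t1 : ℝ) (x : Eu n) (t : ℝ) : ℝ :=
  b + A * k ^ 2 * (t - t1) + 1 / 2 * Real.exp (3 * k / R * (‖x‖ ^ 2 - R ^ 2))

lemma grow_step (hR : 0 < R) (hl1 : 0 < l1) (hl2 : 0 < l2) (hu : Half R T l1 u v)
    {k t1 t : ℝ} (hk : 1 ≤ k) (h1 : 0 ≤ t1) (ht1 : t1 < t) (htT : t < T)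
    (ht : t - t1 ≤ 1 / (2 * speedA n R l1 l2 * k ^ 2))
    {x : Eu n} (hx : x ∈ closedBall (0 : Eu n) R)
    (h0 : u x t - growBar R (Real.log k) k (speedA n R l1 l2) t1 x t = 0)
    (hle : ∀ y ∈ closedBall (0 : Eu n) R, ∀ s ∈ Icc t1 t,
      u y s - growBar R (Real.log k) k (speedA n R l1 l2) t1 y s ≤ 0)
    (hlev : ∀ y ∈ closedBall (0 : Eu n) R, ∀ s ∈ Icc t1 t,
      v y s - growBar R (Real.log k) k (speedA n R l1 l2) t1 y s ≤ 0) : False := by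
  set A := speedA n R l1 l2 with hA
  set κ := 3 * k / R with hκ
  have hA0 : 0 < A := by rw [hA, speedA]; positivity
  have hk0 : 0 < k := by linarith
  have hκ0 : 0 < κ := by positivity
  have ht' : t ∈ Ioo 0 T := ⟨by linarith, htT⟩
  have hxn : ‖x‖ ≤ R := by simpa using hx
  have hxn2 : ‖x‖ ^ 2 ≤ R ^ 2 := by gcongr
  have hAk : A * k ^ 2 * (t - t1) ≤ 1 / 2 := by
    calc A * k ^ 2 * (t - t1) ≤ A * k ^ 2 * (1 / (2 * A * k ^ 2)) := by gcongr
      _ = 1 / 2 := by field_simp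
  have hexp1 : Real.exp (κ * (‖x‖ ^ 2 - R ^ 2)) ≤ 1 :=
    Real.exp_le_one_iff.2 (mul_nonpos_of_nonneg_of_nonpos hκ0.le (by linarith))
  have hev : Real.exp (v x t) < 3 * k := by
    have h3 := hlev x hx t ⟨ht1.le, le_rfl⟩
    have h4 : v x t ≤ Real.log k + 1 := by
      unfold growBar at h3
      rw [← hκ] at h3
      linarith
    calc Real.exp (v x t) ≤ Real.exp (Real.log k + 1) := Real.exp_le_exp.2 h4
      _ = k * Real.exp 1 := by rw [Real.exp_add, Real.exp_log hk0]
      _ < 3 * k := by have := Real.exp_one_lt_d9; nlinarith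
  set c := Real.log k + A * k ^ 2 * (t - t1) with hc
  have hΦ1 : ∀ q, HasDerivAt (fun q => c + 1 / 2 * Real.exp (κ * (q - R ^ 2)))
      (κ / 2 * Real.exp (κ * (q - R ^ 2))) q := by
    intro q
    have := (((((hasDerivAt_id q).sub_const (R ^ 2)).const_mul κ).exp).const_mul (1 / 2)).const_add c
    refine this.congr_deriv ?_
    simp; ring
  have hΦ2 : ∀ q, HasDerivAt (fun q => κ / 2 * Real.exp (κ * (q - R ^ 2)))
      (κ ^ 2 / 2 * Real.exp (κ * (q - R ^ 2))) q := by
    intro q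
    have := (((((hasDerivAt_id q).sub_const (R ^ 2)).const_mul κ).exp).const_mul (κ / 2))
    refine this.congr_deriv ?_
    simp; ring
  rcases hxn.lt_or_eq with hlt | heq
  · have hxb : x ∈ ball (0 : Eu n) R := by simpa using hlt
    have hC1 : ContDiffAt ℝ 2 (fun y : Eu n => growBar R (Real.log k) k A t1 y t) x :=
      (contDiff_normsq (n := n) (Φ := fun q => c + 1 / 2 * Real.exp (κ * (q - R ^ 2)))
        (by fun_prop)).contDiffAt
    have hbd : HasDerivAt (fun t => growBar R (Real.log k) k A t1 x t) (A * k ^ 2) t := by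
      unfold growBar
      simpa using ((((hasDerivAt_id t).sub_const t1).const_mul (A * k ^ 2)).const_add
        (Real.log k)).add_const (1 / 2 * Real.exp (3 * k / R * (‖x‖ ^ 2 - R ^ 2)))
    obtain ⟨k1, k2⟩ := interior_touch (w := fun y s => u y s - growBar R (Real.log k) k A t1 y s)
      hxb ht1 ((hu.contDiffAt ht' hxb).sub hC1) ((hu.pde x hxb t ht').sub hbd) h0 hle
    rw [lap_sub (hu.contDiffAt ht' hxb) hC1] at k1
    have hl : lap (fun y : Eu n => growBar R (Real.log k) k A t1 y t) x =
        4 * ‖x‖ ^ 2 * (κ ^ 2 / 2 * Real.exp (κ * (‖x‖ ^ 2 - R ^ 2))) +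
          2 * n * (κ / 2 * Real.exp (κ * (‖x‖ ^ 2 - R ^ 2))) := lap_normsq hΦ1 hΦ2 x
    have hl' : lap (fun y : Eu n => growBar R (Real.log k) k A t1 y t) x ≤
        4 * R ^ 2 * (κ ^ 2 / 2 * 1) + 2 * n * (κ / 2 * 1) := by
      rw [hl]; gcongr
    have h6 : 4 * R ^ 2 * (κ ^ 2 / 2 * 1) + 2 * n * (κ / 2 * 1) = 18 * k ^ 2 + 3 * n / R * k := by
      rw [hκ]; field_simp; ring
    have h7 : l1 * Real.exp (v x t) ≤ 3 * l1 * k := by nlinarith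
    have h8 : 3 * n / R * k ≤ 3 * n / R * k ^ 2 := by
      have : k ≤ k ^ 2 := by nlinarith
      gcongr
    have h9 : 3 * l1 * k ≤ 3 * l1 * k ^ 2 := by
      have : k ≤ k ^ 2 := by nlinarith
      gcongr
    have h10 : A * k ^ 2 = 19 * k ^ 2 + 3 * n / R * k ^ 2 + 3 * l1 * k ^ 2 + 3 * l2 * k ^ 2 := by
      rw [hA, speedA]; ring
    have h11 : 0 < l2 * k ^ 2 := by positivity
    nlinarith
  · have hb := normal_normsq hR hΦ1 heq
    have kk := boundary_touch hR (w := fun y => u y t - growBar R (Real.log k) k A t1 y t) heq h0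
      (fun y hy => hle y hy t ⟨ht1.le, le_rfl⟩) ((hu.bc x heq t ht').sub hb)
    have : 2 * R * (κ / 2 * Real.exp (κ * (R ^ 2 - R ^ 2))) = 3 * k := by
      rw [hκ]; simp; field_simp
    rw [this] at kk
    linarith

/-- If `e^{max(u,v)} ≤ k` at some time, then `max(u,v)` grows by at most `1` during a time
of order `k⁻²`. -/
lemma growth_ctrl (hR : 0 < R) (hl1 : 0 < l1) (hl2 : 0 < l2) (hu : Half R T l1 u v)
    (hv : Half R T l2 v u) {k t1 t : ℝ} (hk : 1 ≤ k) (h1 : 0 ≤ t1) (ht1 : t1 ≤ t) (htT : t < T)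
    (ht : t - t1 ≤ 1 / (2 * speedA n R l1 l2 * k ^ 2))
    (hi : ∀ x ∈ closedBall (0 : Eu n) R, u x t1 ≤ Real.log k ∧ v x t1 ≤ Real.log k)
    {x : Eu n} (hx : x ∈ closedBall (0 : Eu n) R) : u x t ≤ Real.log k + 1 := by
  set A := speedA n R l1 l2 with hA
  have hA0 : 0 < A := by rw [hA, speedA]; positivity
  have hA' : speedA n R l2 l1 = A := by rw [hA, speedA, speedA]; ring
  have hk0 : 0 < k := by linarith
  have hbc : Continuous (fun p : Eu n × ℝ => growBar R (Real.log k) k A t1 p.1 p.2) := by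
    unfold growBar; fun_prop
  have hb0 : ∀ y : Eu n, Real.log k < growBar R (Real.log k) k A t1 y t1 := by
    intro y
    unfold growBar
    have := Real.exp_pos (3 * k / R * (‖y‖ ^ 2 - R ^ 2))
    simp only [sub_self, mul_zero, add_zero]
    linarith
  have key := touch (isCompact_closedBall (0 : Eu n) R) (t1 := t1) (t2 := t)
    (fun (b : Bool) y s => (if b then u y s else v y s) - growBar R (Real.log k) k A t1 y s)
    (by
      rintro (_ | _)
      · exact (hv.cont_Icc h1 htT).sub hbc.continuousOn
      · exact (hu.cont_Icc h1 htT).sub hbc.continuousOn)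
    (by
      rintro (_ | _) y hy
      · have := (hi y hy).2; have := hb0 y; simp; linarith
      · have := (hi y hy).1; have := hb0 y; simp; linarith)
    (by
      rintro (_ | _) y hy s hs h0 hle
      · exact grow_step hR hl2 hl1 hv hk h1 hs.1 (hs.2.trans_lt htT)
          (by rw [hA']; linarith [hs.2]) hy (by rw [hA']; simpa using h0)
          (by rw [hA']; simpa using hle false) (by rw [hA']; simpa using hle true)
      · exact grow_step hR hl1 hl2 hu hk h1 hs.1 (hs.2.trans_lt htT)
          (by rw [← hA]; linarith [hs.2]) hy (by simpa using h0)
          (by simpa using hle true) (by simpa using hle false))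
  have h2 := key true x hx t ⟨ht1, le_rfl⟩
  simp only [if_true] at h2
  have hxn : ‖x‖ ≤ R := by simpa using hx
  have hxn2 : ‖x‖ ^ 2 ≤ R ^ 2 := by gcongr
  have hAk : A * k ^ 2 * (t - t1) ≤ 1 / 2 := by
    calc A * k ^ 2 * (t - t1) ≤ A * k ^ 2 * (1 / (2 * A * k ^ 2)) := by gcongr
      _ = 1 / 2 := by field_simp
  have hexp1 : Real.exp (3 * k / R * (‖x‖ ^ 2 - R ^ 2)) ≤ 1 :=
    Real.exp_le_one_iff.2 (mul_nonpos_of_nonneg_of_nonpos (by positivity) (by linarith))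
  unfold growBar at h2
  linarith

/-- Self-similar barrier for `u - v`, in terms of `ρ = (τ - t)^{-1/2}`, an amplitude `P`, and the
smooth boundary distance `y = (R² - |x|²)/(2R)`. -/
noncomputable def simBar {n : ℕ} (R a P ρ : ℝ) (x : Eu n) : ℝ :=
  P * (1 + a * (ρ * ((R ^ 2 - ‖x‖ ^ 2) / (2 * R)))
    - a / 10 * (ρ * ((R ^ 2 - ‖x‖ ^ 2) / (2 * R))) ^ 2
    + a / 24 * (ρ * ((R ^ 2 - ‖x‖ ^ 2) / (2 * R))) ^ 3)

/-- The cubic profile is a strict supersolution in the similarity variable `ξ`; `μ` is the factor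
`|x|²/R²` in front of the second derivative. -/
lemma cubic_ineq {a ξ μ : ℝ} (ha : 0 < a) (ha2 : a ≤ 1 / 2) (hξ : 0 ≤ ξ)
    (hμ1 : μ ≤ 1) (hμ : ξ ≤ 4 / 5 → 19 / 25 ≤ μ) :
    a / 20 ≤ -(a / 10) * (1 + a * ξ - a / 10 * ξ ^ 2 + a / 24 * ξ ^ 3)
      + 1 / 2 * ξ * (a - a / 5 * ξ + a / 8 * ξ ^ 2) - μ * (-(a / 5) + a / 4 * ξ) := by
  have hfac : 1 / 20 ≤ -(1 / 10) * (1 + a * ξ - a / 10 * ξ ^ 2 + a / 24 * ξ ^ 3)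
      + 1 / 2 * ξ * (1 - 1 / 5 * ξ + 1 / 8 * ξ ^ 2) - μ * (-(1 / 5) + 1 / 4 * ξ) := by
    have hx3 : 0 ≤ ξ ^ 3 := by positivity
    have hx2 : 0 ≤ ξ ^ 2 := by positivity
    have e1 : a * ξ ≤ 1 / 2 * ξ := by gcongr
    have e2 : 0 ≤ a * ξ ^ 2 := by positivity
    have e3 : a * ξ ^ 3 ≤ 1 / 2 * ξ ^ 3 := by gcongr
    rcases le_total ξ (4 / 5) with h | h
    · have h1 : μ * (-(1 / 5) + 1 / 4 * ξ) ≤ 19 / 25 * (-(1 / 5) + 1 / 4 * ξ) := by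
        have := hμ h
        nlinarith
      nlinarith
    · have h1 : μ * (-(1 / 5) + 1 / 4 * ξ) ≤ -(1 / 5) + 1 / 4 * ξ := by nlinarith
      nlinarith [sq_nonneg (ξ - 5 / 6), mul_nonneg hξ (sq_nonneg (ξ - 5 / 6))]
  have := mul_le_mul_of_nonneg_left hfac ha.le
  calc a / 20 = a * (1 / 20) := by ring
    _ ≤ _ := this
    _ = _ := by ring

set_option maxHeartbeats 1000000 in
/-- Decay of `u - v` at the boundary, by comparison with `simBar`. The damping comes from the flux
`e^v - e^u` at a boundary point where `u > v`. -/
lemma w_barrier (hR : 0 < R) (hl2 : 0 < l2) (hu : Half R T l1 u v) (hv : Half R T l2 v u)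
    {a A τ ts te C0 S : ℝ} (ha : 0 < a) (ha2 : a ≤ 1 / 2) (hA : 0 < A) (hts : 0 ≤ ts)
    (hte : te < T) (hteτ : te < τ) (hτR : √(τ - ts) ≤ 3 / 20 * R)
    (hi : ∀ x ∈ closedBall (0 : Eu n) R, u x ts - v x ts ≤ C0)
    (hAC : C0 < A * (τ - ts) ^ (a / 10))
    (hsrc : ∀ x ∈ closedBall (0 : Eu n) R, ∀ t ∈ Icc ts te, l1 * Real.exp (v x t) ≤ S)
    (hS : ∀ t ∈ Icc ts te, S < a / 20 * (A * (τ - t) ^ (a / 10)) / (τ - t))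
    (hflux : ∀ x : Eu n, ‖x‖ = R → ∀ t ∈ Icc ts te, a / √(τ - t) < Real.exp (v x t))
    {x : Eu n} (hx : ‖x‖ = R) {t : ℝ} (ht : t ∈ Icc ts te) :
    u x t - v x t < A * (τ - t) ^ (a / 10) := by
  set γ := a / 10 with hγ
  set P : ℝ → ℝ := fun t => A * (τ - t) ^ γ with hP
  set ρ : ℝ → ℝ := fun t => (√(τ - t))⁻¹ with hρ
  have hPpos : ∀ t, t ≤ te → 0 < P t := fun t ht => by
    have : 0 < τ - t := by linarith
    simp only [hP]; positivity
  have hρpos : ∀ t, t ≤ te → 0 < ρ t := fun t ht => by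
    have : 0 < τ - t := by linarith
    simp only [hρ]; positivity
  have hρ2 : ∀ t, t ≤ te → ρ t ^ 2 = (τ - t)⁻¹ := fun t ht => by
    have : 0 < τ - t := by linarith
    simp only [hρ]; rw [inv_pow, Real.sq_sqrt this.le]
  have hcst : ∀ t, HasDerivAt (fun t => τ - t) (-1) t := fun t => by
    simpa using (hasDerivAt_id t).const_sub τ
  have hPd : ∀ t, t ≤ te → HasDerivAt P (-γ * P t * ρ t ^ 2) t := by
    intro t ht
    have h0 : 0 < τ - t := by linarith
    have := ((hcst t).rpow_const (p := γ) (Or.inl h0.ne')).const_mul A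
    refine this.congr_deriv ?_
    rw [hρ2 t ht, Real.rpow_sub_one h0.ne']
    simp only [hP]
    field_simp
  have hρd : ∀ t, t ≤ te → HasDerivAt ρ (1 / 2 * ρ t ^ 3) t := by
    intro t ht
    have h0 : 0 < τ - t := by linarith
    have hsq : √(τ - t) ≠ 0 := (Real.sqrt_pos.2 h0).ne'
    have := ((hcst t).sqrt h0.ne').fun_inv hsq
    refine this.congr_deriv ?_
    simp only [hρ]
    field_simp
  -- boundary distance
  set yy : Eu n → ℝ := fun x => (R ^ 2 - ‖x‖ ^ 2) / (2 * R) with hyy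
  have hyy0 : ∀ x ∈ closedBall (0 : Eu n) R, 0 ≤ yy x := by
    intro x hx
    have hxn : ‖x‖ ≤ R := by simpa using hx
    have hxn2 : ‖x‖ ^ 2 ≤ R ^ 2 := by gcongr
    exact div_nonneg (by linarith) (by linarith)
  have hge : ∀ x ∈ closedBall (0 : Eu n) R, ∀ t, t ≤ te → P t ≤ simBar R a (P t) (ρ t) x := by
    intro x hx t ht
    have hξ : 0 ≤ ρ t * yy x := mul_nonneg (hρpos t ht).le (hyy0 x hx)
    unfold simBar
    simp only [hyy] at hξ
    set ξ := ρ t * ((R ^ 2 - ‖x‖ ^ 2) / (2 * R)) with hξd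
    have : 0 ≤ a * ξ - a / 10 * ξ ^ 2 + a / 24 * ξ ^ 3 := by
      have h1 : 0 ≤ 1 - 1 / 10 * ξ + 1 / 24 * ξ ^ 2 := by nlinarith [sq_nonneg (ξ - 1)]
      have h2 : 0 ≤ a * ξ := by positivity
      calc 0 ≤ a * ξ * (1 - 1 / 10 * ξ + 1 / 24 * ξ ^ 2) := mul_nonneg h2 h1
        _ = _ := by ring
    nlinarith [hPpos t ht]
  have hcontP : ContinuousOn P (Icc ts te) := fun t ht => (hPd t ht.2).continuousAt.continuousWithinAt
  have hcontρ : ContinuousOn ρ (Icc ts te) := fun t ht => (hρd t ht.2).continuousAt.continuousWithinAt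
  have hcB : ContinuousOn (fun p : Eu n × ℝ => simBar R a (P p.2) (ρ p.2) p.1)
      (closedBall (0 : Eu n) R ×ˢ Icc ts te) := by
    have c1 : ContinuousOn (fun p : Eu n × ℝ => P p.2) (closedBall (0 : Eu n) R ×ˢ Icc ts te) :=
      hcontP.comp continuousOn_snd fun p hp => hp.2
    have c2 : ContinuousOn (fun p : Eu n × ℝ => ρ p.2) (closedBall (0 : Eu n) R ×ˢ Icc ts te) :=
      hcontρ.comp continuousOn_snd fun p hp => hp.2
    have c3 : ContinuousOn (fun p : Eu n × ℝ => (R ^ 2 - ‖p.1‖ ^ 2) / (2 * R))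
        (closedBall (0 : Eu n) R ×ˢ Icc ts te) := by fun_prop
    have c4 := c2.mul c3
    unfold simBar
    exact c1.mul (((continuousOn_const.add (continuousOn_const.mul c4)).sub
      (continuousOn_const.mul (c4.pow 2))).add (continuousOn_const.mul (c4.pow 3)))
  have key := touch (isCompact_closedBall (0 : Eu n) R) (t1 := ts) (t2 := te)
    (fun (_ : Unit) y s => u y s - v y s - simBar R a (P s) (ρ s) y)
    (fun _ => ((hu.cont_Icc hts hte).sub (hv.cont_Icc hts hte)).sub hcB)
    (fun _ y hy => by
      have h1 := hi y hy
      have h2 := hge y hy ts (ht.1.trans ht.2)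
      simp only [hP] at h2
      simp only [hP]
      linarith)
    (by
      intro _ y hy s hs h0 hle
      have hs' : s ∈ Ioo 0 T := ⟨by linarith [hs.1], hs.2.trans_lt hte⟩
      have hle' := hle ()
      have hsI : s ∈ Icc ts te := ⟨hs.1.le, hs.2⟩
      have hPs := hPpos s hs.2
      have hρs := hρpos s hs.2
      have hyy' := hyy0 y hy
      have hyn : ‖y‖ ≤ R := by simpa using hy
      have hΦ1 : ∀ q, HasDerivAt (fun q => P s * (1 + a * (ρ s * ((R ^ 2 - q) / (2 * R)))
          - a / 10 * (ρ s * ((R ^ 2 - q) / (2 * R))) ^ 2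
          + a / 24 * (ρ s * ((R ^ 2 - q) / (2 * R))) ^ 3))
          (-(1 / (2 * R)) * (P s * ρ s) * (a - a / 5 * (ρ s * ((R ^ 2 - q) / (2 * R)))
          + a / 8 * (ρ s * ((R ^ 2 - q) / (2 * R))) ^ 2)) q := by
        intro q
        have hξ : HasDerivAt (fun q => ρ s * ((R ^ 2 - q) / (2 * R))) (ρ s * (-1 / (2 * R))) q :=
          (((hasDerivAt_id q).const_sub (R ^ 2)).div_const (2 * R)).const_mul (ρ s)
        have := ((((hξ.const_mul a).const_add 1).sub ((hξ.fun_pow 2).const_mul (a / 10))).add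
          ((hξ.fun_pow 3).const_mul (a / 24))).const_mul (P s)
        refine this.congr_deriv ?_
        push_cast
        field_simp
        ring
      have hΦ2 : ∀ q, HasDerivAt (fun q => -(1 / (2 * R)) * (P s * ρ s) *
          (a - a / 5 * (ρ s * ((R ^ 2 - q) / (2 * R)))
          + a / 8 * (ρ s * ((R ^ 2 - q) / (2 * R))) ^ 2))
          ((1 / (4 * R ^ 2)) * (P s * ρ s ^ 2) * (-(a / 5) + a / 4 * (ρ s * ((R ^ 2 - q) / (2 * R)))))
          q := by
        intro q
        have hξ : HasDerivAt (fun q => ρ s * ((R ^ 2 - q) / (2 * R))) (ρ s * (-1 / (2 * R))) q :=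
          (((hasDerivAt_id q).const_sub (R ^ 2)).div_const (2 * R)).const_mul (ρ s)
        have := (((hξ.const_mul (a / 5)).const_sub a).add
          ((hξ.fun_pow 2).const_mul (a / 8))).const_mul (-(1 / (2 * R)) * (P s * ρ s))
        refine this.congr_deriv ?_
        push_cast
        field_simp
        ring
      rcases hyn.lt_or_eq with hlt | heq
      · have hyb : y ∈ ball (0 : Eu n) R := by simpa using hlt
        have hCu := hu.contDiffAt hs' hyb
        have hCv := hv.contDiffAt hs' hyb
        have hC1 : ContDiffAt ℝ 2 (fun y : Eu n => simBar R a (P s) (ρ s) y) y :=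
          (contDiff_normsq (n := n) (Φ := fun q => P s * (1 + a * (ρ s * ((R ^ 2 - q) / (2 * R)))
          - a / 10 * (ρ s * ((R ^ 2 - q) / (2 * R))) ^ 2
          + a / 24 * (ρ s * ((R ^ 2 - q) / (2 * R))) ^ 3)) (by fun_prop)).contDiffAt
        set ξ := ρ s * yy y with hξd
        have hξ0 : 0 ≤ ξ := mul_nonneg hρs.le hyy'
        have hbd : HasDerivAt (fun s => simBar R a (P s) (ρ s) y)
            (P s * ρ s ^ 2 * (-γ * (1 + a * ξ - a / 10 * ξ ^ 2 + a / 24 * ξ ^ 3)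
              + 1 / 2 * ξ * (a - a / 5 * ξ + a / 8 * ξ ^ 2))) s := by
          unfold simBar
          have hξt : HasDerivAt (fun s => ρ s * ((R ^ 2 - ‖y‖ ^ 2) / (2 * R)))
              (1 / 2 * ρ s ^ 3 * ((R ^ 2 - ‖y‖ ^ 2) / (2 * R))) s := (hρd s hs.2).mul_const _
          have := (hPd s hs.2).fun_mul ((((hξt.const_mul a).const_add 1).fun_sub
            ((hξt.fun_pow 2).const_mul (a / 10))).fun_add ((hξt.fun_pow 3).const_mul (a / 24)))
          refine this.congr_deriv ?_
          simp only [hξd, hyy]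
          push_cast
          ring
        obtain ⟨k1, k2⟩ := interior_touch (w := fun y s => u y s - v y s - simBar R a (P s) (ρ s) y)
          hyb hs.1 ((hCu.sub hCv).sub hC1)
          (((hu.pde y hyb s hs').sub (hv.pde y hyb s hs')).sub hbd) h0 hle'
        rw [lap_sub (hCu.sub hCv) hC1, lap_sub hCu hCv] at k1
        have hl : lap (fun y : Eu n => simBar R a (P s) (ρ s) y) y =
            P s * ρ s ^ 2 * (‖y‖ ^ 2 / R ^ 2 * (-(a / 5) + a / 4 * ξ))
            - n / R * (P s * ρ s) * (a - a / 5 * ξ + a / 8 * ξ ^ 2) := by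
          refine (lap_normsq hΦ1 hΦ2 y).trans ?_
          simp only [hξd, hyy]
          field_simp
          ring
        have hF1 : 0 ≤ a - a / 5 * ξ + a / 8 * ξ ^ 2 := by
          have h1 : 0 ≤ 1 - 1 / 5 * ξ + 1 / 8 * ξ ^ 2 := by nlinarith [sq_nonneg (ξ - 4 / 5)]
          calc 0 ≤ a * (1 - 1 / 5 * ξ + 1 / 8 * ξ ^ 2) := mul_nonneg ha.le h1
            _ = _ := by ring
        have hdrift : 0 ≤ n / R * (P s * ρ s) * (a - a / 5 * ξ + a / 8 * ξ ^ 2) := by positivity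
        have hσ0 : 0 < τ - s := by linarith [hs.2]
        have hμ : ξ ≤ 4 / 5 → 19 / 25 ≤ ‖y‖ ^ 2 / R ^ 2 := by
          intro h
          have h1 : √(τ - s) ≤ 3 / 20 * R :=
            (Real.sqrt_le_sqrt (by linarith [hs.1])).trans hτR
          have h2 : yy y ≤ 4 / 5 * √(τ - s) := by
            have : ξ = yy y / √(τ - s) := by simp only [hξd, hρ]; ring
            rw [this, div_le_iff₀ (Real.sqrt_pos.2 hσ0)] at h
            exact h
          have h3 : yy y ≤ 3 / 25 * R := by linarith
          simp only [hyy] at h3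
          rw [div_le_iff₀ (by linarith)] at h3
          rw [le_div_iff₀ (by positivity)]
          nlinarith
        have hcub := cubic_ineq (μ := ‖y‖ ^ 2 / R ^ 2) ha ha2 hξ0
          (by rw [div_le_one (by positivity)]; gcongr) hμ
        have hPρ : 0 < P s * ρ s ^ 2 := by positivity
        have hcub' := mul_le_mul_of_nonneg_left hcub hPρ.le
        have hSs := hS s hsI
        have hSs' : S < P s * ρ s ^ 2 * (a / 20) := by
          rw [hρ2 s hs.2]
          simp only [hP]
          calc S < _ := hSs
            _ = _ := by field_simp
        have hsr := hsrc y hy s hsI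
        have hpu : 0 < l2 * Real.exp (u y s) := by positivity
        rw [hl] at k1
        simp only [hγ] at k2
        generalize ‖y‖ ^ 2 / R ^ 2 * (-(a / 5) + a / 4 * ξ) = X1 at *
        generalize 1 / 2 * ξ * (a - a / 5 * ξ + a / 8 * ξ ^ 2) = X2 at *
        generalize 1 + a * ξ - a / 10 * ξ ^ 2 + a / 24 * ξ ^ 3 = X3 at *
        generalize ↑n / R * (P s * ρ s) * (a - a / 5 * ξ + a / 8 * ξ ^ 2) = X4 at *
        linarith
      · have hb := normal_normsq hR hΦ1 heq
        have kk := boundary_touch hR (w := fun y => u y s - v y s - simBar R a (P s) (ρ s) y) heq h0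
          (fun y hy => hle' y hy s ⟨hs.1.le, le_rfl⟩)
          (((hu.bc y heq s hs').sub (hv.bc y heq s hs')).sub hb)
        have hWP : u y s - v y s = P s := by
          have : simBar R a (P s) (ρ s) y = P s := by unfold simBar; rw [heq]; simp
          rw [this] at h0; linarith
        have h5 : 2 * R * (-(1 / (2 * R)) * (P s * ρ s) * (a - a / 5 * (ρ s * ((R ^ 2 - R ^ 2) / (2 * R)))
          + a / 8 * (ρ s * ((R ^ 2 - R ^ 2) / (2 * R))) ^ 2)) = - (P s * (a * ρ s)) := by
          simp; field_simp
        rw [h5] at kk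
        have hfl := hflux y heq s hsI
        have h6 : Real.exp (v y s) * (1 + P s) ≤ Real.exp (u y s) := by
          have : u y s = v y s + P s := by linarith
          rw [this, Real.exp_add]
          gcongr
          linarith [Real.add_one_le_exp (P s)]
        have h7 : a * ρ s < Real.exp (v y s) := by simpa [hρ, div_eq_mul_inv] using hfl
        nlinarith)
  have h1 := key () x (by simp [hx]) t ht
  have h2 : simBar R a (P t) (ρ t) x = P t := by unfold simBar; rw [hx]; simp
  simp only [h2] at h1
  linarith

end barriers

/-! ### Times of maximal boundary value, and closeness of `u` and `v` there -/

section peak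

variable {n : ℕ} {R T l1 l2 : ℝ} {u v : Eu n → ℝ → ℝ}

/-- `K` is the largest value of `e^u` and `e^v` up to time `t0 ≥ T/2`, and it is attained at time
`t0` at the boundary point `x0`. -/
structure Peak {n : ℕ} (R T : ℝ) (u v : Eu n → ℝ → ℝ) (x0 : Eu n) (t0 K : ℝ) : Prop where
  norm_eq : ‖x0‖ = R
  half_le : T / 2 ≤ t0
  lt : t0 < T
  le : ∀ x ∈ closedBall (0 : Eu n) R, ∀ t ∈ Icc 0 t0, Real.exp (u x t) ≤ K ∧ Real.exp (v x t) ≤ K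
  eq : Real.exp (u x0 t0) = K ∨ Real.exp (v x0 t0) = K

lemma Peak.symm {x0 : Eu n} {t0 K : ℝ} (h : Peak R T u v x0 t0 K) : Peak R T v u x0 t0 K :=
  ⟨h.norm_eq, h.half_le, h.lt, fun x hx t ht => (h.le x hx t ht).symm, h.eq.symm⟩

lemma speedA_pos (hR : 0 < R) (hl1 : 0 < l1) (hl2 : 0 < l2) : 0 < speedA n R l1 l2 := by
  unfold speedA; positivity

/-- Before a peak the boundary values cannot be too small, since they grow at most at the rate
of `growth_ctrl`. -/
lemma Peak.lower (hR : 0 < R) (hl1 : 0 < l1) (hl2 : 0 < l2) (hT : 0 < T) (hu : Half R T l1 u v)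
    (hv : Half R T l2 v u) {x0 : Eu n} {t0 K c3 : ℝ} (h : Peak R T u v x0 t0 K)
    (hc0 : 0 < c3) (hc1 : c3 ≤ Real.exp (-1)) (hc2 : c3 ^ 2 ≤ 1 / (2 * speedA n R l1 l2))
    {t : ℝ} (ht : t ∈ Icc 0 t0) :
    c3 / √(t0 - t + 1 / K ^ 2) ≤ max (Real.exp (u x0 t)) (Real.exp (v x0 t)) := by
  have hA := speedA_pos (n := n) hR hl1 hl2
  have htT : t ∈ Ico 0 T := ⟨ht.1, ht.2.trans_lt h.lt⟩
  have hx0 : x0 ∈ closedBall (0 : Eu n) R := by simp [h.norm_eq]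
  have ht00 : t0 ∈ Icc 0 t0 := ⟨by linarith [h.half_le], le_rfl⟩
  have hKpos : 0 < K := (Real.exp_pos _).trans_le (h.le x0 hx0 t0 ht00).1
  set k := max (Real.exp (u x0 t)) (Real.exp (v x0 t)) with hk
  have hk1 : 1 ≤ k := le_max_of_le_left (Real.one_le_exp (hu.nonneg hR hl1 hx0 htT))
  have hk0 : 0 < k := by linarith
  have hσ : 0 < t0 - t + 1 / K ^ 2 := by
    have : 0 < 1 / K ^ 2 := by positivity
    linarith [ht.2]
  rw [div_le_iff₀ (Real.sqrt_pos.2 hσ)]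
  have hi : ∀ x ∈ closedBall (0 : Eu n) R, u x t ≤ Real.log k ∧ v x t ≤ Real.log k := by
    intro x hx
    have hxn : ‖x‖ ≤ ‖x0‖ := by rw [h.norm_eq]; simpa using hx
    constructor
    · exact (radial_mono hR hl1 hl2 hu hv hx0 hxn htT).trans
        ((Real.le_log_iff_exp_le hk0).2 (le_max_left _ _))
    · exact (radial_mono hR hl2 hl1 hv hu hx0 hxn htT).trans
        ((Real.le_log_iff_exp_le hk0).2 (le_max_right _ _))
  by_cases hc : t0 - t ≤ 1 / (2 * speedA n R l1 l2 * k ^ 2)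
  · have h1 := growth_ctrl hR hl1 hl2 hu hv hk1 ht.1 ht.2 h.lt hc hi hx0
    have h2 := growth_ctrl hR hl2 hl1 hv hu hk1 ht.1 ht.2 h.lt
      (by rw [show speedA n R l2 l1 = speedA n R l1 l2 by unfold speedA; ring]; exact hc)
      (fun x hx => (hi x hx).symm) hx0
    have h3 : K ≤ k * Real.exp 1 := by
      have e : Real.exp (Real.log k + 1) = k * Real.exp 1 := by rw [Real.exp_add, Real.exp_log hk0]
      rcases h.eq with h' | h' <;> rw [← h', ← e] <;> exact Real.exp_le_exp.2 (by assumption)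
    have h4 : 1 / K ≤ √(t0 - t + 1 / K ^ 2) := by
      apply Real.le_sqrt_of_sq_le
      rw [one_div_pow]; linarith [ht.2]
    calc c3 ≤ Real.exp (-1) := hc1
      _ = K * Real.exp (-1) * (1 / K) := by field_simp
      _ ≤ (k * Real.exp 1) * Real.exp (-1) * (1 / K) := by gcongr
      _ = k * (1 / K) := by rw [mul_assoc k, ← Real.exp_add]; simp
      _ ≤ _ := by gcongr
  · push Not at hc
    refine (pow_le_pow_iff_left₀ hc0.le (by positivity) two_ne_zero).1 ?_
    rw [mul_pow, Real.sq_sqrt hσ.le]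
    calc c3 ^ 2 ≤ 1 / (2 * speedA n R l1 l2) := hc2
      _ = k ^ 2 * (1 / (2 * speedA n R l1 l2 * k ^ 2)) := by field_simp
      _ ≤ _ := by
        have : 0 < 1 / K ^ 2 := by positivity
        gcongr; linarith

/-- One-sided closeness at a peak; the constants do not depend on the peak. -/
lemma Peak.diff_le (hR : 0 < R) (hl1 : 0 < l1) (hl2 : 0 < l2) (hT : 0 < T) (hu : Half R T l1 u v)
    (hv : Half R T l2 v u) : ∃ γ > (0 : ℝ), ∃ D ≥ (0 : ℝ), ∃ K0 : ℝ, ∀ x0 : Eu n, ∀ t0 K, K0 ≤ K →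
      Peak R T u v x0 t0 K → u x0 t0 - v x0 t0 ≤ D * K ^ (-γ) := by
  have hA := speedA_pos (n := n) hR hl1 hl2
  obtain ⟨M, hM⟩ := exists_bound hu hv hT
  -- a bound for `|u - v|` valid for all times
  obtain ⟨C0, hC0, hCb⟩ : ∃ C0, 0 ≤ C0 ∧ ∀ x ∈ closedBall (0 : Eu n) R, ∀ t ∈ Ico 0 T,
      u x t - v x t ≤ C0 ∧ v x t - u x t ≤ C0 := by
    refine ⟨max |M| (max |Real.log (l1 / l2)| |Real.log (l2 / l1)|), by positivity, ?_⟩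
    set C0 := max |M| (max |Real.log (l1 / l2)| |Real.log (l2 / l1)|) with hC
    have q1 : l1 ≤ l2 * Real.exp C0 := by
      have : Real.log (l1 / l2) ≤ C0 := (le_abs_self _).trans (by simp [hC])
      rw [Real.log_le_iff_le_exp (by positivity), div_le_iff₀ hl2] at this
      linarith
    have q2 : l2 ≤ l1 * Real.exp C0 := by
      have : Real.log (l2 / l1) ≤ C0 := (le_abs_self _).trans (by simp [hC])
      rw [Real.log_le_iff_le_exp (by positivity), div_le_iff₀ hl1] at this
      linarith
    have q3 : M ≤ C0 := (le_abs_self _).trans (by simp [hC])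
    intro x hx t ht
    exact ⟨diff_bound hR hl2 hu hv (by positivity) q1 (fun y hy => by
        have := (hM y hy 0 ⟨le_rfl, le_rfl⟩).1; have := hv.nonneg0 y hy; linarith) hx ht,
      diff_bound hR hl1 hv hu (by positivity) q2 (fun y hy => by
        have := (hM y hy 0 ⟨le_rfl, le_rfl⟩).2; have := hu.nonneg0 y hy; linarith) hx ht⟩
  set c3 : ℝ := min (Real.exp (-1)) √(1 / (2 * speedA n R l1 l2)) with hc3
  have hc30 : 0 < c3 := lt_min (Real.exp_pos _) (Real.sqrt_pos.2 (by positivity))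
  have hc31 : c3 ≤ Real.exp (-1) := min_le_left _ _
  have hc32 : c3 ^ 2 ≤ 1 / (2 * speedA n R l1 l2) := by
    calc c3 ^ 2 ≤ √(1 / (2 * speedA n R l1 l2)) ^ 2 := by gcongr; exact min_le_right _ _
      _ = _ := Real.sq_sqrt (by positivity)
  set a : ℝ := min (1 / 2) (c3 * Real.exp (-C0) / 2) with ha
  have ha0 : 0 < a := lt_min (by norm_num) (by positivity)
  have ha2 : a ≤ 1 / 2 := min_le_left _ _
  have hac : a < c3 * Real.exp (-C0) := by
    have h1 : a ≤ c3 * Real.exp (-C0) / 2 := min_le_right _ _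
    have h2 : 0 < c3 * Real.exp (-C0) := by positivity
    linarith
  set c' : ℝ := a / (40 * (l1 + l2)) with hc'
  have hc'0 : 0 < c' := by positivity
  refine ⟨a / 10, by positivity, (C0 + 1) * c' ^ (-(a / 10)), by positivity,
    max (max 1 (4 * c' / T)) (max (c' / (3 / 20 * R) ^ 2) (2 / c')), fun x0 t0 K hK h => ?_⟩
  have hK1 : 1 ≤ K := ((le_max_left _ _).trans (le_max_left _ _)).trans hK
  have hK2 : 4 * c' / T ≤ K := ((le_max_right _ _).trans (le_max_left _ _)).trans hK
  have hK3 : c' / (3 / 20 * R) ^ 2 ≤ K := ((le_max_left _ _).trans (le_max_right _ _)).trans hK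
  have hK4 : 2 / c' ≤ K := ((le_max_right _ _).trans (le_max_right _ _)).trans hK
  have hKpos : 0 < K := by linarith
  have hKK : 0 < 1 / K ^ 2 := by positivity
  set τ := t0 + 1 / K ^ 2 with hτ
  set σ := c' / K with hσ
  have hσ0 : 0 < σ := by positivity
  have hσ1 : 1 / K ^ 2 ≤ σ := by
    rw [div_le_iff₀ hc'0] at hK4
    rw [hσ, div_le_div_iff₀ (by positivity) hKpos]
    nlinarith
  have hσT : σ ≤ T / 4 := by
    rw [div_le_iff₀ hT] at hK2
    rw [hσ, div_le_iff₀ hKpos]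
    linarith
  have ht0T := h.half_le
  have hx0 : x0 ∈ closedBall (0 : Eu n) R := by simp [h.norm_eq]
  have key := w_barrier hR hl2 hu hv (a := a) (A := (C0 + 1) * σ ^ (-(a / 10))) (τ := τ)
    (ts := τ - σ) (te := t0) (C0 := C0) (S := l1 * K) ha0 ha2 (by positivity) (by linarith)
    h.lt (by linarith)
    (by
      rw [sub_sub_cancel]
      apply Real.sqrt_le_left (by positivity) |>.2
      rw [div_le_iff₀ (by positivity)] at hK3
      rw [hσ, div_le_iff₀ hKpos]
      linarith)
    (fun x hx => (hCb x hx _ ⟨by linarith, by linarith [h.lt]⟩).1)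
    (by
      rw [sub_sub_cancel, mul_assoc, ← Real.rpow_add hσ0]
      simp)
    (fun x hx t ht => by
      have := (h.le x hx t ⟨by linarith [ht.1], ht.2⟩).2
      gcongr)
    (fun t ht => by
      have hd0 : 0 < τ - t := by linarith [ht.2]
      have hd1 : (τ - t) / σ ≤ 1 := by
        rw [div_le_one hσ0]; linarith [ht.1]
      have e1 : σ ^ (-(a / 10)) * (τ - t) ^ (a / 10) = ((τ - t) / σ) ^ (a / 10) := by
        rw [Real.div_rpow hd0.le hσ0.le, Real.rpow_neg hσ0.le]; field_simp
      have e2 : (τ - t) / σ ≤ ((τ - t) / σ) ^ (a / 10) := by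
        conv_lhs => rw [← Real.rpow_one ((τ - t) / σ)]
        exact Real.rpow_le_rpow_of_exponent_ge (by positivity) hd1 (by linarith)
      rw [mul_assoc (C0 + 1), e1]
      calc l1 * K < a / 20 * (1 * (1 / σ)) := by
            rw [hσ, hc']
            field_simp
            nlinarith
        _ ≤ a / 20 * ((C0 + 1) * (1 / σ)) := by gcongr; linarith
        _ = a / 20 * ((C0 + 1) * ((τ - t) / σ)) / (τ - t) := by field_simp
        _ ≤ _ := by gcongr)
    (fun x hx t ht => by
      have htt : t ∈ Icc 0 t0 := ⟨by linarith [ht.1], ht.2⟩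
      have htT : t ∈ Ico 0 T := ⟨htt.1, htt.2.trans_lt h.lt⟩
      have hxc : x ∈ closedBall (0 : Eu n) R := by simp [hx]
      have hd0 : 0 < τ - t := by linarith [ht.2]
      have h1 := h.lower hR hl1 hl2 hT hu hv hc30 hc31 hc32 htt
      rw [show t0 - t + 1 / K ^ 2 = τ - t by rw [hτ]; ring] at h1
      rw [radial hR hl1 hl2 hu hv hx0 (h.norm_eq.trans hx.symm) htT,
        radial hR hl2 hl1 hv hu hx0 (h.norm_eq.trans hx.symm) htT] at h1
      have h2 : max (Real.exp (u x t)) (Real.exp (v x t)) ≤ Real.exp (v x t) * Real.exp C0 := by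
        rw [← Real.exp_add]
        have := (hCb x hxc t htT).1
        exact max_le (Real.exp_le_exp.2 (by linarith)) (Real.exp_le_exp.2 (by linarith))
      have hsq := Real.sqrt_pos.2 hd0
      calc a / √(τ - t) < c3 * Real.exp (-C0) / √(τ - t) := by gcongr
        _ = c3 / √(τ - t) * Real.exp (-C0) := by ring
        _ ≤ Real.exp (v x t) * Real.exp C0 * Real.exp (-C0) := by gcongr; linarith
        _ = Real.exp (v x t) := by rw [mul_assoc, ← Real.exp_add]; simp)
    h.norm_eq (t := t0) ⟨by linarith, le_rfl⟩
  refine key.le.trans (le_of_eq ?_)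
  have e3 : τ - t0 = K⁻¹ * K⁻¹ := by rw [hτ]; field_simp; ring
  rw [e3, hσ, Real.div_rpow hc'0.le hKpos.le, Real.mul_rpow (by positivity) (by positivity),
    Real.inv_rpow hKpos.le, Real.rpow_neg hKpos.le]
  field_simp

lemma Peak.abs_diff_le (hR : 0 < R) (hl1 : 0 < l1) (hl2 : 0 < l2) (hT : 0 < T)
    (hu : Half R T l1 u v) (hv : Half R T l2 v u) :
    ∃ γ > (0 : ℝ), ∃ D ≥ (0 : ℝ), ∃ K0 : ℝ, ∀ x0 : Eu n, ∀ t0 K, K0 ≤ K →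
      Peak R T u v x0 t0 K → |u x0 t0 - v x0 t0| ≤ D * K ^ (-γ) := by
  obtain ⟨γ1, hγ1, D1, hD1, K1, h1⟩ := Peak.diff_le hR hl1 hl2 hT hu hv
  obtain ⟨γ2, hγ2, D2, hD2, K2, h2⟩ := Peak.diff_le hR hl2 hl1 hT hv hu
  refine ⟨min γ1 γ2, lt_min hγ1 hγ2, max D1 D2, le_max_of_le_left hD1, max 1 (max K1 K2),
    fun x0 t0 K hK h => ?_⟩
  have hK1 : 1 ≤ K := (le_max_left _ _).trans hK
  have k1 := h1 x0 t0 K (((le_max_left _ _).trans (le_max_right _ _)).trans hK) h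
  have k2 := h2 x0 t0 K (((le_max_right _ _).trans (le_max_right _ _)).trans hK) h.symm
  have hp1 : K ^ (-γ1) ≤ K ^ (-(min γ1 γ2)) :=
    Real.rpow_le_rpow_of_exponent_le hK1 (neg_le_neg (min_le_left _ _))
  have hp2 : K ^ (-γ2) ≤ K ^ (-(min γ1 γ2)) :=
    Real.rpow_le_rpow_of_exponent_le hK1 (neg_le_neg (min_le_right _ _))
  have hp0 : ∀ r : ℝ, 0 ≤ K ^ r := fun r => Real.rpow_nonneg (by linarith) r
  rw [abs_le]
  constructor
  · have : D2 * K ^ (-γ2) ≤ max D1 D2 * K ^ (-(min γ1 γ2)) :=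
      mul_le_mul (le_max_right _ _) hp2 (hp0 _) (le_max_of_le_left hD1)
    linarith
  · exact k1.trans (mul_le_mul (le_max_left _ _) hp1 (hp0 _) (le_max_of_le_left hD1))

end peak

/-! ### One-dimensional profiles near the boundary and their exponential averages -/

/-- A profile `a(y,t)`, nonincreasing in the boundary distance `y ∈ [0,δ]`, with
`a_t = a_yy - k a_y + S`, where `0 ≤ k ≤ c`, `S ≥ 0`. The functions `ay`, `ayy` are the (one-sided
at the end points) derivatives of `a` in `y`. -/
structure Prof (δ T c : ℝ) (k : ℝ → ℝ) (a ay ayy S : ℝ → ℝ → ℝ) : Prop where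
  cont : ContinuousOn (fun p : ℝ × ℝ => a p.1 p.2) (Icc 0 δ ×ˢ Ico 0 T)
  nonneg : ∀ y ∈ Icc 0 δ, ∀ t ∈ Ico 0 T, 0 ≤ a y t
  anti : ∀ t ∈ Ico 0 T, AntitoneOn (fun y => a y t) (Icc 0 δ)
  d1 : ∀ t ∈ Ioo 0 T, ∀ y ∈ Icc 0 δ, HasDerivWithinAt (fun y => a y t) (ay y t) (Icc 0 δ) y
  d2 : ∀ t ∈ Ioo 0 T, ∀ y ∈ Icc 0 δ, HasDerivWithinAt (fun y => ay y t) (ayy y t) (Icc 0 δ) y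
  cont2 : ∀ t ∈ Ioo 0 T, ContinuousOn (fun y => ayy y t) (Icc 0 δ)
  contk : ContinuousOn k (Icc 0 δ)
  contS : ∀ t ∈ Ioo 0 T, ContinuousOn (fun y => S y t) (Icc 0 δ)
  k_mem : ∀ y ∈ Icc 0 δ, 0 ≤ k y ∧ k y ≤ c
  S_nonneg : ∀ y ∈ Icc 0 δ, ∀ t ∈ Ioo 0 T, 0 ≤ S y t
  pde : ∀ t ∈ Ioo 0 T, ∀ y ∈ Ioc 0 δ, HasDerivAt (a y) (ayy y t - k y * ay y t + S y t) t
  lip : ∀ t ∈ Ioo 0 T, ∃ C, ∃ s ∈ 𝓝 t, s ⊆ Ioo 0 T ∧ ∀ y ∈ Icc 0 δ, ∀ t1 ∈ s, ∀ t2 ∈ s,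
    |a y t1 - a y t2| ≤ C * |t1 - t2|

/-- The nearest point of `[0,δ]`. -/
noncomputable def clampI (δ z : ℝ) : ℝ := max 0 (min z δ)

/-- The exponential weight, normalised to vanish at `δ`. -/
noncomputable def wgt (K δ z : ℝ) : ℝ := K * (Real.exp (-K * z) - Real.exp (-K * δ))

/-- The weighted integral of the profile over `[y,δ]`. -/
noncomputable def tailInt (K δ : ℝ) (a : ℝ → ℝ → ℝ) (y t : ℝ) : ℝ :=
  ∫ z in y..δ, wgt K δ z * a (clampI δ z) t

lemma clampI_of_mem {δ z : ℝ} (h : z ∈ Icc 0 δ) : clampI δ z = z := by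
  unfold clampI; rw [min_eq_left h.2, max_eq_right h.1]

lemma clampI_mem {δ z : ℝ} (h : 0 ≤ δ) : clampI δ z ∈ Icc 0 δ :=
  ⟨le_max_left _ _, max_le h (min_le_right _ _)⟩

lemma continuous_clampI {δ : ℝ} : Continuous (clampI δ) := by unfold clampI; fun_prop

lemma continuous_wgt {K δ : ℝ} : Continuous (wgt K δ) := by unfold wgt; fun_prop

lemma wgt_nonneg {K δ z : ℝ} (hK : 0 < K) (hz : z ≤ δ) : 0 ≤ wgt K δ z := by
  unfold wgt
  have : Real.exp (-K * δ) ≤ Real.exp (-K * z) := Real.exp_le_exp.2 (by nlinarith)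
  exact mul_nonneg hK.le (by linarith)

namespace Prof

variable {δ T c K : ℝ} {k : ℝ → ℝ} {a ay ayy S : ℝ → ℝ → ℝ}

lemma slice_cont (h : Prof δ T c k a ay ayy S) (hδ : 0 < δ) {t : ℝ} (ht : t ∈ Ico 0 T) :
    Continuous (fun z => a (clampI δ z) t) := by
  have : ContinuousOn (fun z : ℝ => (clampI δ z, t)) univ :=
    (continuous_clampI.prodMk continuous_const).continuousOn
  exact continuousOn_univ.1 (h.cont.comp this fun _ _ => ⟨clampI_mem hδ.le, ht⟩)

lemma ay_nonpos (h : Prof δ T c k a ay ayy S) (hδ : 0 < δ) {t y : ℝ} (ht : t ∈ Ioo 0 T)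
    (hy : y ∈ Icc 0 δ) : ay y t ≤ 0 := by
  have h1 := (h.anti t ⟨ht.1.le, ht.2⟩).derivWithin_nonpos (x := y)
  rwa [(h.d1 t ht y hy).derivWithin (uniqueDiffOn_Icc hδ y hy)] at h1

lemma tail_deriv_y (h : Prof δ T c k a ay ayy S) (hδ : 0 < δ) {t : ℝ} (ht : t ∈ Ico 0 T) (y : ℝ) :
    HasDerivAt (fun y => tailInt K δ a y t) (-(wgt K δ y * a (clampI δ y) t)) y := by
  have hc : Continuous (fun z => wgt K δ z * a (clampI δ z) t) :=
    continuous_wgt.mul (h.slice_cont hδ ht)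
  exact intervalIntegral.integral_hasDerivAt_left (hc.intervalIntegrable _ _)
    (hc.stronglyMeasurableAtFilter _ _) hc.continuousAt

/-- Joint continuity of the weighted integral. -/
lemma tail_cont (h : Prof δ T c k a ay ayy S) (hδ : 0 < δ) {t1 t2 : ℝ} (h1 : 0 ≤ t1) (h2 : t2 < T)
    (h12 : t1 ≤ t2) :
    ContinuousOn (fun p : ℝ × ℝ => tailInt K δ a p.1 p.2) (univ ×ˢ Icc t1 t2) := by
  set cl : ℝ → ℝ := fun t => max t1 (min t t2) with hcl
  have hclm : ∀ t, cl t ∈ Ico 0 T := fun t =>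
    ⟨h1.trans (le_max_left _ _), (max_le h12 (min_le_right _ _)).trans_lt h2⟩
  have hclc : Continuous cl := by simp only [hcl]; fun_prop
  have hf : Continuous (Function.uncurry
      (fun (p : ℝ × ℝ) (z : ℝ) => wgt K δ z * a (clampI δ z) (cl p.2))) := by
    have e1 : ContinuousOn (fun q : (ℝ × ℝ) × ℝ => a (clampI δ q.2) (cl q.1.2)) univ :=
      h.cont.comp (f := fun q : (ℝ × ℝ) × ℝ => (clampI δ q.2, cl q.1.2))
        (((continuous_clampI.comp continuous_snd).prodMk
          (hclc.comp (continuous_snd.comp continuous_fst))).continuousOn)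
        fun q _ => ⟨clampI_mem hδ.le, hclm _⟩
    exact (continuous_wgt.comp continuous_snd).mul (continuousOn_univ.1 e1)
  have := (intervalIntegral.continuous_parametric_intervalIntegral_of_continuous (μ := volume)
    (a₀ := δ) hf (s := fun p : ℝ × ℝ => p.1) continuous_fst).neg
  refine this.continuousOn.congr fun p hp => ?_
  have e2 : cl p.2 = p.2 := by
    simp only [hcl]; rw [min_eq_left hp.2.2, max_eq_right hp.2.1]
  simp only [tailInt, Pi.neg_apply, e2]
  rw [intervalIntegral.integral_symm]

lemma tail_nonneg (h : Prof δ T c k a ay ayy S) (hδ : 0 < δ) (hK : 0 < K) {y t : ℝ}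
    (ht : t ∈ Ico 0 T) (hy : y ∈ Icc 0 δ) : 0 ≤ tailInt K δ a y t :=
  intervalIntegral.integral_nonneg hy.2 fun z hz =>
    mul_nonneg (wgt_nonneg hK hz.2) (h.nonneg _ (clampI_mem hδ.le) t ht)

lemma tail_le (h : Prof δ T c k a ay ayy S) (hδ : 0 < δ) (hK : 0 < K) {t : ℝ}
    (ht : t ∈ Ico 0 T) : tailInt K δ a 0 t ≤ a 0 t := by
  have ha0 := h.nonneg 0 ⟨le_rfl, hδ.le⟩ t ht
  have e1 : ∫ z in (0 : ℝ)..δ, K * Real.exp (-K * z) = 1 - Real.exp (-K * δ) := by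
    have : ∀ z ∈ uIcc 0 δ, HasDerivAt (fun z => -Real.exp (-K * z)) (K * Real.exp (-K * z)) z := by
      intro z _
      refine (((hasDerivAt_id z).const_mul (-K)).exp.neg).congr_deriv ?_
      simp; ring
    rw [intervalIntegral.integral_eq_sub_of_hasDerivAt this
      ((by fun_prop : Continuous fun z => K * Real.exp (-K * z)).intervalIntegrable _ _)]
    simp; ring
  calc tailInt K δ a 0 t ≤ ∫ z in (0 : ℝ)..δ, K * Real.exp (-K * z) * a 0 t := by
        refine intervalIntegral.integral_mono_on hδ.le
          ((continuous_wgt.mul (h.slice_cont hδ ht)).intervalIntegrable _ _)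
          ((by fun_prop : Continuous fun z => K * Real.exp (-K * z) * a 0 t).intervalIntegrable _ _)
          fun z hz => ?_
        refine mul_le_mul ?_ (h.anti t ht ⟨le_rfl, hδ.le⟩ (clampI_mem hδ.le) (clampI_mem hδ.le).1)
          (h.nonneg _ (clampI_mem hδ.le) t ht) (by positivity)
        unfold wgt
        have := Real.exp_pos (-K * δ)
        exact mul_le_mul_of_nonneg_left (by linarith) hK.le
    _ = (1 - Real.exp (-K * δ)) * a 0 t := by rw [intervalIntegral.integral_mul_const, e1]
    _ ≤ a 0 t := by nlinarith [Real.exp_pos (-K * δ)]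

/-- Green's formula for the weighted integral, as an inequality: the drift and the source only help,
and the weight vanishes at `δ`. -/
lemma tail_deriv_t (h : Prof δ T c k a ay ayy S) (hδ : 0 < δ) (hK : 0 < K) {y t : ℝ}
    (hy : y ∈ Icc 0 δ) (ht : t ∈ Ioo 0 T) :
    ∃ D, HasDerivAt (fun t => tailInt K δ a y t) D t ∧
      -(wgt K δ y * ay y t) - K ^ 2 * Real.exp (-K * y) * a y t + K ^ 2 * tailInt K δ a y t ≤ D := by
  obtain ⟨C, s, hs, hsT, hC⟩ := h.lip t ht
  have ht' : t ∈ Ico 0 T := ⟨ht.1.le, ht.2⟩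
  have hsub : Icc y δ ⊆ Icc 0 δ := Icc_subset_Icc_left hy.1
  have hmemI : ∀ z ∈ uIoc y δ, z ∈ Ioc 0 δ := fun z hz => by
    rw [uIoc_of_le hy.2] at hz; exact ⟨hy.1.trans_lt hz.1, hz.2⟩
  have hayc : ContinuousOn (fun z => ay z t) (Icc 0 δ) :=
    fun z hz => (h.d2 t ht z hz).continuousWithinAt
  have hF'c : ContinuousOn (fun z => wgt K δ z * (ayy z t - k z * ay z t + S z t)) (Icc y δ) :=
    continuous_wgt.continuousOn.mul
      ((((h.cont2 t ht).sub (h.contk.mul hayc)).add (h.contS t ht)).mono hsub)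
  have hF'i : IntervalIntegrable (fun z => wgt K δ z * (ayy z t - k z * ay z t + S z t)) volume y δ :=
    ContinuousOn.intervalIntegrable (by rwa [uIcc_of_le hy.2])
  have key := intervalIntegral.hasDerivAt_integral_of_dominated_loc_of_lip (μ := volume)
    (F := fun t z => wgt K δ z * a (clampI δ z) t)
    (F' := fun z => wgt K δ z * (ayy z t - k z * ay z t + S z t)) (x₀ := t) (a := y) (b := δ)
    (bound := fun z => |wgt K δ z| * |C|) hs
    (by
      filter_upwards [hs] with t1 ht1
      exact (continuous_wgt.mul (h.slice_cont hδ ⟨(hsT ht1).1.le, (hsT ht1).2⟩)).aestronglyMeasurable)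
    ((continuous_wgt.mul (h.slice_cont hδ ht')).intervalIntegrable _ _)
    hF'i.aestronglyMeasurable_restrict_uIoc
    (by
      refine Filter.Eventually.of_forall fun z hz => ?_
      refine LipschitzOnWith.of_dist_le_mul fun t1 ht1 t2 ht2 => ?_
      rw [Real.dist_eq, Real.dist_eq, ← mul_sub, abs_mul]
      have := hC _ (clampI_mem (z := z) hδ.le) t1 ht1 t2 ht2
      have e : ((Real.nnabs (|wgt K δ z| * |C|) : NNReal) : ℝ) = |wgt K δ z| * |C| := by
        simp
      rw [e, mul_assoc]
      refine mul_le_mul_of_nonneg_left (this.trans ?_) (abs_nonneg _)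
      exact mul_le_mul_of_nonneg_right (le_abs_self C) (abs_nonneg _))
    ((continuous_wgt.abs.mul continuous_const).intervalIntegrable _ _)
    (by
      refine Filter.Eventually.of_forall fun z hz => ?_
      have hz' := hmemI z hz
      simp only [clampI_of_mem ⟨hz'.1.le, hz'.2⟩]
      exact (h.pde t ht z hz').const_mul _)
  refine ⟨_, key.2, ?_⟩
  -- primitive of `wgt * a_yy - wgt_yy * a`
  have hac : ContinuousOn (fun z => a z t) (Icc 0 δ) :=
    fun z hz => (h.d1 t ht z hz).continuousWithinAt
  have hwd : ∀ z, HasDerivAt (wgt K δ) (-K ^ 2 * Real.exp (-K * z)) z := by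
    intro z
    unfold wgt
    refine ((((hasDerivAt_id z).const_mul (-K)).exp.sub_const _).const_mul K).congr_deriv ?_
    simp; ring
  have hwd2 : ∀ z, HasDerivAt (fun z => -K ^ 2 * Real.exp (-K * z)) (K ^ 3 * Real.exp (-K * z)) z := by
    intro z
    refine (((hasDerivAt_id z).const_mul (-K)).exp.const_mul (-K ^ 2)).congr_deriv ?_
    simp; ring
  have hInt1 : ContinuousOn (fun z => wgt K δ z * ayy z t - K ^ 3 * Real.exp (-K * z) * a z t)
      (Icc y δ) := ((continuous_wgt.continuousOn.mul (h.cont2 t ht)).sub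
        ((by fun_prop : Continuous fun z => K ^ 3 * Real.exp (-K * z)).continuousOn.mul hac)).mono hsub
  have hftc := intervalIntegral.integral_eq_sub_of_hasDerivAt_of_le hy.2
    (f := fun z => wgt K δ z * ay z t - (-K ^ 2 * Real.exp (-K * z)) * a z t)
    (f' := fun z => wgt K δ z * ayy z t - K ^ 3 * Real.exp (-K * z) * a z t)
    (((continuous_wgt.continuousOn.mul hayc).sub
        ((by fun_prop : Continuous fun z => -K ^ 2 * Real.exp (-K * z)).continuousOn.mul hac)).mono hsub)
    (by
      intro z hz
      have hzz : z ∈ Icc 0 δ := hsub ⟨hz.1.le, hz.2.le⟩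
      have hn : Icc 0 δ ∈ 𝓝 z := Icc_mem_nhds (hy.1.trans_lt hz.1) hz.2
      have e1 := (h.d1 t ht z hzz).hasDerivAt hn
      have e2 := (h.d2 t ht z hzz).hasDerivAt hn
      refine (((hwd z).fun_mul e2).fun_sub ((hwd2 z).fun_mul e1)).congr_deriv ?_
      ring)
    (ContinuousOn.intervalIntegrable (by rwa [uIcc_of_le hy.2]))
  have hw0 : wgt K δ δ = 0 := by simp [wgt]
  simp only [hw0] at hftc
  have hmono : ∫ z in y..δ, ((wgt K δ z * ayy z t - K ^ 3 * Real.exp (-K * z) * a z t)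
        + K ^ 2 * (wgt K δ z * a (clampI δ z) t)) ≤
      ∫ z in y..δ, wgt K δ z * (ayy z t - k z * ay z t + S z t) := by
    refine intervalIntegral.integral_mono_on hy.2
      ((ContinuousOn.intervalIntegrable (by rwa [uIcc_of_le hy.2])).add
        (((continuous_wgt.mul (h.slice_cont hδ ht')).intervalIntegrable _ _).const_mul _)) hF'i
      fun z hz => ?_
    have hzz := hsub hz
    rw [clampI_of_mem hzz]
    have q1 := wgt_nonneg (δ := δ) hK hz.2
    have q2 := h.ay_nonpos hδ ht hzz
    have q3 := (h.k_mem z hzz).1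
    have q4 := h.S_nonneg z hzz t ht
    have q5 := h.nonneg z hzz t ht'
    have q6 : 0 ≤ wgt K δ z * (-(k z * ay z t) + S z t) :=
      mul_nonneg q1 (by nlinarith)
    have q7 : wgt K δ z ≤ K * Real.exp (-K * z) := by
      unfold wgt
      have := Real.exp_pos (-K * δ)
      exact mul_le_mul_of_nonneg_left (by linarith) hK.le
    have q8 : K ^ 2 * (wgt K δ z * a z t) ≤ K ^ 2 * (K * Real.exp (-K * z) * a z t) := by gcongr
    linarith
  have hi1 : IntervalIntegrable (fun z => wgt K δ z * ayy z t - K ^ 3 * Real.exp (-K * z) * a z t)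
      volume y δ := ContinuousOn.intervalIntegrable (by rwa [uIcc_of_le hy.2])
  have hi2 : IntervalIntegrable (fun z => K ^ 2 * (wgt K δ z * a (clampI δ z) t)) volume y δ :=
    ((continuous_wgt.mul (h.slice_cont hδ ht')).intervalIntegrable _ _).const_mul _
  rw [intervalIntegral.integral_add hi1 hi2, hftc, intervalIntegral.integral_const_mul] at hmono
  have hpos : 0 ≤ K ^ 2 * Real.exp (-K * δ) * a δ t :=
    mul_nonneg (by positivity) (h.nonneg δ ⟨hδ.le, le_rfl⟩ t ht')
  unfold tailInt
  linarith

end Prof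

/-! ### Growth of the exponential average -/

/-- A function with `X' ≥ K² X`, and `X' ≥ K² e^{X-1}` once `X ≥ 1`, that is at least `x₀ ∈ (0,1]`
at time `t₀` cannot exist longer than `(log (1/x₀) + 1)/K²`. -/
lemma ode_growth {X : ℝ → ℝ} {K t0 T x0 : ℝ} (hK : 0 < K) (hx0 : 0 < x0) (hx1 : x0 ≤ 1)
    (hX : ∀ t ∈ Ico t0 T, ∃ D, HasDerivAt X D t ∧ K ^ 2 * X t ≤ D ∧
      (1 ≤ X t → K ^ 2 * Real.exp (X t - 1) ≤ D)) (h0 : x0 ≤ X t0) :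
    K ^ 2 * (T - t0) ≤ Real.log (1 / x0) + 1 := by
  by_contra hcon
  push Not at hcon
  choose! D hD using hX
  have hK2 : 0 < K ^ 2 := by positivity
  have hlog : 0 ≤ Real.log (1 / x0) := Real.log_nonneg (by rw [le_div_iff₀ hx0]; linarith)
  set t1 := t0 + Real.log (1 / x0) / K ^ 2 with ht1
  have ht01 : t0 ≤ t1 := by rw [ht1]; have := div_nonneg hlog hK2.le; linarith
  have ht2 : t1 + 1 / K ^ 2 < T := by
    have : (Real.log (1 / x0) + 1) / K ^ 2 < T - t0 := by
      rw [div_lt_iff₀ hK2]; linarith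
    rw [ht1]; rw [add_div] at this; linarith
  have hinv : 0 < 1 / K ^ 2 := by positivity
  -- exponential growth
  have hmono1 : MonotoneOn (fun t => X t * Real.exp (-K ^ 2 * (t - t0))) (Ico t0 T) := by
    have hd : ∀ t ∈ Ico t0 T, HasDerivAt (fun t => X t * Real.exp (-K ^ 2 * (t - t0)))
        ((D t - K ^ 2 * X t) * Real.exp (-K ^ 2 * (t - t0))) t := by
      intro t ht
      refine ((hD t ht).1.fun_mul ((((hasDerivAt_id t).sub_const t0).const_mul (-K ^ 2)).exp)).congr_deriv ?_
      simp; ring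
    refine monotoneOn_of_deriv_nonneg (convex_Ico _ _)
      (fun t ht => (hd t ht).continuousAt.continuousWithinAt)
      (fun t ht => (hd t (interior_subset ht)).differentiableAt.differentiableWithinAt)
      fun t ht => ?_
    rw [(hd t (interior_subset ht)).deriv]
    exact mul_nonneg (by linarith [(hD t (interior_subset ht)).2.1]) (Real.exp_pos _).le
  have hone : ∀ t ∈ Ico t1 T, 1 ≤ X t := by
    intro t ht
    have h1 := hmono1 ⟨le_rfl, by linarith [ht.2, ht.1]⟩ ⟨ht01.trans ht.1, ht.2⟩ (ht01.trans ht.1)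
    simp only [sub_self, mul_zero, Real.exp_zero, mul_one] at h1
    have h2 : Real.exp (-K ^ 2 * (t - t0)) ≤ x0 := by
      have : -K ^ 2 * (t - t0) ≤ Real.log x0 := by
        have h3 : Real.log (1 / x0) ≤ K ^ 2 * (t - t0) := by
          have : Real.log (1 / x0) / K ^ 2 ≤ t - t0 := by linarith [ht.1]
          rwa [div_le_iff₀ hK2, mul_comm] at this
        rw [one_div, Real.log_inv] at h3
        linarith
      calc _ ≤ Real.exp (Real.log x0) := Real.exp_le_exp.2 this
        _ = x0 := Real.exp_log hx0
    by_contra hlt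
    push Not at hlt
    have h4 : 0 < X t := by
      by_contra hneg
      push Not at hneg
      have := mul_nonpos_of_nonpos_of_nonneg hneg (Real.exp_pos (-K ^ 2 * (t - t0))).le
      linarith
    nlinarith [Real.exp_pos (-K ^ 2 * (t - t0))]
  -- blow-up within time `1/K²`
  have hmono2 : MonotoneOn (fun t => -Real.exp (1 - X t) - K ^ 2 * t) (Ico t1 T) := by
    have hsub : ∀ t ∈ Ico t1 T, t ∈ Ico t0 T := fun t ht => ⟨ht01.trans ht.1, ht.2⟩
    have hd : ∀ t ∈ Ico t1 T, HasDerivAt (fun t => -Real.exp (1 - X t) - K ^ 2 * t)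
        (D t * Real.exp (1 - X t) - K ^ 2) t := by
      intro t ht
      refine (((hD t (hsub t ht)).1.const_sub 1).exp.fun_neg.fun_sub
        ((hasDerivAt_id t).const_mul (K ^ 2))).congr_deriv ?_
      simp; ring
    refine monotoneOn_of_deriv_nonneg (convex_Ico _ _)
      (fun t ht => (hd t ht).continuousAt.continuousWithinAt)
      (fun t ht => (hd t (interior_subset ht)).differentiableAt.differentiableWithinAt)
      fun t ht => ?_
    have ht' := interior_subset ht
    rw [(hd t ht').deriv]
    have h1 := (hD t (hsub t ht')).2.2 (hone t ht')
    have h2 : Real.exp (X t - 1) * Real.exp (1 - X t) = 1 := by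
      rw [← Real.exp_add]; simp
    nlinarith [Real.exp_pos (1 - X t)]
  have h5 := hmono2 ⟨le_rfl, by linarith⟩ ⟨by linarith, ht2⟩ (by linarith : t1 ≤ t1 + 1 / K ^ 2)
  simp only at h5
  have h6 : Real.exp (1 - X t1) ≤ 1 := by
    rw [Real.exp_le_one_iff]; linarith [hone t1 ⟨le_rfl, by linarith⟩]
  have h7 : K ^ 2 * (t1 + 1 / K ^ 2) = K ^ 2 * t1 + 1 := by field_simp
  rw [h7] at h5
  linarith [Real.exp_pos (1 - X (t1 + 1 / K ^ 2))]

namespace Prof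

variable {δ T c K : ℝ} {k : ℝ → ℝ} {a ay ayy S : ℝ → ℝ → ℝ}

/-- If the flux at `0` is at least `e^a` and the exponential average exceeds its equilibrium level
(about `log K - 1`) by `x0` at time `t0`, then the remaining life time is at most
`(log (1/x0) + 1)/K²`. Indeed the average `E` satisfies `E' ≥ K² (e^{a - log K} - a + E)`, up to
the normalisation of the weight, and `e^s - s ≥ 1`. -/
lemma life_bound (h : Prof δ T c k a ay ayy S) (hδ : 0 < δ) (hK : 0 < K)
    (hflux : ∀ t ∈ Ioo 0 T, Real.exp (a 0 t) ≤ -ay 0 t) {t0 x0 : ℝ} (ht0 : 0 < t0)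
    (hx0 : 0 < x0) (hx1 : x0 ≤ 1)
    (hE : Real.log K - Real.log (1 - Real.exp (-K * δ)) - 1 + x0 ≤ tailInt K δ a 0 t0) :
    K ^ 2 * (T - t0) ≤ Real.log (1 / x0) + 1 := by
  set κ := Real.log K - Real.log (1 - Real.exp (-K * δ)) with hκ
  have hε : 0 < 1 - Real.exp (-K * δ) := by
    have : Real.exp (-K * δ) < 1 := by rw [Real.exp_lt_one_iff]; nlinarith
    linarith
  refine ode_growth (X := fun t => tailInt K δ a 0 t - κ + 1) hK hx0 hx1 ?_ (by linarith)
  intro t ht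
  have ht' : t ∈ Ioo 0 T := ⟨ht0.trans_le ht.1, ht.2⟩
  have hy0 : (0 : ℝ) ∈ Icc 0 δ := ⟨le_rfl, hδ.le⟩
  obtain ⟨D, hD, hle⟩ := h.tail_deriv_t hδ hK hy0 ht'
  have hEA := h.tail_le (K := K) hδ hK ⟨ht'.1.le, ht'.2⟩
  set E := tailInt K δ a 0 t
  set A := a 0 t with hA
  have hw : wgt K δ 0 = K * (1 - Real.exp (-K * δ)) := by simp [wgt]
  have hexpκ : K * (1 - Real.exp (-K * δ)) * Real.exp A = K ^ 2 * Real.exp (A - κ) := by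
    have : Real.exp (A - κ) = Real.exp A / K * (1 - Real.exp (-K * δ)) := by
      rw [show A - κ = A - Real.log K + Real.log (1 - Real.exp (-K * δ)) by rw [hκ]; ring,
        Real.exp_add, Real.exp_sub, Real.exp_log hK, Real.exp_log hε]
    rw [this]; field_simp
  have hbase : K ^ 2 * (Real.exp (A - κ) - A + E) ≤ D := by
    have h1 : K * (1 - Real.exp (-K * δ)) * Real.exp A ≤ K * (1 - Real.exp (-K * δ)) * (-ay 0 t) :=
      mul_le_mul_of_nonneg_left (hflux t ht') (by positivity)
    rw [hw] at hle
    simp only [mul_zero, Real.exp_zero, mul_one] at hle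
    nlinarith
  refine ⟨D, (hD.sub_const κ).add_const 1, le_trans ?_ hbase, fun h1 => le_trans ?_ hbase⟩
  · refine mul_le_mul_of_nonneg_left ?_ (by positivity)
    linarith [Real.add_one_le_exp (A - κ)]
  · refine mul_le_mul_of_nonneg_left ?_ (by positivity)
    have e1 : Real.exp (A - κ) = Real.exp (E - κ) * Real.exp (A - E) := by
      rw [← Real.exp_add]; ring_nf
    have e2 := Real.add_one_le_exp (A - E)
    have e3 : 1 ≤ Real.exp (E - κ) := Real.one_le_exp (by linarith)
    rw [show E - κ + 1 - 1 = E - κ by ring, e1]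
    nlinarith

end Prof

/-! ### A caloric barrier for the Robin problem on a half line -/

/-- The error-function-like primitive `∫₀^ξ e^{-r²/4} dr`. -/
noncomputable def gaussInt (ξ : ℝ) : ℝ := ∫ r in (0 : ℝ)..ξ, Real.exp (-r ^ 2 / 4)

lemma gaussInt_deriv (ξ : ℝ) : HasDerivAt gaussInt (Real.exp (-ξ ^ 2 / 4)) ξ := by
  have hc : Continuous fun r : ℝ => Real.exp (-r ^ 2 / 4) := by fun_prop
  exact intervalIntegral.integral_hasDerivAt_right (hc.intervalIntegrable _ _)
    (hc.stronglyMeasurableAtFilter _ _) hc.continuousAt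

lemma continuous_gaussInt : Continuous gaussInt :=
  continuous_iff_continuousAt.2 fun ξ => (gaussInt_deriv ξ).continuousAt

lemma gaussInt_le {ξ : ℝ} (h : 0 ≤ ξ) : gaussInt ξ ≤ ξ := by
  have hc : Continuous fun r : ℝ => Real.exp (-r ^ 2 / 4) := by fun_prop
  have := intervalIntegral.integral_mono_on (μ := volume) h (hc.intervalIntegrable 0 ξ)
    ((continuous_const (y := (1 : ℝ))).intervalIntegrable 0 ξ)
    fun r _ => Real.exp_le_one_iff.2 (by nlinarith [sq_nonneg r])
  simpa [gaussInt] using this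

/-- The secant inequality at the origin for the concave function `gaussInt` on `[0,∞)`. -/
lemma gaussInt_secant {ξ : ℝ} (h : 0 ≤ ξ) : ξ * Real.exp (-ξ ^ 2 / 4) ≤ gaussInt ξ := by
  have hc : Continuous fun r : ℝ => Real.exp (-r ^ 2 / 4) := by fun_prop
  have := intervalIntegral.integral_mono_on (μ := volume) h
    ((continuous_const (y := Real.exp (-ξ ^ 2 / 4))).intervalIntegrable 0 ξ)
    (hc.intervalIntegrable 0 ξ)
    fun r hr => Real.exp_le_exp.2 (by nlinarith [hr.1, hr.2])
  simpa [gaussInt] using this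

lemma gaussInt_mono : Monotone gaussInt :=
  monotone_of_deriv_nonneg (fun ξ => (gaussInt_deriv ξ).differentiableAt) fun ξ => by
    rw [(gaussInt_deriv ξ).deriv]; exact (Real.exp_pos _).le

lemma gaussInt_ge_half {ξ : ℝ} (h : 1 ≤ ξ) : 1 / 2 ≤ gaussInt ξ := by
  have h1 := gaussInt_secant (zero_le_one' ℝ)
  have h2 := Real.add_one_le_exp (-(1 : ℝ) ^ 2 / 4)
  have h3 := gaussInt_mono h
  linarith

/-- `∫₀^ξ e^{-r²/4} dr` with `ξ = (1 + K y)/√(1 + K² s)`: a solution of the heat equation in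
`(y,s)`, concave in `y`. -/
noncomputable def heatBar (K y s : ℝ) : ℝ := gaussInt ((1 + K * y) / √(1 + K ^ 2 * s))

/-- The `y`-derivative of `heatBar`. -/
noncomputable def heatBarY (K y s : ℝ) : ℝ :=
  Real.exp (-((1 + K * y) / √(1 + K ^ 2 * s)) ^ 2 / 4) * (K / √(1 + K ^ 2 * s))

/-- The second `y`-derivative, and the `s`-derivative, of `heatBar`. -/
noncomputable def heatBarYY (K y s : ℝ) : ℝ :=
  Real.exp (-((1 + K * y) / √(1 + K ^ 2 * s)) ^ 2 / 4) *
    (-(1 + K * y) * K ^ 2 / (2 * √(1 + K ^ 2 * s) ^ 3))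

lemma heatBar_deriv_y (K y s : ℝ) : HasDerivAt (fun y => heatBar K y s) (heatBarY K y s) y := by
  have h1 : HasDerivAt (fun y => (1 + K * y) / √(1 + K ^ 2 * s)) (K / √(1 + K ^ 2 * s)) y := by
    refine ((((hasDerivAt_id y).const_mul K).const_add 1).div_const _).congr_deriv ?_
    simp
  exact (gaussInt_deriv _).comp y h1

lemma heatBar_deriv_yy {K s : ℝ} (hs : 0 ≤ s) (y : ℝ) :
    HasDerivAt (fun y => heatBarY K y s) (heatBarYY K y s) y := by
  have hQ : 0 < √(1 + K ^ 2 * s) := Real.sqrt_pos.2 (by positivity)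
  have h1 : HasDerivAt (fun y => (1 + K * y) / √(1 + K ^ 2 * s)) (K / √(1 + K ^ 2 * s)) y := by
    refine ((((hasDerivAt_id y).const_mul K).const_add 1).div_const _).congr_deriv ?_
    simp
  refine ((((h1.fun_pow 2).fun_neg.div_const 4).exp).mul_const (K / √(1 + K ^ 2 * s))).congr_deriv ?_
  unfold heatBarYY
  simp only [Nat.cast_ofNat, pow_one, Nat.add_one_sub_one]
  rw [mul_assoc]
  congr 1
  field_simp
  ring

lemma heatBar_deriv_s {K s : ℝ} (hs : 0 ≤ s) (y : ℝ) :
    HasDerivAt (fun s => heatBar K y s) (heatBarYY K y s) s := by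
  have hQ0 : 0 < 1 + K ^ 2 * s := by positivity
  have hQ : 0 < √(1 + K ^ 2 * s) := Real.sqrt_pos.2 hQ0
  have h2 : HasDerivAt (fun s => √(1 + K ^ 2 * s)) (K ^ 2 / (2 * √(1 + K ^ 2 * s))) s := by
    refine ((((hasDerivAt_id s).const_mul (K ^ 2)).const_add 1).sqrt hQ0.ne').congr_deriv ?_
    simp
  have h1 : HasDerivAt (fun s => (1 + K * y) / √(1 + K ^ 2 * s))
      (-(1 + K * y) * K ^ 2 / (2 * √(1 + K ^ 2 * s) ^ 3)) s := by
    refine ((hasDerivAt_const s (1 + K * y)).fun_div h2 hQ.ne').congr_deriv ?_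
    field_simp
    ring
  exact (gaussInt_deriv _).comp s h1

lemma heatBarY_nonneg {K y s : ℝ} (hK : 0 < K) : 0 ≤ heatBarY K y s := by
  unfold heatBarY; positivity

/-- The Robin condition for `heatBar` at `y = 0`. -/
lemma heatBar_robin {K s : ℝ} (hK : 0 < K) : heatBarY K 0 s ≤ K * heatBar K 0 s := by
  unfold heatBarY heatBar
  have := gaussInt_secant (ξ := (1 + K * 0) / √(1 + K ^ 2 * s)) (by simp)
  calc _ = K * ((1 + K * 0) / √(1 + K ^ 2 * s) *
        Real.exp (-((1 + K * 0) / √(1 + K ^ 2 * s)) ^ 2 / 4)) := by ring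
    _ ≤ _ := mul_le_mul_of_nonneg_left this hK.le

lemma heatBar_cont {K t1 t2 : ℝ} :
    ContinuousOn (fun p : ℝ × ℝ => heatBar K p.1 (p.2 - t1)) (univ ×ˢ Icc t1 t2) := by
  refine continuous_gaussInt.comp_continuousOn ?_
  refine ContinuousOn.div (by fun_prop) (by fun_prop) fun p hp => ?_
  have : 0 ≤ p.2 - t1 := sub_nonneg.2 hp.2.1
  exact ne_of_gt (Real.sqrt_pos.2 (by positivity))

/-! ### One-dimensional extremum tests -/

lemma second_deriv_test {g g1 : ℝ → ℝ} {g2 y : ℝ} (hg : ∀ᶠ z in 𝓝 y, HasDerivAt g (g1 z) z)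
    (hg1 : HasDerivAt g1 g2 y) (hmax : IsLocalMax g y) : g1 y = 0 ∧ g2 ≤ 0 := by
  have hz : g1 y = 0 := hmax.hasDerivAt_eq_zero hg.self_of_nhds
  refine ⟨hz, ?_⟩
  by_contra! hpos
  have hd : deriv g =ᶠ[𝓝 y] g1 := hg.mono fun z hz => hz.deriv
  have hdd : deriv (deriv g) y = g2 := by rw [hd.deriv_eq, hg1.deriv]
  have hmin := isLocalMin_of_deriv_deriv_pos (f := g) (x₀ := y) (by rw [hdd]; exact hpos)
    (by rw [hd.self_of_nhds, hz]) hg.self_of_nhds.continuousAt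
  have hconst : g =ᶠ[𝓝 y] fun _ => g y := by
    filter_upwards [hmin, hmax] with z h1 h2 using le_antisymm h2 h1
  have : deriv g =ᶠ[𝓝 y] fun _ => 0 := by
    refine hconst.deriv.trans (Filter.Eventually.of_forall fun z => ?_)
    simp
  rw [this.deriv_eq] at hdd
  simp at hdd
  linarith

lemma right_deriv_nonpos {g : ℝ → ℝ} {d b : ℝ} (hb : 0 < b)
    (hd : HasDerivWithinAt g d (Icc 0 b) 0) (hle : ∀ z ∈ Icc 0 b, g z ≤ g 0) : d ≤ 0 := by
  have h1 : HasDerivWithinAt g d (Ioc 0 b) 0 := hd.mono Ioc_subset_Icc_self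
  rw [hasDerivWithinAt_iff_tendsto_slope' (by simp)] at h1
  have : (𝓝[Ioc 0 b] (0 : ℝ)).NeBot := by
    rw [nhdsWithin_Ioc_eq_nhdsGT hb]; infer_instance
  refine le_of_tendsto h1 ?_
  filter_upwards [self_mem_nhdsWithin] with z hz
  rw [slope_def_field]
  exact div_nonpos_of_nonpos_of_nonneg (by linarith [hle z ⟨hz.1.le, hz.2⟩]) (by linarith [hz.1])

/-! ### The gain estimate for profiles -/

namespace Prof

variable {δ T c K : ℝ} {k : ℝ → ℝ} {a ay ayy S : ℝ → ℝ → ℝ}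

lemma exp_mul_wgt (K δ y : ℝ) :
    Real.exp (K * y) * wgt K δ y = K * (1 - Real.exp (-K * (δ - y))) := by
  have h1 : Real.exp (K * y) * Real.exp (-K * y) = 1 := by rw [← Real.exp_add]; simp
  have h2 : Real.exp (K * y) * Real.exp (-K * δ) = Real.exp (-K * (δ - y)) := by
    rw [← Real.exp_add]; ring_nf
  unfold wgt
  linear_combination K * h1 - K * h2

/-- The derivative in `y` of `B(y,t) = e^{Ky} ∫_y^δ wgt a`. -/
lemma avg_deriv_y (h : Prof δ T c k a ay ayy S) (hδ : 0 < δ) {t : ℝ} (ht : t ∈ Ico 0 T) {y : ℝ}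
    (hy : y ∈ Icc 0 δ) :
    HasDerivAt (fun y => Real.exp (K * y) * tailInt K δ a y t)
      (K * (Real.exp (K * y) * tailInt K δ a y t) - K * (1 - Real.exp (-K * (δ - y))) * a y t) y := by
  have h1 := h.tail_deriv_y (K := K) hδ ht y
  rw [clampI_of_mem hy] at h1
  refine ((((hasDerivAt_id y).const_mul K).exp).fun_mul h1).congr_deriv ?_
  rw [← exp_mul_wgt]
  simp
  ring

lemma avg_deriv_yy (h : Prof δ T c k a ay ayy S) (hδ : 0 < δ) {t : ℝ} (ht : t ∈ Ioo 0 T) {y : ℝ}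
    (hy : y ∈ Ioo 0 δ) :
    HasDerivAt (fun y => K * (Real.exp (K * y) * tailInt K δ a y t) -
        K * (1 - Real.exp (-K * (δ - y))) * a y t)
      (K ^ 2 * (Real.exp (K * y) * tailInt K δ a y t)
        - K ^ 2 * (1 - Real.exp (-K * (δ - y))) * a y t
        + K ^ 2 * Real.exp (-K * (δ - y)) * a y t
        - K * (1 - Real.exp (-K * (δ - y))) * ay y t) y := by
  have hyI : y ∈ Icc 0 δ := Ioo_subset_Icc_self hy
  have h1 := h.avg_deriv_y (K := K) hδ ⟨ht.1.le, ht.2⟩ hyI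
  have h2 := (h.d1 t ht y hyI).hasDerivAt (Icc_mem_nhds hy.1 hy.2)
  have h3 : HasDerivAt (fun y => K * (1 - Real.exp (-K * (δ - y))))
      (-(K ^ 2 * Real.exp (-K * (δ - y)))) y := by
    refine ((((((hasDerivAt_id y).const_sub δ).const_mul (-K)).exp).const_sub 1).const_mul K).congr_deriv ?_
    simp; ring
  refine ((h1.const_mul K).fun_sub (h3.fun_mul h2)).congr_deriv ?_
  ring

set_option maxHeartbeats 2000000 in
/-- If on `[t₀-θ,t₀]` the boundary values are at most `L` and the flux is at most
`K(1-ηL) + ηK a(0,·)`, then `a(0,t₀)` exceeds `(1+η)` times the exponential average by at most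
`1 - ηL`, up to errors. The proof compares `a - (1+η)B`, `B(y,t) = e^{Ky} ∫_y^δ wgt a`, which
satisfies a Robin condition, with a barrier built on `heatBar`. -/
lemma gain (h : Prof δ T c k a ay ayy S) (hδ : 0 < δ) (hK : 0 < K) {t0 θ L η S0 : ℝ}
    (hθ : 0 < θ) (hts : 0 < t0 - θ) (ht0 : t0 < T) (hη0 : 0 ≤ η) (hη1 : η ≤ 1) (hL : 0 ≤ L)
    (hηL : η * L ≤ 1) (hS0 : 0 ≤ S0) (hc : 0 ≤ c)
    (haL : ∀ t ∈ Icc (t0 - θ) t0, a 0 t ≤ L)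
    (hS : ∀ y ∈ Icc 0 δ, ∀ t ∈ Icc (t0 - θ) t0, S y t ≤ S0)
    (hfl : ∀ t ∈ Icc (t0 - θ) t0, -ay 0 t ≤ K * (1 - η * L) + η * K * a 0 t) :
    a 0 t0 - (1 + η) * tailInt K δ a 0 t0 ≤ 1 - η * L + 2 * Real.exp (-K * δ) * L
      + 2 * L / √(1 + K ^ 2 * θ) + 8 * L * θ / δ ^ 2
      + (S0 + 2 * c * K * L + 4 * K ^ 2 * Real.exp (-K * (δ / 2)) * L) * θ := by
  refine le_of_forall_pos_le_add fun e he => ?_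
  set ts := t0 - θ with hts'
  set ε0 := e / (1 + θ) with hε0
  have hε0pos : 0 < ε0 := by positivity
  set err := S0 + 2 * c * K * L + 4 * K ^ 2 * Real.exp (-K * (δ / 2)) * L with herr
  have herr0 : 0 ≤ err := by positivity
  set c0 := 1 - η * L + 2 * Real.exp (-K * δ) * L with hc0
  have hc00 : 0 ≤ c0 := by have := Real.exp_pos (-K * δ); rw [hc0]; nlinarith [mul_nonneg this.le hL]
  set A := 4 * L / δ ^ 2 with hA
  have hA0 : 0 ≤ A := by positivity
  set β : ℝ → ℝ → ℝ := fun y t => c0 + 2 * L * heatBar K y (t - ts) + A * (y ^ 2 + 2 * (t - ts))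
    + err * (t - ts) + ε0 * (1 + (t - ts)) with hβ
  set B : ℝ → ℝ → ℝ := fun y t => Real.exp (K * y) * tailInt K δ a y t with hB
  have hsubδ : Icc 0 (δ / 2) ⊆ Icc 0 δ := Icc_subset_Icc_right (by linarith)
  have hT' : ∀ t ∈ Icc ts t0, t ∈ Ioo 0 T := fun t ht => ⟨hts.trans_le ht.1, ht.2.trans_lt ht0⟩
  have hT'' : ∀ t ∈ Icc ts t0, t ∈ Ico 0 T := fun t ht => ⟨(hT' t ht).1.le, (hT' t ht).2⟩
  have hBnn : ∀ y ∈ Icc 0 δ, ∀ t ∈ Icc ts t0, 0 ≤ B y t := fun y hy t ht =>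
    mul_nonneg (Real.exp_pos _).le (h.tail_nonneg hδ hK (hT'' t ht) hy)
  have haLy : ∀ y ∈ Icc 0 δ, ∀ t ∈ Icc ts t0, a y t ≤ L := fun y hy t ht =>
    (h.anti t (hT'' t ht) ⟨le_rfl, hδ.le⟩ hy hy.1).trans (haL t ht)
  have hqL : ∀ y ∈ Icc 0 δ, ∀ t ∈ Icc ts t0, a y t - (1 + η) * B y t ≤ L := fun y hy t ht => by
    have := mul_nonneg (by linarith : 0 ≤ 1 + η) (hBnn y hy t ht)
    linarith [haLy y hy t ht]
  have hgn : ∀ y ∈ Icc 0 δ, ∀ t ∈ Icc ts t0, 0 ≤ heatBar K y (t - ts) := fun y hy t ht => by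
    refine le_trans ?_ (gaussInt_secant ?_) <;>
    · have := hy.1; positivity
  have key := touch (X := ℝ) (ι := Unit) (S := Icc 0 (δ / 2)) isCompact_Icc (t1 := ts) (t2 := t0)
    (fun _ y t => a y t - (1 + η) * B y t - β y t) ?_ ?_ ?_ () 0 ⟨le_rfl, by linarith⟩ t0
    ⟨by linarith, le_rfl⟩
  · simp only [hβ, hB, mul_zero, Real.exp_zero, one_mul] at key
    have h1 : t0 - ts = θ := by rw [hts']; ring
    rw [h1] at key
    have h2 : heatBar K 0 θ ≤ 1 / √(1 + K ^ 2 * θ) := by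
      unfold heatBar
      simpa using gaussInt_le (ξ := 1 / √(1 + K ^ 2 * θ)) (by positivity)
    have h3 : 2 * L * heatBar K 0 θ ≤ 2 * L / √(1 + K ^ 2 * θ) := by
      calc _ ≤ 2 * L * (1 / √(1 + K ^ 2 * θ)) := mul_le_mul_of_nonneg_left h2 (by positivity)
        _ = _ := by ring
    have h4 : ε0 * (1 + θ) = e := by rw [hε0]; field_simp
    have h5 : A * (0 ^ 2 + 2 * θ) = 8 * L * θ / δ ^ 2 := by rw [hA]; ring
    rw [h4, h5] at key
    linarith
  · intro _
    have e1 : ContinuousOn (fun p : ℝ × ℝ => a p.1 p.2) (Icc 0 (δ / 2) ×ˢ Icc ts t0) :=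
      h.cont.mono (prod_mono hsubδ fun t ht => hT'' t ht)
    have e2 : ContinuousOn (fun p : ℝ × ℝ => tailInt K δ a p.1 p.2) (Icc 0 (δ / 2) ×ˢ Icc ts t0) :=
      (h.tail_cont hδ hts.le ht0 (by linarith)).mono (prod_mono (subset_univ _) le_rfl)
    have e3 : ContinuousOn (fun p : ℝ × ℝ => heatBar K p.1 (p.2 - ts)) (Icc 0 (δ / 2) ×ˢ Icc ts t0) :=
      heatBar_cont.mono (prod_mono (subset_univ _) le_rfl)
    simp only [hB, hβ]
    fun_prop
  · intro _ y hy
    have hm : ts ∈ Icc ts t0 := ⟨le_rfl, by linarith⟩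
    have e1 := hqL y (hsubδ hy) ts hm
    have e2 : 1 / 2 ≤ heatBar K y (ts - ts) := by
      refine gaussInt_ge_half ?_
      simp only [sub_self, mul_zero, add_zero, Real.sqrt_one, div_one]
      nlinarith [hy.1]
    have e3 : L ≤ 2 * L * heatBar K y (ts - ts) := by nlinarith
    have e4 : 0 ≤ A * y ^ 2 := by positivity
    simp only [hβ, sub_self, mul_zero, add_zero, mul_one] at e3 ⊢
    linarith
  · intro _ y hy t ht hq0 hle
    replace hle := hle ()
    have htI : t ∈ Icc ts t0 := ⟨ht.1.le, ht.2⟩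
    have htT := hT' t htI
    have hs : 0 ≤ t - ts := by linarith [ht.1]
    have hyδ := hsubδ hy
    have hg0 := hgn y hyδ t htI
    have hLg : 0 ≤ 2 * L * heatBar K y (t - ts) := by positivity
    have herrs : 0 ≤ err * (t - ts) := by positivity
    have hεs : 0 ≤ ε0 * (t - ts) := by positivity
    have hAs : 0 ≤ A * (t - ts) := by positivity
    have hmaxy : ∀ z ∈ Icc 0 (δ / 2), a z t - (1 + η) * B z t - β z t ≤ 0 := fun z hz =>
      hle z hz t ⟨ht.1.le, le_rfl⟩
    -- first and second `y`-derivatives of the barrier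
    have hβ1 : ∀ z, HasDerivAt (fun z => β z t) (2 * L * heatBarY K z (t - ts) + A * (2 * z)) z := by
      intro z
      refine ((((((heatBar_deriv_y K z (t - ts)).const_mul (2 * L)).const_add c0).fun_add
        ((((hasDerivAt_id z).fun_pow 2).add_const (2 * (t - ts))).const_mul A)).add_const
        (err * (t - ts))).add_const (ε0 * (1 + (t - ts)))).congr_deriv ?_
      simp
    by_cases hy2 : y = δ / 2
    · have e1 := hqL y hyδ t htI
      have e2 : A * y ^ 2 = L := by rw [hA, hy2]; field_simp; ring
      simp only [hβ] at hq0
      nlinarith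
    by_cases hy0 : y = 0
    · subst hy0
      have e1 : HasDerivWithinAt (fun z => a z t - (1 + η) * B z t - β z t)
          (ay 0 t - (1 + η) * (K * B 0 t - K * (1 - Real.exp (-K * (δ - 0))) * a 0 t)
            - (2 * L * heatBarY K 0 (t - ts) + A * (2 * 0))) (Icc 0 (δ / 2)) 0 :=
        ((((h.d1 t htT 0 hyδ).mono hsubδ).fun_sub
          (((h.avg_deriv_y (K := K) hδ ⟨htT.1.le, htT.2⟩ hyδ).const_mul (1 + η)).hasDerivWithinAt))).fun_sub
          (hβ1 0).hasDerivWithinAt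
      have e2 := right_deriv_nonpos (by linarith) e1 fun z hz => by
        rw [hq0]; exact hmaxy z hz
      have e3 := heatBar_robin (s := t - ts) hK
      have e3' : 2 * L * heatBarY K 0 (t - ts) ≤ K * (2 * L * heatBar K 0 (t - ts)) := by
        nlinarith [mul_le_mul_of_nonneg_left e3 (by positivity : 0 ≤ 2 * L)]
      have e4 := hfl t htI
      simp only [sub_zero] at e2
      set ε := Real.exp (-K * δ) with hε
      have hεp : 0 < ε := Real.exp_pos _
      have ha := haL t htI
      have ha0 := h.nonneg 0 hyδ t ⟨htT.1.le, htT.2⟩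
      -- `K` times the vanishing of `q - β`
      have e5 : K * (a 0 t - (1 + η) * B 0 t) = K * β 0 t := by
        congr 1; linarith
      have e6 : K * β 0 t = K * (1 - η * L) + 2 * ε * K * L
          + K * (2 * L * heatBar K 0 (t - ts)) + K * (A * (2 * (t - ts)) + err * (t - ts)
            + ε0 * (1 + (t - ts))) := by simp only [hβ, hc0]; ring
      have e7 : 0 < K * (A * (2 * (t - ts)) + err * (t - ts) + ε0 * (1 + (t - ts))) :=
        mul_pos hK (by nlinarith)
      have e8 : (1 + η) * ε * K * a 0 t ≤ 2 * ε * K * L := by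
        have : (1 + η) * (ε * K) ≤ 2 * (ε * K) :=
          mul_le_mul_of_nonneg_right (by linarith) (by positivity)
        calc (1 + η) * ε * K * a 0 t = (1 + η) * (ε * K) * a 0 t := by ring
          _ ≤ 2 * (ε * K) * L := mul_le_mul this ha ha0 (by positivity)
          _ = _ := by ring
      linarith
    have hyI : y ∈ Ioo 0 δ := ⟨lt_of_le_of_ne hy.1 (Ne.symm hy0), by linarith [hy.2]⟩
    have hyI2 : y ∈ Ioo 0 (δ / 2) := ⟨hyI.1, lt_of_le_of_ne hy.2 hy2⟩
    have hloc : IsLocalMax (fun z => a z t - (1 + η) * B z t - β z t) y := by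
      filter_upwards [Ioo_mem_nhds hyI2.1 hyI2.2] with z hz
      rw [hq0]; exact hmaxy z (Ioo_subset_Icc_self hz)
    have hβ2 : HasDerivAt (fun z => 2 * L * heatBarY K z (t - ts) + A * (2 * z))
        (2 * L * heatBarYY K y (t - ts) + A * 2) y := by
      refine (((heatBar_deriv_yy hs y).const_mul (2 * L)).fun_add
        (((hasDerivAt_id y).const_mul 2).const_mul A)).congr_deriv ?_
      simp
    obtain ⟨f1, f2⟩ := second_deriv_test (g := fun z => a z t - (1 + η) * B z t - β z t)
      (g1 := fun z => ay z t - (1 + η) * (K * B z t - K * (1 - Real.exp (-K * (δ - z))) * a z t)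
            - (2 * L * heatBarY K z (t - ts) + A * (2 * z)))
      (by
        filter_upwards [Ioo_mem_nhds hyI.1 hyI.2] with z hz
        have hz' := Ioo_subset_Icc_self hz
        exact ((((h.d1 t htT z hz').hasDerivAt (Icc_mem_nhds hz.1 hz.2)).fun_sub
          ((h.avg_deriv_y (K := K) hδ ⟨htT.1.le, htT.2⟩ hz').const_mul (1 + η)))).fun_sub (hβ1 z))
      ((((h.d2 t htT y hyδ).hasDerivAt (Icc_mem_nhds hyI.1 hyI.2)).fun_sub
        ((h.avg_deriv_yy (K := K) hδ htT hyI).const_mul (1 + η))).fun_sub hβ2) hloc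
    obtain ⟨D, hD, hDle⟩ := h.tail_deriv_t (K := K) hδ hK hyδ htT
    have hβt : HasDerivAt (fun t => β y t)
        (2 * L * heatBarYY K y (t - ts) + A * 2 + err + ε0) t := by
      have g1 : HasDerivAt (fun t => heatBar K y (t - ts)) (heatBarYY K y (t - ts)) t :=
        (heatBar_deriv_s hs y).comp_sub_const t ts
      have g2 : HasDerivAt (fun t => t - ts) 1 t := (hasDerivAt_id t).sub_const ts
      refine (((((g1.const_mul (2 * L)).const_add c0).fun_add
        (((g2.const_mul 2).const_add (y ^ 2)).const_mul A)).fun_add (g2.const_mul err)).fun_add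
        ((g2.const_add 1).const_mul ε0)).congr_deriv ?_
      simp
    have f3 := left_deriv_nonneg ht.1
      ((((h.pde t htT y ⟨hyI.1, hyI.2.le⟩).fun_sub
        ((hD.const_mul (Real.exp (K * y))).const_mul (1 + η))).fun_sub hβt)) hq0
      fun s hs' => hle y hy s ⟨hs'.1, hs'.2.le⟩
    -- `B_t - B_yy ≥ -2K² ε_y a`
    have f4 : Real.exp (K * y) * (-(wgt K δ y * ay y t) - K ^ 2 * Real.exp (-K * y) * a y t
        + K ^ 2 * tailInt K δ a y t) ≤ Real.exp (K * y) * D :=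
      mul_le_mul_of_nonneg_left hDle (Real.exp_pos _).le
    have f5 : Real.exp (K * y) * (-(wgt K δ y * ay y t) - K ^ 2 * Real.exp (-K * y) * a y t
        + K ^ 2 * tailInt K δ a y t) = -(K * (1 - Real.exp (-K * (δ - y))) * ay y t)
          - K ^ 2 * a y t + K ^ 2 * B y t := by
      have h1 : Real.exp (K * y) * Real.exp (-K * y) = 1 := by rw [← Real.exp_add]; simp
      rw [← exp_mul_wgt]
      simp only [hB]
      linear_combination (-K ^ 2 * a y t) * h1
    rw [f5] at f4
    set ε := Real.exp (-K * (δ - y)) with hε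
    have hεp : 0 < ε := Real.exp_pos _
    have hεle : ε ≤ Real.exp (-K * (δ / 2)) := Real.exp_le_exp.2 (by nlinarith [hy.2])
    have ha := haLy y hyδ t htI
    have ha0 := h.nonneg y hyδ t ⟨htT.1.le, htT.2⟩
    have hB0 := hBnn y hyδ t htI
    have hk := h.k_mem y hyδ
    have hSy := hS y hyδ t htI
    have hY := heatBarY_nonneg (y := y) (s := t - ts) hK
    have f6 : -(k y * ay y t) ≤ 2 * c * K * L := by
      -- `a_y = β_y + (1+η) B_y ≥ -(1+η) K a`
      have p1 : -ay y t ≤ (1 + η) * (K * a y t) := by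
        have p2 : 0 ≤ 2 * L * heatBarY K y (t - ts) + A * (2 * y) := by
          have := hy.1; positivity
        have p3 : 0 ≤ (1 + η) * (K * B y t) := by positivity
        have p4 : 0 ≤ (1 + η) * (K * ε * a y t) := by positivity
        linarith
      have p5 : (1 + η) * (K * a y t) ≤ 2 * (K * L) :=
        mul_le_mul (by linarith) (mul_le_mul_of_nonneg_left ha hK.le) (by positivity) (by norm_num)
      calc -(k y * ay y t) = k y * (-ay y t) := by ring
        _ ≤ k y * (2 * (K * L)) := mul_le_mul_of_nonneg_left (p1.trans p5) hk.1
        _ ≤ c * (2 * (K * L)) := mul_le_mul_of_nonneg_right hk.2 (by positivity)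
        _ = _ := by ring
    have f7 : (1 + η) * (2 * K ^ 2 * ε * a y t) ≤ 4 * K ^ 2 * Real.exp (-K * (δ / 2)) * L := by
      have p1 : 2 * K ^ 2 * ε * a y t ≤ 2 * K ^ 2 * Real.exp (-K * (δ / 2)) * L := by gcongr
      have p2 : (1 + η) * (2 * K ^ 2 * ε * a y t) ≤ 2 * (2 * K ^ 2 * Real.exp (-K * (δ / 2)) * L) :=
        mul_le_mul (by linarith) p1 (by positivity) (by norm_num)
      linarith
    have f8 := mul_le_mul_of_nonneg_left f4 (by linarith : 0 ≤ 1 + η)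
    simp only [hB] at f2 f8
    linarith

end Prof

/-! ### Radial profiles of the solution along a ray -/

lemma lap_radial {n : ℕ} {f : Eu n → ℝ} {φ φ1 : ℝ → ℝ} {φ2 : ℝ} {x : Eu n} (hx : 0 < ‖x‖)
    (hf : ∀ᶠ z in 𝓝 x, f z = φ ‖z‖) (h1 : ∀ᶠ ρ in 𝓝 ‖x‖, HasDerivAt φ (φ1 ρ) ρ)
    (h2 : HasDerivAt φ1 φ2 ‖x‖) : lap f x = φ2 + (n - 1) / ‖x‖ * φ1 ‖x‖ := by
  set r := ‖x‖ with hr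
  have hslice : ∀ i : Fin n, iteratedDeriv 2 (fun s : ℝ => f (x + s • EuclideanSpace.single i (1 : ℝ))) 0
      = φ2 * (x i ^ 2 / r ^ 2) + φ1 r * (1 / r - x i ^ 2 / r ^ 3) := by
    intro i
    set e : Eu n := EuclideanSpace.single i (1 : ℝ) with he
    set N : ℝ → ℝ := fun s => ‖x + s • e‖ with hN
    have hN0 : N 0 = r := by simp [hN, hr]
    have hNsq : ∀ s, N s ^ 2 = r ^ 2 + 2 * s * x i + s ^ 2 := by
      intro s
      simp only [hN, hr]
      rw [norm_add_sq_real, inner_smul_right, norm_smul, he, EuclideanSpace.inner_single_right]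
      simp
      ring
    have hNc : Continuous N := by simp only [hN]; fun_prop
    have hNpos : ∀ᶠ s in 𝓝 (0 : ℝ), 0 < N s :=
      hNc.continuousAt.eventually (lt_mem_nhds (by rw [hN0]; exact hx))
    have hNd : ∀ s, 0 < N s → HasDerivAt N ((x i + s) / N s) s := by
      intro s hs
      have e1 : N = fun s => √(r ^ 2 + 2 * s * x i + s ^ 2) := by
        funext s; rw [← hNsq, Real.sqrt_sq (norm_nonneg _)]
      have e2 : HasDerivAt (fun s : ℝ => r ^ 2 + 2 * s * x i + s ^ 2) (2 * x i + 2 * s) s := by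
        refine (((((hasDerivAt_id s).const_mul 2).mul_const (x i)).const_add (r ^ 2)).fun_add
          ((hasDerivAt_id s).fun_pow 2)).congr_deriv ?_
        simp
      have e3 := e2.sqrt (by rw [← hNsq]; positivity)
      rw [← hNsq, Real.sqrt_sq (norm_nonneg _)] at e3
      rw [← e1] at e3
      refine e3.congr_deriv ?_
      rw [show 2 * x i + 2 * s = 2 * (x i + s) by ring, mul_div_mul_left _ _ (by norm_num)]
    have htend : Tendsto N (𝓝 0) (𝓝 r) := by rw [← hN0]; exact hNc.continuousAt
    have hev : (fun s : ℝ => f (x + s • e)) =ᶠ[𝓝 0] fun s => φ (N s) := by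
      have hc : Tendsto (fun s : ℝ => x + s • e) (𝓝 0) (𝓝 x) := by
        have : Continuous fun s : ℝ => x + s • e := by fun_prop
        simpa using this.tendsto 0
      exact hc.eventually hf
    have hev1 : deriv (fun s : ℝ => f (x + s • e)) =ᶠ[𝓝 0] fun s => φ1 (N s) * ((x i + s) / N s) := by
      refine hev.deriv.trans ?_
      filter_upwards [htend.eventually h1, hNpos] with s hs hs2
      exact (hs.comp s (hNd s hs2)).deriv
    have hr0 : r ≠ 0 := hx.ne'
    have hd2 : HasDerivAt (fun s => φ1 (N s) * ((x i + s) / N s))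
        (φ2 * (x i ^ 2 / r ^ 2) + φ1 r * (1 / r - x i ^ 2 / r ^ 3)) 0 := by
      have q0 := hNd 0 (by rw [hN0]; exact hx)
      have q1 : HasDerivAt (fun s => φ1 (N s)) (φ2 * ((x i + 0) / N 0)) 0 :=
        HasDerivAt.comp (h₂ := φ1) (0 : ℝ) (by rw [hN0]; exact h2) q0
      have q2 : HasDerivAt (fun s => x i + s) 1 (0 : ℝ) := (hasDerivAt_id 0).const_add _
      refine (q1.fun_mul (q2.fun_div q0 (by rw [hN0]; exact hr0))).congr_deriv ?_
      rw [hN0]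
      simp only [add_zero]
      field_simp
    rw [iteratedDeriv_succ, iteratedDeriv_one, hev1.deriv_eq, hd2.deriv]
  unfold lap
  rw [Finset.sum_congr rfl fun i _ => hslice i, Finset.sum_add_distrib, ← Finset.mul_sum,
    ← Finset.mul_sum, ← Finset.sum_div, Finset.sum_sub_distrib]
  have hsum : ∑ i, x i ^ 2 = r ^ 2 := by
    rw [hr, EuclideanSpace.norm_sq_eq]; simp
  have hr0 : r ≠ 0 := hx.ne'
  have hsum3 : ∑ i, x i ^ 2 / r ^ 3 = 1 / r := by
    rw [← Finset.sum_div, hsum]; field_simp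
  rw [hsum, hsum3]
  simp
  field_simp

/-- The point at distance `y` from the boundary point `x₀` on the radius through `x₀`. -/
noncomputable def rayPt {n : ℕ} (R : ℝ) (x0 : Eu n) (y : ℝ) : Eu n := x0 + (-y) • (R⁻¹ • x0)

/-- First derivative on `[0,R]` of a function of the boundary distance. -/
noncomputable def sd1 (R : ℝ) (p : ℝ → ℝ) : ℝ → ℝ := derivWithin p (Icc 0 R)

/-- Second derivative on `[0,R]` of a function of the boundary distance. -/
noncomputable def sd2 (R : ℝ) (p : ℝ → ℝ) : ℝ → ℝ := derivWithin (sd1 R p) (Icc 0 R)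

lemma sd_spec {R : ℝ} (hR : 0 < R) {p : ℝ → ℝ} (hp : ContDiffOn ℝ 2 p (Icc 0 R)) :
    (∀ y ∈ Icc 0 R, HasDerivWithinAt p (sd1 R p y) (Icc 0 R) y) ∧
    (∀ y ∈ Icc 0 R, HasDerivWithinAt (sd1 R p) (sd2 R p y) (Icc 0 R) y) ∧
    ContinuousOn (sd2 R p) (Icc 0 R) := by
  have hu := uniqueDiffOn_Icc hR
  have h1 : ContDiffOn ℝ 1 (sd1 R p) (Icc 0 R) := hp.derivWithin hu (by norm_num)
  refine ⟨fun y hy => ((hp.differentiableOn (by norm_num)) y hy).hasDerivWithinAt,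
    fun y hy => ((h1.differentiableOn (by norm_num)) y hy).hasDerivWithinAt, ?_⟩
  exact h1.continuousOn_derivWithin hu (by norm_num)

section profile

variable {n : ℕ} {R T l1 l2 : ℝ} {u v : Eu n → ℝ → ℝ} {x0 : Eu n}

lemma norm_rayPt (hR : 0 < R) (hx0 : ‖x0‖ = R) {y : ℝ} (hy : y ≤ R) : ‖rayPt R x0 y‖ = R - y := by
  unfold rayPt
  rw [norm_ray hR hx0 (by linarith)]
  ring

lemma rayPt_mem (hR : 0 < R) (hx0 : ‖x0‖ = R) {y : ℝ} (hy : y ∈ Icc 0 R) :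
    rayPt R x0 y ∈ closedBall (0 : Eu n) R := by
  rw [mem_closedBall_zero_iff, norm_rayPt hR hx0 hy.2]; linarith [hy.1]

lemma rayPt_zero : rayPt R x0 0 = x0 := by simp [rayPt]

lemma Half.slice_c2 (h : Half R T l1 u v) (hR : 0 < R) (hx0 : ‖x0‖ = R) {t : ℝ} (ht : t ∈ Ioo 0 T) :
    ContDiffOn ℝ 2 (fun y => u (rayPt R x0 y) t) (Icc 0 R) := by
  refine (h.c2 t ht).comp (f := rayPt R x0) ?_ fun y hy => rayPt_mem hR hx0 hy
  unfold rayPt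
  fun_prop

lemma Half.lap_slice (hR : 0 < R) (hl1 : 0 < l1) (hl2 : 0 < l2) (hu : Half R T l1 u v)
    (hv : Half R T l2 v u) (hx0 : ‖x0‖ = R) {t : ℝ} (ht : t ∈ Ioo 0 T) {y : ℝ} (hy : y ∈ Ioo 0 R) :
    lap (fun z => u z t) (rayPt R x0 y) = sd2 R (fun y => u (rayPt R x0 y) t) y
      - (n - 1) / (R - y) * sd1 R (fun y => u (rayPt R x0 y) t) y := by
  obtain ⟨s1, s2, -⟩ := sd_spec hR (hu.slice_c2 hR hx0 ht)
  set p := fun y => u (rayPt R x0 y) t with hp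
  have hnorm : ‖rayPt R x0 y‖ = R - y := norm_rayPt hR hx0 hy.2.le
  have hd : ∀ z, HasDerivAt (fun ρ => R - ρ) (-1) z := fun z => by
    simpa using (hasDerivAt_id z).const_sub R
  have key := lap_radial (f := fun z => u z t) (φ := fun ρ => p (R - ρ))
    (φ1 := fun ρ => -sd1 R p (R - ρ)) (φ2 := sd2 R p y) (x := rayPt R x0 y)
    (by rw [hnorm]; linarith [hy.2]) ?_ ?_ ?_
  · rw [key, hnorm]
    rw [show R - (R - y) = y by ring]
    ring
  · have : ∀ᶠ z in 𝓝 (rayPt R x0 y), z ∈ ball (0 : Eu n) R := isOpen_ball.mem_nhds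
      (by rw [mem_ball_zero_iff, hnorm]; linarith [hy.1])
    filter_upwards [this] with z hz
    have hz' : ‖z‖ < R := by simpa using hz
    refine radial hR hl1 hl2 hu hv (ball_subset_closedBall hz) ?_ ⟨ht.1.le, ht.2⟩
    rw [norm_rayPt hR hx0 (by linarith [norm_nonneg z])]
    ring
  · rw [hnorm]
    filter_upwards [Ioo_mem_nhds (sub_pos.2 hy.2) (by linarith [hy.1] : R - y < R)] with ρ hρ
    have hm : R - ρ ∈ Ioo 0 R := ⟨by linarith [hρ.2], by linarith [hρ.1]⟩
    exact (((s1 _ (Ioo_subset_Icc_self hm)).hasDerivAt (Icc_mem_nhds hm.1 hm.2)).comp ρ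
      (hd ρ)).congr_deriv (by ring)
  · rw [hnorm]
    have e : R - (R - y) = y := by ring
    have hm : R - (R - y) ∈ Ioo 0 R := by rw [e]; exact hy
    exact (((s2 _ (Ioo_subset_Icc_self hm)).hasDerivAt (Icc_mem_nhds hm.1 hm.2)).comp (R - y)
      (hd (R - y))).fun_neg.congr_deriv (by rw [e]; ring)

lemma Half.slice_flux (h : Half R T l1 u v) (hR : 0 < R) (hx0 : ‖x0‖ = R) {t : ℝ} (ht : t ∈ Ioo 0 T) :
    sd1 R (fun y => u (rayPt R x0 y) t) 0 = -Real.exp (v x0 t) := by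
  have h1 := h.bc x0 hx0 t ht
  have h2 : HasDerivAt (fun y => u (rayPt R x0 y) t) (Real.exp (v x0 t) * (-1)) 0 :=
    HasDerivAt.comp (h₂ := fun s => u (x0 + s • (R⁻¹ • x0)) t) (h := fun y : ℝ => -y) (0 : ℝ)
      (by simpa using h1) (hasDerivAt_neg' (0 : ℝ))
  unfold sd1
  rw [h2.hasDerivWithinAt.derivWithin (uniqueDiffOn_Icc hR 0 ⟨le_rfl, hR.le⟩)]
  ring

/-- The mean `(u+v)/2` along a radius, as a function of the distance to the boundary, is a
profile in the sense of `Prof`. -/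
lemma prof_mean (hn : 1 ≤ n) (hR : 0 < R) (hl1 : 0 < l1) (hl2 : 0 < l2) (hu : Half R T l1 u v)
    (hv : Half R T l2 v u) (hx0 : ‖x0‖ = R) :
    Prof (R / 2) T (2 * (n - 1) / R) (fun y => (n - 1) / (R - y))
      (fun y t => (u (rayPt R x0 y) t + v (rayPt R x0 y) t) / 2)
      (fun y t => (sd1 R (fun y => u (rayPt R x0 y) t) y + sd1 R (fun y => v (rayPt R x0 y) t) y) / 2)
      (fun y t => (sd2 R (fun y => u (rayPt R x0 y) t) y + sd2 R (fun y => v (rayPt R x0 y) t) y) / 2)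
      (fun y t => (l1 * Real.exp (v (rayPt R x0 y) t) + l2 * Real.exp (u (rayPt R x0 y) t)) / 2) := by
  have hsub : Icc 0 (R / 2) ⊆ Icc 0 R := Icc_subset_Icc_right (by linarith)
  have hn' : (1 : ℝ) ≤ n := by exact_mod_cast hn
  have hmem : ∀ y ∈ Icc 0 (R / 2), rayPt R x0 y ∈ closedBall (0 : Eu n) R := fun y hy =>
    rayPt_mem hR hx0 (hsub hy)
  have hrc : Continuous (rayPt R x0) := by unfold rayPt; fun_prop
  have hspec := fun t ht => sd_spec hR (hu.slice_c2 hR hx0 (t := t) ht)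
  have hspec' := fun t ht => sd_spec hR (hv.slice_c2 hR hx0 (t := t) ht)
  have hsc : ∀ {w z : Eu n → ℝ → ℝ} {l : ℝ}, Half R T l w z → ∀ t ∈ Ioo 0 T,
      ContinuousOn (fun y => w (rayPt R x0 y) t) (Icc 0 (R / 2)) := fun hw t ht =>
    (hw.slice_c2 hR hx0 ht).continuousOn.mono hsub
  have hjc : ∀ {w z : Eu n → ℝ → ℝ} {l : ℝ}, Half R T l w z →
      ContinuousOn (fun p : ℝ × ℝ => w (rayPt R x0 p.1) p.2) (Icc 0 (R / 2) ×ˢ Ico 0 T) := fun hw =>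
    hw.cont.comp (f := fun p : ℝ × ℝ => (rayPt R x0 p.1, p.2))
      ((hrc.comp continuous_fst).prodMk continuous_snd).continuousOn
      fun p hp => ⟨hmem _ hp.1, hp.2⟩
  refine ⟨?_, ?_, ?_, ?_, ?_, ?_, ?_, ?_, ?_, ?_, ?_, ?_⟩
  · exact ((hjc hu).add (hjc hv)).div_const 2
  · intro y hy t ht
    have := hu.nonneg hR hl1 (hmem y hy) ht
    have := hv.nonneg hR hl2 (hmem y hy) ht
    positivity
  · intro t ht y1 h1 y2 h2 h12
    have hle : ‖rayPt R x0 y2‖ ≤ ‖rayPt R x0 y1‖ := by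
      rw [norm_rayPt hR hx0 (hsub h1).2, norm_rayPt hR hx0 (hsub h2).2]; linarith
    have q1 := radial_mono hR hl1 hl2 hu hv (hmem y1 h1) hle ht
    have q2 := radial_mono hR hl2 hl1 hv hu (hmem y1 h1) hle ht
    simp only
    linarith
  · intro t ht y hy
    exact ((((hspec t ht).1 y (hsub hy)).add ((hspec' t ht).1 y (hsub hy))).div_const 2).mono hsub
  · intro t ht y hy
    exact ((((hspec t ht).2.1 y (hsub hy)).add ((hspec' t ht).2.1 y (hsub hy))).div_const 2).mono hsub
  · intro t ht
    exact (((hspec t ht).2.2.add (hspec' t ht).2.2).div_const 2).mono hsub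
  · refine continuousOn_const.div (by fun_prop) fun y hy => ?_
    have := hy.2
    exact (by linarith : 0 < R - y).ne'
  · intro t ht
    exact ((continuousOn_const.mul (hsc hv t ht).rexp).add
      (continuousOn_const.mul (hsc hu t ht).rexp)).div_const 2
  · intro y hy
    have h1 : R / 2 ≤ R - y := by linarith [hy.2]
    refine ⟨div_nonneg (by linarith) (by linarith), ?_⟩
    rw [div_le_div_iff₀ (by linarith) hR]
    nlinarith
  · intro y hy t ht
    positivity
  · intro t ht y hy
    have hyR : y ∈ Ioo 0 R := ⟨hy.1, by linarith [hy.2]⟩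
    have hb : rayPt R x0 y ∈ ball (0 : Eu n) R := by
      rw [mem_ball_zero_iff, norm_rayPt hR hx0 hyR.2.le]; linarith [hy.1]
    have h1 := hu.pde _ hb t ht
    have h2 := hv.pde _ hb t ht
    rw [Half.lap_slice hR hl1 hl2 hu hv hx0 ht hyR] at h1
    rw [Half.lap_slice hR hl2 hl1 hv hu hx0 ht hyR] at h2
    refine ((h1.add h2).div_const 2).congr_deriv ?_
    ring
  · intro t ht
    have ha : 0 < t / 2 := by linarith [ht.1]
    obtain ⟨C, hC0, hC⟩ := lip_time hR hl1 hl2 hu hv ha (by linarith [ht.1, ht.2])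
      (t2 := (t + T) / 2) (by linarith [ht.2])
    refine ⟨C, Icc (t / 2) ((t + T) / 2), Icc_mem_nhds (by linarith [ht.1]) (by linarith [ht.2]),
      fun s hs => ⟨by linarith [hs.1], by linarith [hs.2, ht.2]⟩, ?_⟩
    have main : ∀ y ∈ Icc 0 (R / 2), ∀ t1 ∈ Icc (t / 2) ((t + T) / 2),
        ∀ t2 ∈ Icc (t / 2) ((t + T) / 2), t1 ≤ t2 →
        |(u (rayPt R x0 y) t1 + v (rayPt R x0 y) t1) / 2 -
          (u (rayPt R x0 y) t2 + v (rayPt R x0 y) t2) / 2| ≤ C * |t1 - t2| := by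
      intro y hy t1 h1 t2 h2 h12
      obtain ⟨q1, q2⟩ := hC _ (hmem y hy) t1 h1 t2 h2 h12
      rw [abs_le] at q1 q2
      rw [abs_of_nonpos (by linarith : t1 - t2 ≤ 0), abs_le]
      constructor <;> linarith
    intro y hy t1 h1 t2 h2
    rcases le_total t1 t2 with h12 | h12
    · exact main y hy t1 h1 t2 h2 h12
    · rw [abs_sub_comm, abs_sub_comm t1]; exact main y hy t2 h2 t1 h1 h12

end profile

/-! ### Asymptotics of the error terms -/

lemma tendsto_log_sq_mul_rpow {s : ℝ} (hs : 0 < s) :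
    Tendsto (fun K : ℝ => Real.log K ^ 2 * K ^ (-s)) atTop (𝓝 0) := by
  have h := (isLittleO_log_rpow_atTop (by linarith : 0 < s / 2)).tendsto_div_nhds_zero
  have h2 := h.pow 2
  simp only [ne_eq, OfNat.ofNat_ne_zero, not_false_eq_true, zero_pow] at h2
  refine h2.congr' ?_
  filter_upwards [eventually_gt_atTop 0] with K hK
  rw [div_pow, ← Real.rpow_natCast (K ^ (s / 2)), ← Real.rpow_mul hK.le, Real.rpow_neg hK.le,
    div_eq_mul_inv]
  norm_num

lemma tendsto_log_mul_rpow {s : ℝ} (hs : 0 < s) :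
    Tendsto (fun K : ℝ => Real.log K * K ^ (-s)) atTop (𝓝 0) := by
  have h := (isLittleO_log_rpow_atTop hs).tendsto_div_nhds_zero
  refine h.congr' ?_
  filter_upwards [eventually_gt_atTop 0] with K hK
  rw [Real.rpow_neg hK.le, div_eq_mul_inv]

lemma tendsto_log_sq_mul_exp (p : ℝ) {b : ℝ} (hb : 0 < b) :
    Tendsto (fun K : ℝ => Real.log K ^ 2 * (K ^ p * Real.exp (-b * K))) atTop (𝓝 0) := by
  have h := (tendsto_log_sq_mul_rpow one_pos).mul
    (tendsto_rpow_mul_exp_neg_mul_atTop_nhds_zero (p + 1) b hb)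
  simp only [mul_zero] at h
  refine h.congr' ?_
  filter_upwards [eventually_gt_atTop 0] with K hK
  rw [Real.rpow_add hK, Real.rpow_one, Real.rpow_neg hK.le, Real.rpow_one]
  field_simp

lemma tendsto_log_mul_exp {b : ℝ} (hb : 0 < b) :
    Tendsto (fun K : ℝ => Real.log K * Real.exp (-b * K)) atTop (𝓝 0) := by
  have h := (tendsto_log_mul_rpow one_pos).mul
    (tendsto_rpow_mul_exp_neg_mul_atTop_nhds_zero 1 b hb)
  simp only [mul_zero] at h
  refine h.congr' ?_
  filter_upwards [eventually_gt_atTop 0] with K hK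
  rw [Real.rpow_one, Real.rpow_neg hK.le, Real.rpow_one]
  field_simp

/-- With `θ = K^{-3/2}`, the error terms of `Prof.gain` and of `Peak.abs_diff_le` are
`o(1/log K)`. -/
lemma errors_small (D γ δ c l : ℝ) (hγ : 0 < γ) (hδ : 0 < δ) :
    ∀ᶠ K : ℝ in atTop, Real.log K * (D * K ^ (-γ) / 2
      + (2 * Real.exp (-K * δ) * Real.log K
        + 2 * Real.log K / √(1 + K ^ 2 * K ^ (-(3 / 2) : ℝ))
        + 8 * Real.log K * K ^ (-(3 / 2) : ℝ) / δ ^ 2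
        + (l * K + 2 * c * K * Real.log K + 4 * K ^ 2 * Real.exp (-K * (δ / 2)) * Real.log K)
            * K ^ (-(3 / 2) : ℝ))
      + 4 * Real.exp (-K * δ)) ≤ 1 / 4 := by
  have hlim := ((((((((tendsto_log_mul_rpow hγ).const_mul (D / 2)).add
    ((tendsto_log_sq_mul_exp 0 hδ).const_mul 2)).add
    ((tendsto_log_sq_mul_rpow (by norm_num : (0 : ℝ) < 1 / 4)).const_mul 2)).add
    ((tendsto_log_sq_mul_rpow (by norm_num : (0 : ℝ) < 3 / 2)).const_mul (8 / δ ^ 2))).add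
    ((tendsto_log_mul_rpow (by norm_num : (0 : ℝ) < 1 / 2)).const_mul l)).add
    ((tendsto_log_sq_mul_rpow (by norm_num : (0 : ℝ) < 1 / 2)).const_mul (2 * c))).add
    ((tendsto_log_sq_mul_exp (1 / 2) (half_pos hδ)).const_mul 4)).add
    ((tendsto_log_mul_exp hδ).const_mul 4)
  simp only [mul_zero, add_zero] at hlim
  filter_upwards [hlim.eventually (ge_mem_nhds (by norm_num : (0 : ℝ) < 1 / 4)),
    eventually_ge_atTop 1] with K hK hK1
  refine le_trans ?_ hK
  have hK0 : 0 < K := by linarith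
  have hL : 0 ≤ Real.log K := Real.log_nonneg hK1
  have e1 : K * K ^ (-(3 / 2) : ℝ) = K ^ (-(1 / 2) : ℝ) := by
    nth_rewrite 1 [← Real.rpow_one K]
    rw [← Real.rpow_add hK0]; norm_num
  have e2 : K ^ 2 * K ^ (-(3 / 2) : ℝ) = K ^ (1 / 2 : ℝ) := by
    rw [← Real.rpow_natCast K 2, ← Real.rpow_add hK0]; norm_num
  have e3 : 1 / √(1 + K ^ 2 * K ^ (-(3 / 2) : ℝ)) ≤ K ^ (-(1 / 4) : ℝ) := by
    rw [e2, Real.rpow_neg hK0.le, ← one_div]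
    have : K ^ (1 / 4 : ℝ) ≤ √(1 + K ^ (1 / 2 : ℝ)) := by
      refine Real.le_sqrt_of_sq_le ?_
      rw [← Real.rpow_natCast, ← Real.rpow_mul hK0.le]
      norm_num
    exact one_div_le_one_div_of_le (by positivity) this
  have e4 : 2 * Real.log K ^ 2 * (1 / √(1 + K ^ 2 * K ^ (-(3 / 2) : ℝ)))
      ≤ 2 * Real.log K ^ 2 * K ^ (-(1 / 4) : ℝ) := by gcongr
  have e5 : Real.exp (-K * δ) = Real.exp (-δ * K) := by ring_nf
  have e6 : Real.exp (-K * (δ / 2)) = Real.exp (-(δ / 2) * K) := by ring_nf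
  rw [e5, e6, Real.rpow_zero]
  calc _ = D / 2 * (Real.log K * K ^ (-γ)) + 2 * (Real.log K ^ 2 * (1 * Real.exp (-δ * K)))
        + 2 * Real.log K ^ 2 * (1 / √(1 + K ^ 2 * K ^ (-(3 / 2) : ℝ)))
        + 8 / δ ^ 2 * (Real.log K ^ 2 * K ^ (-(3 / 2) : ℝ))
        + l * (Real.log K * (K * K ^ (-(3 / 2) : ℝ)))
        + 2 * c * (Real.log K ^ 2 * (K * K ^ (-(3 / 2) : ℝ)))
        + 4 * (Real.log K ^ 2 * (K ^ 2 * K ^ (-(3 / 2) : ℝ) * Real.exp (-(δ / 2) * K)))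
        + 4 * (Real.log K * Real.exp (-δ * K)) := by ring
    _ ≤ _ := by rw [e2] at e4; rw [e1, e2]; linarith

/-! ### The rate at peak times -/

/-- The chord bound for the exponential on `[0,L]` that turns the flux into a Robin flux. -/
lemma exp_le_chord {K L w : ℝ} (hK : Real.exp L = K) (hL : 1 ≤ L) (h0 : 0 ≤ w) (h1 : w ≤ L) :
    Real.exp w ≤ K * (1 - 1 / (2 * L) * L) + 1 / (2 * L) * K * w := by
  have hL0 : 0 < L := by linarith
  have hd : 0 ≤ L - w := by linarith
  have e1 : Real.exp w = K * Real.exp (-(L - w)) := by rw [← hK, ← Real.exp_add]; ring_nf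
  have e2 : Real.exp (-(L - w)) ≤ 1 / (1 + (L - w)) := by
    rw [Real.exp_neg, ← one_div]
    exact one_div_le_one_div_of_le (by linarith) (by linarith [Real.add_one_le_exp (L - w)])
  have e3 : 1 / (1 + (L - w)) ≤ 1 - (L - w) / (2 * L) := by
    rw [div_le_iff₀ (by linarith)]
    have : (1 - (L - w) / (2 * L)) * (1 + (L - w))
        = 1 + (L - w) * ((L - 1) + w) / (2 * L) := by field_simp; ring
    rw [this]
    have : 0 ≤ (L - w) * ((L - 1) + w) / (2 * L) :=
      div_nonneg (mul_nonneg hd (by linarith)) (by linarith)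
    linarith
  have hK0 : 0 < K := hK ▸ Real.exp_pos L
  calc Real.exp w = K * Real.exp (-(L - w)) := e1
    _ ≤ K * (1 - (L - w) / (2 * L)) := mul_le_mul_of_nonneg_left (e2.trans e3) hK0.le
    _ = _ := by field_simp; ring

section rate

variable {n : ℕ} {R T l1 l2 : ℝ} {u v : Eu n → ℝ → ℝ}

set_option maxHeartbeats 2000000 in
/-- High peaks occur close to the final time. -/
lemma Peak.rate (hn : 1 ≤ n) (hR : 0 < R) (hl1 : 0 < l1) (hl2 : 0 < l2) (hT : 0 < T)
    (hu : Half R T l1 u v) (hv : Half R T l2 v u) :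
    ∃ K0 : ℝ, ∀ x0 : Eu n, ∀ t0 K, K0 ≤ K → Peak R T u v x0 t0 K → K * (T - t0) ≤ 1 := by
  obtain ⟨γ, hγ, D, hD, K1, hdiff⟩ := Peak.abs_diff_le hR hl1 hl2 hT hu hv
  have hn' : (1 : ℝ) ≤ n := by exact_mod_cast hn
  have hδ : 0 < R / 2 := by positivity
  have ev1 := errors_small D γ (R / 2) (2 * (n - 1) / R) (l1 + l2) hγ hδ
  have ev2 : ∀ᶠ K : ℝ in atTop, K ^ (-(3 / 2) : ℝ) < T / 2 :=
    (tendsto_rpow_neg_atTop (by norm_num : (0 : ℝ) < 3 / 2)).eventually (gt_mem_nhds (by positivity))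
  have ev3 : ∀ᶠ K : ℝ in atTop, Real.exp (-K * (R / 2)) ≤ 1 / 2 := by
    have : Tendsto (fun K : ℝ => Real.exp (-(K * (R / 2)))) atTop (𝓝 0) :=
      Real.tendsto_exp_neg_atTop_nhds_zero.comp (tendsto_id.atTop_mul_const hδ)
    filter_upwards [this.eventually (ge_mem_nhds (by norm_num : (0 : ℝ) < 1 / 2))] with K hK
    rwa [neg_mul]
  have ev4 : ∀ᶠ K : ℝ in atTop, 8 * Real.log K + 1 ≤ K := by
    have h := isLittleO_log_id_atTop.bound (by norm_num : (0 : ℝ) < 1 / 16)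
    filter_upwards [h, eventually_ge_atTop 2] with K hK hK2
    simp only [id, Real.norm_eq_abs] at hK
    rw [abs_of_nonneg (by linarith : (0 : ℝ) ≤ K)] at hK
    linarith [le_abs_self (Real.log K)]
  obtain ⟨K0, hK0⟩ := eventually_atTop.1 (((((ev1.and ev2).and ev3).and ev4).and
    (eventually_ge_atTop K1)).and (eventually_ge_atTop (Real.exp 1)))
  refine ⟨K0, fun x0 t0 K hK hP => ?_⟩
  obtain ⟨⟨⟨⟨⟨e1, e2⟩, e3⟩, e4⟩, e5⟩, e6⟩ := hK0 K hK
  have hKpos : 0 < K := (Real.exp_pos 1).trans_le e6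
  set L := Real.log K with hL
  have hL1 : 1 ≤ L := by rw [hL, Real.le_log_iff_exp_le hKpos]; exact e6
  have hL0 : 0 < L := by linarith
  have hexpL : Real.exp L = K := Real.exp_log hKpos
  set θ := K ^ (-(3 / 2) : ℝ) with hθ
  have hθ0 : 0 < θ := Real.rpow_pos_of_pos hKpos _
  have hts : 0 < t0 - θ := by linarith [hP.half_le]
  have hx0 := hP.norm_eq
  have hx0m : x0 ∈ closedBall (0 : Eu n) R := by simp [hx0]
  have hpr := prof_mean hn hR hl1 hl2 hu hv hx0
  have hc : 0 ≤ 2 * ((n : ℝ) - 1) / R := div_nonneg (by linarith) hR.le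
  have hle : ∀ x ∈ closedBall (0 : Eu n) R, ∀ t ∈ Icc (t0 - θ) t0, u x t ≤ L ∧ v x t ≤ L := by
    intro x hx t ht
    obtain ⟨q1, q2⟩ := hP.le x hx t ⟨by linarith [ht.1], ht.2⟩
    exact ⟨(Real.le_log_iff_exp_le hKpos).2 q1, (Real.le_log_iff_exp_le hKpos).2 q2⟩
  have hgain := hpr.gain hδ hKpos (t0 := t0) (θ := θ) (L := L) (η := 1 / (2 * L))
    (S0 := (l1 + l2) * K) hθ0 hts hP.lt (by positivity)
    (by rw [div_le_one (by positivity)]; linarith) hL0.le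
    (by rw [show 1 / (2 * L) * L = 1 / 2 by field_simp]; norm_num) (by positivity) hc
    (fun t ht => by
      simp only [rayPt_zero]
      have := hle x0 hx0m t ht
      linarith [this.1, this.2])
    (fun y hy t ht => by
      have hm : rayPt R x0 y ∈ closedBall (0 : Eu n) R :=
        rayPt_mem hR hx0 ⟨hy.1, by linarith [hy.2]⟩
      obtain ⟨q1, q2⟩ := hP.le _ hm t ⟨by linarith [ht.1], ht.2⟩
      have := mul_le_mul_of_nonneg_left q1 hl2.le
      have := mul_le_mul_of_nonneg_left q2 hl1.le
      have : 0 ≤ (l1 + l2) * K := by positivity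
      linarith)
    (fun t ht => by
      have htT : t ∈ Ioo 0 T := ⟨by linarith [ht.1], ht.2.trans_lt hP.lt⟩
      have htT' : t ∈ Ico 0 T := ⟨htT.1.le, htT.2⟩
      simp only [rayPt_zero]
      rw [hu.slice_flux hR hx0 htT, hv.slice_flux hR hx0 htT]
      obtain ⟨q1, q2⟩ := hle x0 hx0m t ht
      have p1 := exp_le_chord hexpL hL1 (hu.nonneg hR hl1 hx0m htT') q1
      have p2 := exp_le_chord hexpL hL1 (hv.nonneg hR hl2 hx0m htT') q2
      linarith)
  simp only [rayPt_zero] at hgain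
  -- the mean at the peak is almost `L`
  have hmean : L - D * K ^ (-γ) / 2 ≤ (u x0 t0 + v x0 t0) / 2 := by
    have h1 := abs_le.1 (hdiff x0 t0 K e5 hP)
    rcases hP.eq with h2 | h2
    · have : u x0 t0 = L := by rw [hL, ← h2, Real.log_exp]
      linarith [h1.1, h1.2]
    · have : v x0 t0 = L := by rw [hL, ← h2, Real.log_exp]
      linarith [h1.1, h1.2]
  set E := tailInt K (R / 2) (fun y t => (u (rayPt R x0 y) t + v (rayPt R x0 y) t) / 2) 0 t0
  set ε := Real.exp (-K * (R / 2)) with hε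
  have hεpos : 0 < ε := Real.exp_pos _
  set W := -Real.log (1 - ε) with hW
  have hWle : W ≤ 2 * ε := by
    have h1 := Real.one_sub_inv_le_log_of_pos (by linarith : 0 < 1 - ε)
    have h2 : (1 - ε)⁻¹ ≤ 1 + 2 * ε := by
      rw [inv_le_comm₀ (by linarith) (by positivity), inv_le_iff_one_le_mul₀ (by positivity)]
      nlinarith
    linarith
  have hW0 : 0 ≤ W := by
    have := Real.log_nonpos (by linarith : 0 ≤ 1 - ε) (by linarith)
    linarith
  set Err := 2 * ε * L + 2 * L / √(1 + K ^ 2 * θ) + 8 * L * θ / (R / 2) ^ 2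
    + ((l1 + l2) * K + 2 * (2 * (n - 1) / R) * K * L + 4 * K ^ 2 * Real.exp (-K * (R / 2 / 2)) * L) * θ
    with hErr
  have hTot : D * K ^ (-γ) / 2 + Err + 4 * ε ≤ 1 / (4 * L) := by
    rw [show 1 / (4 * L) = 1 / 4 / L by field_simp, le_div_iff₀ hL0, mul_comm]
    exact e1
  have hηL : 1 / (2 * L) * L = 1 / 2 := by field_simp
  have hE : L - Real.log (1 - ε) - 1 + 1 / (8 * L) ≤ E := by
    have h1 : L - D * K ^ (-γ) / 2 - 1 / 2 - Err ≤ (1 + 1 / (2 * L)) * E := by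
      rw [hηL] at hgain; linarith
    have h2 : (1 + 1 / (2 * L)) * (L + W - 1 + 1 / (8 * L)) ≤ (1 + 1 / (2 * L)) * E := by
      refine le_trans ?_ h1
      have h3 : (1 + 1 / (2 * L)) * (L + W - 1 + 1 / (8 * L))
          = L - 1 / 2 - 3 / (8 * L) + 1 / (16 * L ^ 2) + (1 + 1 / (2 * L)) * W := by
        field_simp; ring
      have h4 : 1 / (2 * L) ≤ 1 := by rw [div_le_one (by positivity)]; linarith
      have h5 : (1 + 1 / (2 * L)) * W ≤ 2 * (2 * ε) :=
        mul_le_mul (by linarith) hWle hW0 (by norm_num)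
      have h6 : 1 / (16 * L ^ 2) ≤ 1 / (8 * L) := by
        apply one_div_le_one_div_of_le (by positivity)
        have h66 : L * 1 ≤ L * L := mul_le_mul_of_nonneg_left hL1 hL0.le
        rw [pow_two]; linarith only [h66, hL0]
      have h7 : 3 / (8 * L) = 1 / (8 * L) + 1 / (4 * L) := by field_simp; norm_num
      rw [h3]
      linarith
    have := le_of_mul_le_mul_left h2 (by positivity)
    linarith
  have hx1 : 1 / (8 * L) ≤ 1 := by rw [div_le_one (by positivity)]; linarith
  have hlife := hpr.life_bound hδ hKpos
    (fun t htT => by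
      simp only [rayPt_zero]
      rw [hu.slice_flux hR hx0 htT, hv.slice_flux hR hx0 htT]
      have q1 : Real.exp ((u x0 t + v x0 t) / 2) = Real.exp (u x0 t / 2) * Real.exp (v x0 t / 2) := by
        rw [← Real.exp_add]; ring_nf
      have q2 : Real.exp (u x0 t) = Real.exp (u x0 t / 2) ^ 2 := by
        rw [← Real.exp_nat_mul]; ring_nf
      have q3 : Real.exp (v x0 t) = Real.exp (v x0 t / 2) ^ 2 := by
        rw [← Real.exp_nat_mul]; ring_nf
      rw [q1, q2, q3]
      nlinarith [sq_nonneg (Real.exp (u x0 t / 2) - Real.exp (v x0 t / 2))])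
    (t0 := t0) (by linarith) (x0 := 1 / (8 * L)) (by positivity) hx1 hE
  have h8 : Real.log (1 / (1 / (8 * L))) ≤ 8 * L - 1 := by
    rw [one_div_one_div]
    exact Real.log_le_sub_one_of_pos (by positivity)
  have h9 : K * (K * (T - t0)) ≤ K * 1 := by
    have h10 : K * (K * (T - t0)) = K ^ 2 * (T - t0) := by ring
    linarith only [h10, hlife, h8, e4]
  exact le_of_mul_le_mul_left h9 hKpos

end rate

/-- Theorem 3.2 (upper blow-up rate): let `(u,v)` be a classical solution of problem (1.1)
blowing up at time `T < ∞`.  Then there is a constant `C > 0` such that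
`u(R,t) ≤ log C − log(T−t)` and `v(R,t) ≤ log C − log(T−t)` for all `t ∈ (0,T)`. -/
theorem upper_blowup_rate {n : ℕ} (hn : 1 ≤ n) {R T lam1 lam2 : ℝ}
    (hR : 0 < R) (hT : 0 < T) (hlam1 : 0 < lam1) (hlam2 : 0 < lam2)
    {u v : EuclideanSpace ℝ (Fin n) → ℝ → ℝ} {u₀ v₀ : EuclideanSpace ℝ (Fin n) → ℝ}
    (hdata : AdmissibleData n R u₀ v₀)
    (hsol : IsClassicalSolution n R T lam1 lam2 u v u₀ v₀)
    (hblow : BlowsUpAt n R T u v) :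
    ∃ C : ℝ, 0 < C ∧ ∀ t ∈ Ioo (0 : ℝ) T, ∀ x : EuclideanSpace ℝ (Fin n), ‖x‖ = R →
      u x t ≤ Real.log C - Real.log (T - t) ∧
      v x t ≤ Real.log C - Real.log (T - t) := by
  obtain ⟨hu, hv⟩ := half_of_solution hdata hsol
  obtain ⟨K0, hrate⟩ := Peak.rate hn hR hlam1 hlam2 hT hu hv
  obtain ⟨M, hM⟩ := exists_bound hu hv (by linarith : T / 2 < T)
  set x0 : EuclideanSpace ℝ (Fin n) := EuclideanSpace.single (⟨0, hn⟩ : Fin n) R with hx0d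
  have hx0 : ‖x0‖ = R := by simp [hx0d, abs_of_pos hR]
  have hx0m : x0 ∈ closedBall (0 : EuclideanSpace ℝ (Fin n)) R := by simp [hx0]
  set K1 := max K0 (Real.exp M + 1) with hK1
  have hK1pos : 0 < K1 := lt_of_lt_of_le (by positivity) (le_max_right K0 (Real.exp M + 1))
  -- Below the threshold `K1` the bound holds with constant `K1 * T`, above it with constant `1`.
  refine ⟨max 1 (K1 * T), by positivity, fun t ht x hx => ?_⟩
  have hTt : 0 < T - t := by linarith [ht.2]
  have hcu : ContinuousOn (fun s => u x0 s) (Icc 0 t) :=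
    (hu.cont_Icc le_rfl ht.2).comp (f := fun s : ℝ => (x0, s)) (by fun_prop)
      (fun s hs => ⟨hx0m, hs⟩)
  have hcv : ContinuousOn (fun s => v x0 s) (Icc 0 t) :=
    (hv.cont_Icc le_rfl ht.2).comp (f := fun s : ℝ => (x0, s)) (by fun_prop)
      (fun s hs => ⟨hx0m, hs⟩)
  have hcm : ContinuousOn (fun s => max (u x0 s) (v x0 s)) (Icc 0 t) := hcu.sup hcv
  obtain ⟨t0, ht0, hmax⟩ := isCompact_Icc.exists_isMaxOn (nonempty_Icc.2 ht.1.le) hcm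
  set m := max (u x0 t0) (v x0 t0) with hm
  have hle : ∀ y ∈ closedBall (0 : EuclideanSpace ℝ (Fin n)) R, ∀ s ∈ Icc 0 t,
      u y s ≤ m ∧ v y s ≤ m := by
    intro y hy s hs
    have hy' : ‖y‖ ≤ ‖x0‖ := by rw [hx0]; simpa using hy
    have hs' : s ∈ Ico 0 T := ⟨hs.1, hs.2.trans_lt ht.2⟩
    have hms : max (u x0 s) (v x0 s) ≤ m := hmax hs
    exact ⟨(radial_mono hR hlam1 hlam2 hu hv hx0m hy' hs').trans ((le_max_left _ _).trans hms),
      (radial_mono hR hlam2 hlam1 hv hu hx0m hy' hs').trans ((le_max_right _ _).trans hms)⟩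
  have hKT : Real.exp m * (T - t) ≤ max 1 (K1 * T) := by
    rcases lt_or_ge (Real.exp m) K1 with hlt | hge
    · refine le_trans ?_ (le_max_right _ _)
      exact mul_le_mul hlt.le (by linarith [ht.1]) hTt.le hK1pos.le
    · refine le_trans ?_ (le_max_left _ _)
      have hhalf : T / 2 ≤ t0 := by
        by_contra! hcon
        have h1 := hM x0 hx0m t0 ⟨ht0.1, hcon.le⟩
        have h2 : Real.exp m ≤ Real.exp M := Real.exp_le_exp.2 (max_le h1.1 h1.2)
        linarith [le_max_right K0 (Real.exp M + 1)]
      have hP : Peak R T u v x0 t0 (Real.exp m) :=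
        { norm_eq := hx0
          half_le := hhalf
          lt := ht0.2.trans_lt ht.2
          le := fun y hy s hs => by
            have h := hle y hy s ⟨hs.1, hs.2.trans ht0.2⟩
            exact ⟨Real.exp_le_exp.2 h.1, Real.exp_le_exp.2 h.2⟩
          eq := by
            rcases max_choice (u x0 t0) (v x0 t0) with h | h
            · exact Or.inl (by rw [hm, h])
            · exact Or.inr (by rw [hm, h]) }
      have h1 := hrate x0 t0 (Real.exp m) ((le_max_left _ _).trans hge) hP
      exact le_trans (mul_le_mul_of_nonneg_left (by linarith [ht0.2]) (Real.exp_pos m).le) h1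
  have hmlog : m ≤ Real.log (max 1 (K1 * T)) - Real.log (T - t) := by
    rw [← Real.log_div (by positivity) hTt.ne', Real.le_log_iff_exp_le (by positivity),
      le_div_iff₀ hTt]
    exact hKT
  have h := hle x (by simp [hx]) t ⟨ht.1.le, le_rfl⟩
  exact ⟨h.1.trans hmlog, h.2.trans hmlog⟩
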